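/- arXiv:0902.2795 — 3 statements merged into one kernel-verified Lean document; each statement's English description precedes it below -/
import Mathlib

section
/- Let G=(V,E) be an undirected graph and T ⊆ V a set of terminals. Let pq be any edge of G whose both endpoints p and q are non-terminals (p,q ∈ V∖T), and let G₁ = G − pq (the graph obtained by deleting the edge pq) and G₂ = G/pq (the graph obtained by contracting the edge pq). Then at least one of the following holds: (i) for all u,v ∈ T, κ'_{G₁}(u,v) = κ'_G(u,v); or (ii) for all u,v ∈ T, κ'_{G₂}(u,v) = κ'_G(u,v). -/
open SimpleGraph

/-- Two walks between the same pair of vertices are *element-disjoint* with respect to a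
terminal set `T` if they share no edges and every common vertex is a terminal or an
endpoint. -/
def ElemDisjWalks {V : Type*} (T : Set V) {G : SimpleGraph V} {u v : V}
    (W₁ W₂ : G.Walk u v) : Prop :=
  (∀ e, e ∈ W₁.edges → e ∉ W₂.edges) ∧
  (∀ x, x ∈ W₁.support → x ∈ W₂.support → x ∈ T ∪ {u, v})

/-- There exist `k` pairwise element-disjoint `u`-`v` paths in `G`
(with respect to the terminal set `T`). -/
def HasElemPaths {V : Type*} (G : SimpleGraph V) (T : Set V) (u v : V) (k : ℕ) : Prop :=
  ∃ P : Fin k → G.Walk u v, (∀ i, (P i).IsPath) ∧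
    ∀ i j, i ≠ j → ElemDisjWalks T (P i) (P j)

/-- The element-connectivity `κ'_G(u,v)`: the maximum number of `u`-`v` paths that are
pairwise disjoint in edges and in non-terminal vertices. -/
noncomputable def elemConn {V : Type*} (G : SimpleGraph V) (T : Set V) (u v : V) : ℕ :=
  sSup {k | HasElemPaths G T u v k}

/-- The graph `G/pq` obtained from `G` by contracting the edge `pq`: the merged vertex
is `p`, and `q` becomes an isolated vertex (so the vertex set is unchanged). -/
def contractEdge {V : Type*} [DecidableEq V] (G : SimpleGraph V) (p q : V) :
    SimpleGraph V :=
  SimpleGraph.fromRel (fun a b =>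
    ∃ x y, G.Adj x y ∧ (if x = q then p else x) = a ∧ (if y = q then p else y) = b)

/-!
By Menger's theorem, `κ'(u,v)` is the least number of elements (vertices and edges) removed by a
pair `(A, B)` of disjoint vertex sets which covers the terminals and has `u ∈ A` and `v ∈ B`.
If deleting `pq` lowers `κ'(u,v)`, then some minimum cut `(A, B)` for `u`, `v` removes the edge
`pq`. If contracting `pq` lowers `κ'(x,y)`, then some minimum cut `(X, Y)` for `x`, `y` removes both
vertices `p` and `q`. The cuts at opposite corners, `(A ∩ X, B ∪ Y)` and `(B ∩ Y, A ∪ X)`, together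
remove fewer elements than `(A, B)` and `(X, Y)`, as neither of them removes the edge `pq`, and the
same holds for the other two corners. But each of `u`, `v`, `x`, `y` lies in a corner whose cut
separates it from its partner, so for one of the two pairs of opposite corners the total is at least
`κ'(u,v) + κ'(x,y)`, a contradiction.
-/

open Function Relation

section Menger

variable {E : Type*} {r : E → E → Prop} {A B : Set E} {k : ℕ}

/-- `C` separates `A` from `B` in the digraph `r`, witnessed by a set `S` of vertices on the side
of `A` which can only be left through `C`. -/
structure IsSeparation (r : E → E → Prop) (A B S : Set E) (C : Finset E) : Prop where
  source : ∀ x ∈ A, x ∈ S ∨ x ∈ C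
  step : ∀ x ∈ S, ∀ y, r x y → y ∈ S ∨ y ∈ C
  target : ∀ x ∈ S, x ∉ B

/-- Some directed path of `r` from `A` to `B` stays inside `Q`. -/
def IsLinkedIn (r : E → E → Prop) (A B Q : Set E) : Prop :=
  ∃ a ∈ A, a ∈ Q ∧ ∃ b ∈ B, ReflTransGen (fun x y ↦ r x y ∧ y ∈ Q) a b

/-- The bipartite relation whose perfect matchings encode families of disjoint paths from `A` to
`B`, one for each `i : ι`: the path of `i` starts at the partner of `inr i`, continues from each of
its vertices to the partner of that vertex, and ends at a vertex matched into `ι`. Vertices on no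
path are matched to themselves. -/
def LinkRel (r : E → E → Prop) (A B : Set E) {ι : Type*} : E ⊕ ι → E ⊕ ι → Prop
  | .inl x, .inl y => x = y ∨ r x y
  | .inl x, .inr _ => x ∈ B
  | .inr _, .inl y => y ∈ A
  | .inr _, .inr _ => False

open Finset in
theorem exists_injective_linkRel [Finite E]
    (h : ∀ S C, IsSeparation r A B S C → k ≤ #C) :
    ∃ f : E ⊕ Fin k → E ⊕ Fin k, Injective f ∧ ∀ x, LinkRel r A B x (f x) := by
  classical
  have := Fintype.ofFinite E
  refine (Fintype.all_card_le_filter_rel_iff_exists_injective _).1 fun X ↦ ?_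
  set N : Finset (E ⊕ Fin k) := {y | ∃ x ∈ X, LinkRel r A B x y}
  have mem_N {y} : y ∈ N ↔ ∃ x ∈ X, LinkRel r A B x y := by simp [N]
  have hXN : X.toLeft ⊆ N.toLeft := fun x hx ↦
    mem_toLeft.2 (mem_N.2 ⟨_, mem_toLeft.1 hx, .inl rfl⟩)
  have hleft : #X.toLeft ≤ #N.toLeft := card_le_card hXN
  have hright : #X.toRight ≤ k := by simpa using X.toRight.card_le_univ
  rw [← X.card_toLeft_add_card_toRight, ← N.card_toLeft_add_card_toRight]
  obtain hX | ⟨i, hi⟩ := X.toRight.eq_empty_or_nonempty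
  · simp only [hX, card_empty]
    omega
  by_cases hB : ∃ b ∈ X.toLeft, b ∈ B
  · obtain ⟨b, hbX, hbB⟩ := hB
    have hN : N.toRight = univ := eq_univ_of_forall fun j ↦
      mem_toRight.2 (mem_N.2 ⟨_, mem_toLeft.1 hbX, hbB⟩)
    simp only [hN, card_univ, Fintype.card_fin]
    omega
  · have hsep : IsSeparation r A B X.toLeft (N.toLeft \ X.toLeft) := by
      have mem_or {y} (hy : y ∈ N.toLeft) : y ∈ X.toLeft ∨ y ∈ N.toLeft \ X.toLeft := by
        rw [mem_sdiff]
        tauto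
      refine ⟨fun a ha ↦ mem_or ?_, fun x hx y hxy ↦ mem_or ?_, fun b hb hbB ↦ hB ⟨b, hb, hbB⟩⟩
      · exact mem_toLeft.2 (mem_N.2 ⟨_, mem_toRight.1 hi, ha⟩)
      · exact mem_toLeft.2 (mem_N.2 ⟨_, mem_toLeft.1 hx, .inr hxy⟩)
    have hk := h _ _ hsep
    rw [card_sdiff_of_subset hXN] at hk
    omega

section Orbit

variable {ι : Type*} {f : E ⊕ ι → E ⊕ ι}

theorem exists_orbit_exit [Finite E] (hf : Injective f) {i : ι} {a : E}
    (ha : f (.inr i) = .inl a) :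
    ∃ b j, ReflTransGen (fun x y ↦ f (.inl x) = .inl y) a b ∧ f (.inl b) = .inr j := by
  by_contra! hexit
  let orbit : Set (E ⊕ ι) := .inl '' {x | ReflTransGen (fun x y ↦ f (.inl x) = .inl y) a x}
  have hmaps : f '' orbit ⊆ orbit := by
    rintro _ ⟨_, ⟨x, hx, rfl⟩, rfl⟩
    cases hfx : f (.inl x) with
    | inl y => exact ⟨y, hx.tail hfx, rfl⟩
    | inr j => exact absurd hfx (hexit x j hx)
  have hsurj : f '' orbit = orbit :=
    Set.eq_of_subset_of_ncard_le hmaps (Set.ncard_image_of_injective _ hf).ge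
      ((Set.toFinite _).image _)
  obtain ⟨_, ⟨z, -, rfl⟩, hz⟩ := hsurj.ge ⟨a, .refl, rfl⟩
  cases hf (hz.trans ha.symm)

theorem orbit_source_unique (hf : Injective f) {i j : ι} {a b x : E}
    (ha : f (.inr i) = .inl a) (hb : f (.inr j) = .inl b)
    (hax : ReflTransGen (fun x y ↦ f (.inl x) = .inl y) a x)
    (hbx : ReflTransGen (fun x y ↦ f (.inl x) = .inl y) b x) : i = j := by
  induction hax with
  | refl =>
    obtain rfl | ⟨z, -, hz⟩ := hbx.cases_tail
    · exact Sum.inr_injective (hf (ha.trans hb.symm))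
    · cases hf (hz.trans ha.symm)
  | tail _ hy ih =>
    obtain rfl | ⟨z, hbz, hz⟩ := hbx.cases_tail
    · cases hf (hy.trans hb.symm)
    · exact ih (Sum.inl_injective (hf (hz.trans hy.symm)) ▸ hbz)

end Orbit

theorem exists_pairwise_disjoint_isLinkedIn [Finite E]
    (h : ∀ S C, IsSeparation r A B S C → k ≤ C.card) :
    ∃ Q : Fin k → Set E, Pairwise (Disjoint on Q) ∧ ∀ i, IsLinkedIn r A B (Q i) := by
  obtain ⟨f, hf, hlink⟩ := exists_injective_linkRel h
  have hstart (i) : ∃ a ∈ A, f (.inr i) = .inl a := by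
    have := hlink (.inr i)
    cases hfi : f (.inr i) with
    | inl a => exact ⟨a, by rwa [hfi] at this, rfl⟩
    | inr j => rw [hfi] at this; exact this.elim
  choose a haA hfa using hstart
  refine ⟨fun i ↦ {x | ReflTransGen (fun x y ↦ f (.inl x) = .inl y) (a i) x}, ?_, fun i ↦ ?_⟩
  · exact fun i j hij ↦ Set.disjoint_left.2 fun x hi hj ↦
      hij (orbit_source_unique hf (hfa i) (hfa j) hi hj)
  · obtain ⟨b, j, hab, hfb⟩ := exists_orbit_exit hf (hfa i)
    have hbB := hlink (.inl b)
    rw [hfb] at hbB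
    refine ⟨a i, haA i, .refl, b, hbB, ?_⟩
    clear hfb hbB
    induction hab with
    | refl => exact .refl
    | @tail y z hay hyz ih =>
      have hr := hlink (.inl y)
      rw [hyz] at hr
      obtain rfl | hr := hr
      · exact ih
      · exact ih.tail ⟨hr, hay.tail hyz⟩

/-- The vertices of the digraph in which each vertex of `F` is replaced by `k` copies, so that fewer
than `k` vertices never suffice to remove a vertex of `F`. -/
abbrev BlowUp (F : Set E) (k : ℕ) : Type _ := {x // x ∉ F} ⊕ F × Fin k

namespace BlowUp

variable {F : Set E}

/-- The vertex of which `z` is a copy. -/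
def proj : BlowUp F k → E := Sum.elim (↑) (fun z ↦ z.1)

theorem exists_proj_eq_notMem {C : Finset (BlowUp F k)} (hC : C.card < k) {x : E}
    (hx : ∀ hx : x ∉ F, .inl ⟨x, hx⟩ ∉ C) : ∃ z ∉ C, proj z = x := by
  by_cases hxF : x ∈ F
  · by_contra! hall
    let copy : Fin k → BlowUp F k := fun j ↦ .inr (⟨x, hxF⟩, j)
    have hcopy : Injective copy := fun i j hij ↦ by simpa [copy] using hij
    have hle := Finset.card_le_card_of_injOn (s := .univ) (t := C) copy
      (fun j _ ↦ by_contra fun hj ↦ hall _ hj rfl) hcopy.injOn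
    rw [Finset.card_univ, Fintype.card_fin] at hle
    omega
  · exact ⟨.inl ⟨x, hxF⟩, hx hxF, rfl⟩

theorem isSeparation_proj {S : Set (BlowUp F k)} {C : Finset (BlowUp F k)} (hC : C.card < k)
    (h : IsSeparation (r on proj) (proj ⁻¹' A) (proj ⁻¹' B) S C) :
    IsSeparation r A B (proj '' S) (C.toLeft.map (.subtype _)) := by
  have mem_or {x} (hx : ∀ z : BlowUp F k, proj z = x → z ∈ S ∨ z ∈ C) :
      x ∈ proj '' S ∨ x ∈ C.toLeft.map (.subtype _) := by
    by_cases hxC : ∃ hx : x ∉ F, .inl ⟨x, hx⟩ ∈ C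
    · exact .inr (by simpa using hxC)
    · obtain ⟨z, hzC, rfl⟩ := exists_proj_eq_notMem hC (not_exists.1 hxC)
      exact .inl ⟨z, (hx z rfl).resolve_right hzC, rfl⟩
  refine ⟨fun a ha ↦ mem_or ?_, ?_, ?_⟩
  · rintro z rfl
    exact h.source z ha
  · rintro _ ⟨z, hzS, rfl⟩ y hy
    refine mem_or ?_
    rintro w rfl
    exact h.step z hzS w hy
  · rintro _ ⟨z, hzS, rfl⟩
    exact h.target z hzS

theorem isLinkedIn_proj {Q : Set (BlowUp F k)}
    (h : IsLinkedIn (r on proj) (proj ⁻¹' A) (proj ⁻¹' B) Q) :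
    IsLinkedIn r A B (proj '' Q) := by
  obtain ⟨a, haA, haQ, b, hbB, hab⟩ := h
  exact ⟨proj a, haA, ⟨a, haQ, rfl⟩, proj b, hbB,
    hab.lift proj fun x y hxy ↦ ⟨hxy.1, y, hxy.2, rfl⟩⟩

theorem proj_image_inter_subset {P Q : Set (BlowUp F k)} (h : Disjoint P Q) :
    proj '' P ∩ proj '' Q ⊆ F := by
  rintro _ ⟨⟨x | x, hx, rfl⟩, ⟨y | y, hy, hxy⟩⟩
  · exact absurd (Subtype.ext hxy ▸ hy) (Set.disjoint_left.1 h hx)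
  · exact hxy ▸ y.1.2
  · exact x.1.2
  · exact x.1.2

end BlowUp

theorem exists_isLinkedIn_inter_subset [Finite E] (F : Set E)
    (h : ∀ S C, IsSeparation r A B S C → Disjoint (C : Set E) F → k ≤ C.card) :
    ∃ Q : Fin k → Set E, (Pairwise fun i j ↦ Q i ∩ Q j ⊆ F) ∧ ∀ i, IsLinkedIn r A B (Q i) := by
  have hblow : ∀ S C, IsSeparation (r on BlowUp.proj (F := F) (k := k))
      (BlowUp.proj ⁻¹' A) (BlowUp.proj ⁻¹' B) S C → k ≤ C.card := by
    intro S C hSC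
    by_contra! hC
    have hdisj : Disjoint (C.toLeft.map (.subtype _) : Set E) F := by
      rw [Set.disjoint_left]
      simp +contextual
    have := h _ _ (BlowUp.isSeparation_proj hC hSC) hdisj
    rw [Finset.card_map] at this
    exact (this.trans C.card_toLeft_le).not_gt hC
  obtain ⟨Q, hQ, hlink⟩ := exists_pairwise_disjoint_isLinkedIn hblow
  exact ⟨fun i ↦ BlowUp.proj '' Q i, fun i j hij ↦ BlowUp.proj_image_inter_subset (hQ hij),
    fun i ↦ BlowUp.isLinkedIn_proj (hlink i)⟩

end Menger

section ElementCuts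

variable {V : Type*} {G H : SimpleGraph V} {T A B X Y : Set V} {u v : V} {k : ℕ}

/-- The disjoint sets `A` and `B` form an *element cut* for the terminals `T`: every terminal lies
in one of them. Vertices outside `A ∪ B` are removed by the cut, as are the edges between `A` and
`B`. -/
structure IsElemCut (T A B : Set V) : Prop where
  disjoint : Disjoint A B
  cover : T ⊆ A ∪ B

/-- The elements removed by the cut `(A, B)`: the vertices outside `A ∪ B`, as `inl`, and the edges
between `A` and `B`, as `inr`. -/
def cutElems (G : SimpleGraph V) (A B : Set V) : Set (V ⊕ Sym2 V) :=
  {z | z.elim (· ∉ A ∪ B) (· ∈ (G.between A B).edgeSet)}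

/-- The number of elements removed by the cut `(A, B)`. -/
noncomputable def cutSize (G : SimpleGraph V) (A B : Set V) : ℕ := (cutElems G A B).ncard

/-- A cut is *normal* if all the edges it removes join terminals. Minimum cuts can be chosen normal,
since an edge with a nonterminal end can be traded for that end. -/
def IsNormalCut (G : SimpleGraph V) (T A B : Set V) : Prop :=
  ∀ ⦃a⦄, a ∈ A → ∀ ⦃b⦄, b ∈ B → G.Adj a b → a ∈ T ∧ b ∈ T

/-- The vertices, as `inl`, and the edges, as `inr`, traversed by a walk. -/
def walkElems (W : G.Walk u v) : Set (V ⊕ Sym2 V) :=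
  {z | z.elim (· ∈ W.support) (· ∈ W.edges)}

@[simp]
theorem inl_mem_cutElems {w : V} : .inl w ∈ cutElems G A B ↔ w ∉ A ∧ w ∉ B := by
  simp [cutElems]

@[simp]
theorem inr_mem_cutElems {a b : V} :
    .inr s(a, b) ∈ cutElems G A B ↔ G.Adj a b ∧ (a ∈ A ∧ b ∈ B ∨ a ∈ B ∧ b ∈ A) :=
  Iff.rfl

@[simp]
theorem inl_mem_walkElems {W : G.Walk u v} {x : V} : .inl x ∈ walkElems W ↔ x ∈ W.support :=
  Iff.rfl

@[simp]
theorem inr_mem_walkElems {W : G.Walk u v} {e : Sym2 V} : .inr e ∈ walkElems W ↔ e ∈ W.edges :=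
  Iff.rfl

theorem cutElems_subset {D : Set (V ⊕ Sym2 V)} (hvertex : ∀ w, w ∉ A → w ∉ B → .inl w ∈ D)
    (hedge : ∀ a ∈ A, ∀ b ∈ B, G.Adj a b → .inr s(a, b) ∈ D) : cutElems G A B ⊆ D := by
  rintro (w | e) hz
  · obtain ⟨hwA, hwB⟩ := inl_mem_cutElems.1 hz
    exact hvertex w hwA hwB
  · induction e with | _ a b
    obtain ⟨hab, ⟨ha, hb⟩ | ⟨hb, ha⟩⟩ := inr_mem_cutElems.1 hz
    · exact hedge a ha b hb hab
    · rw [Sym2.eq_swap]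
      exact hedge b ha a hb hab.symm

theorem cutElems_comm (G : SimpleGraph V) (A B : Set V) : cutElems G A B = cutElems G B A := by
  rw [cutElems, cutElems, Set.union_comm, between_comm]

theorem cutSize_comm (G : SimpleGraph V) (A B : Set V) : cutSize G A B = cutSize G B A := by
  rw [cutSize, cutElems_comm, cutSize]

theorem cutSize_mono [Finite V] (h : G ≤ H) (A B : Set V) : cutSize G A B ≤ cutSize H A B := by
  refine Set.ncard_le_ncard ?_
  rintro (w | ⟨a, b⟩) hz
  · exact hz
  · exact ⟨h hz.1, hz.2⟩

namespace IsElemCut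

theorem symm (h : IsElemCut T A B) : IsElemCut T B A :=
  ⟨h.disjoint.symm, Set.union_comm A B ▸ h.cover⟩

theorem inter_union (h : IsElemCut T A B) (h' : IsElemCut T X Y) :
    IsElemCut T (A ∩ X) (B ∪ Y) where
  disjoint := (h.disjoint.mono_left Set.inter_subset_left).union_right
    (h'.disjoint.mono_left Set.inter_subset_right)
  cover t ht := by
    have hAB := h.cover ht
    have hXY := h'.cover ht
    simp only [Set.mem_union, Set.mem_inter_iff] at hAB hXY ⊢
    tauto

theorem inl_notMem_cutElems (h : IsElemCut T A B) {t : V} (ht : t ∈ T) :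
    .inl t ∉ cutElems G A B := by
  have := h.cover ht
  rw [Set.mem_union] at this
  rw [inl_mem_cutElems]
  tauto

end IsElemCut

theorem ElemDisjWalks.inter_subset (hu : u ∈ T) (hv : v ∈ T) {W₁ W₂ : G.Walk u v}
    (h : ElemDisjWalks T W₁ W₂) : walkElems W₁ ∩ walkElems W₂ ⊆ .inl '' T := by
  rintro (x | e) ⟨h₁, h₂⟩
  · obtain hx | rfl | rfl := h.2 x h₁ h₂
    exacts [⟨x, hx, rfl⟩, ⟨x, hu, rfl⟩, ⟨x, hv, rfl⟩]
  · exact absurd h₂ (h.1 e h₁)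

theorem exists_mem_walkElems_inter_cutElems (hAB : Disjoint A B) (hu : u ∈ A) (hv : v ∈ B)
    (W : G.Walk u v) : ∃ z ∈ walkElems W, z ∈ cutElems G A B := by
  obtain ⟨d, hd, hdA, hdA'⟩ := W.exists_boundary_dart A hu fun h ↦ Set.disjoint_left.1 hAB h hv
  by_cases hdB : d.snd ∈ B
  · exact ⟨.inr s(d.fst, d.snd), List.mem_map_of_mem (f := Dart.edge) hd, d.adj, .inl ⟨hdA, hdB⟩⟩
  · exact ⟨.inl d.snd, W.dart_snd_mem_support_of_mem_darts hd, inl_mem_cutElems.2 ⟨hdA', hdB⟩⟩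

theorem HasElemPaths.le_cutSize [Finite V] (h : HasElemPaths G T u v k) (hcut : IsElemCut T A B)
    (hu : u ∈ T) (hv : v ∈ T) (huA : u ∈ A) (hvB : v ∈ B) : k ≤ cutSize G A B := by
  obtain ⟨P, -, hP⟩ := h
  choose z hzP hzcut using
    fun i ↦ exists_mem_walkElems_inter_cutElems hcut.disjoint huA hvB (P i)
  have hz : Injective z := fun i j hij ↦ by
    by_contra hne
    obtain ⟨t, ht, htz⟩ := (hP i j hne).inter_subset hu hv ⟨hzP i, hij ▸ hzP j⟩
    exact hcut.inl_notMem_cutElems ht (htz ▸ hzcut i)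
  have hle := Set.ncard_le_ncard (Set.range_subset_iff.2 hzcut)
  rwa [← Set.image_univ, Set.ncard_image_of_injective _ hz, Set.ncard_univ, Nat.card_fin] at hle

/-- Incidence between the vertices `inl x` and the edges `inr e` of `G`. -/
def Incident (G : SimpleGraph V) : V ⊕ Sym2 V → V ⊕ Sym2 V → Prop
  | .inl x, .inr e => e ∈ G.incidenceSet x
  | .inr e, .inl x => e ∈ G.incidenceSet x
  | _, _ => False

/-- The elements that a normal cut may not remove: the terminals and the edges with a nonterminal
end. -/
def freeElems (T : Set V) : Set (V ⊕ Sym2 V) :=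
  {z | z.elim (· ∈ T) (fun e ↦ ∃ x ∈ e, x ∉ T)}

theorem walkElems_concat_subset {Q : Set (V ⊕ Sym2 V)} {w x : V} {W : G.Walk u w}
    (hW : walkElems W ⊆ Q) (h : G.Adj w x) (he : .inr s(w, x) ∈ Q) (hx : .inl x ∈ Q) :
    walkElems (W.concat h) ⊆ Q := by
  rintro (y | e) hz
  · rw [inl_mem_walkElems, Walk.support_concat, List.mem_append, List.mem_singleton] at hz
    obtain hz | rfl := hz
    exacts [hW hz, hx]
  · rw [inr_mem_walkElems, Walk.edges_concat, List.concat_eq_append, List.mem_append,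
      List.mem_singleton] at hz
    obtain hz | rfl := hz
    exacts [hW hz, he]

theorem exists_isPath_walkElems_subset {Q : Set (V ⊕ Sym2 V)}
    (h : IsLinkedIn (Incident G) {.inl u} {.inl v} Q) :
    ∃ W : G.Walk u v, W.IsPath ∧ walkElems W ⊆ Q := by
  classical
  obtain ⟨_, rfl, huQ, _, rfl, hchain⟩ := h
  have reach (z) (hz : ReflTransGen (fun a b ↦ Incident G a b ∧ b ∈ Q) (.inl u) z) :
      z.elim (fun x ↦ ∃ W : G.Walk u x, walkElems W ⊆ Q)
        (fun e ↦ .inr e ∈ Q ∧ ∃ x ∈ e, ∃ W : G.Walk u x, walkElems W ⊆ Q) := by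
    induction hz with
    | refl =>
      refine ⟨.nil, ?_⟩
      rintro (x | e) hz
      · rwa [List.mem_singleton.1 hz]
      · cases hz
    | @tail y z _ hyz ih =>
      obtain ⟨hinc, hzQ⟩ := hyz
      rcases y with x | e <;> rcases z with y | f
      · exact hinc.elim
      · exact ⟨hzQ, x, hinc.2, ih⟩
      · obtain ⟨heQ, x, hxe, W, hW⟩ := ih
        by_cases hxy : x = y
        · exact hxy ▸ ⟨W, hW⟩
        · obtain rfl := (Sym2.mem_and_mem_iff hxy).1 ⟨hxe, hinc.2⟩
          exact ⟨W.concat hinc.1, walkElems_concat_subset hW _ heQ hzQ⟩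
      · exact hinc.elim
  obtain ⟨W, hW⟩ := reach _ hchain
  refine ⟨W.bypass, W.bypass_isPath, ?_⟩
  rintro (x | e) hz
  · exact hW (W.support_bypass_subset_support hz)
  · exact hW (W.edges_bypass_subset_edges hz)

theorem elemDisjWalks_of_inter_subset {W₁ W₂ : G.Walk u v}
    (h : walkElems W₁ ∩ walkElems W₂ ⊆ freeElems T) : ElemDisjWalks T W₁ W₂ := by
  refine ⟨fun e h₁ h₂ ↦ ?_, fun x h₁ h₂ ↦ .inl (h ⟨h₁, h₂⟩ : .inl x ∈ freeElems T)⟩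
  obtain ⟨x, hxe, hxT⟩ : .inr e ∈ freeElems T := h ⟨h₁, h₂⟩
  have hx : .inl x ∈ walkElems W₁ ∩ walkElems W₂ :=
    ⟨W₁.mem_support_of_mem_edges h₁ hxe, W₂.mem_support_of_mem_edges h₂ hxe⟩
  exact hxT (h hx)

theorem exists_elemCut_of_isSeparation (hu : u ∈ T) (hv : v ∈ T) {S : Set (V ⊕ Sym2 V)}
    {C : Finset (V ⊕ Sym2 V)} (h : IsSeparation (Incident G) {.inl u} {.inl v} S C)
    (hC : Disjoint (C : Set (V ⊕ Sym2 V)) (freeElems T)) :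
    ∃ A B, IsElemCut T A B ∧ u ∈ A ∧ v ∈ B ∧ IsNormalCut G T A B ∧ cutSize G A B ≤ C.card := by
  have notMem_C {t : V} (ht : t ∈ T) : .inl t ∉ C := fun h ↦ Set.disjoint_left.1 hC h ht
  let A : Set V := {x | .inl x ∈ S}
  let B : Set V := {x | .inl x ∉ S ∧ .inl x ∉ C}
  have edge_mem_C {a b : V} (ha : a ∈ A) (hb : b ∈ B) (hab : G.Adj a b) : .inr s(a, b) ∈ C := by
    refine (h.step _ ha (.inr s(a, b)) ⟨hab, Sym2.mem_mk_left a b⟩).resolve_left fun hS ↦ ?_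
    have := h.step _ hS (.inl b) ⟨hab, Sym2.mem_mk_right a b⟩
    exact this.elim hb.1 hb.2
  refine ⟨A, B, ⟨Set.disjoint_left.2 fun x hA hB ↦ hB.1 hA, fun t ht ↦ ?_⟩, ?_, ?_, ?_, ?_⟩
  · exact (em (t ∈ A)).imp_right fun htA ↦ ⟨htA, notMem_C ht⟩
  · exact (h.source _ rfl).resolve_right (notMem_C hu)
  · exact ⟨fun hvS ↦ h.target _ hvS rfl, notMem_C hv⟩
  · intro a ha b hb hab
    have hfree := Set.disjoint_left.1 hC (edge_mem_C ha hb hab)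
    by_contra hT
    obtain haT | hbT := not_and_or.1 hT
    exacts [hfree ⟨a, Sym2.mem_mk_left a b, haT⟩, hfree ⟨b, Sym2.mem_mk_right a b, hbT⟩]
  · rw [← Set.ncard_coe_finset]
    exact Set.ncard_le_ncard (cutElems_subset
      (fun w hwA hwB ↦ by_contra fun hwC ↦ hwB ⟨hwA, hwC⟩)
      (fun a ha b hb hab ↦ edge_mem_C ha hb hab))

theorem hasElemPaths_of_forall_le_cutSize [Finite V] (hu : u ∈ T) (hv : v ∈ T)
    (h : ∀ A B, IsElemCut T A B → u ∈ A → v ∈ B → IsNormalCut G T A B → k ≤ cutSize G A B) :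
    HasElemPaths G T u v k := by
  have hsep : ∀ S C, IsSeparation (Incident G) {.inl u} {.inl v} S C →
      Disjoint (C : Set (V ⊕ Sym2 V)) (freeElems T) → k ≤ C.card := fun S C hSC hC ↦ by
    obtain ⟨A, B, hcut, huA, hvB, hnormal, hle⟩ := exists_elemCut_of_isSeparation hu hv hSC hC
    exact (h A B hcut huA hvB hnormal).trans hle
  obtain ⟨Q, hQ, hlink⟩ := exists_isLinkedIn_inter_subset (freeElems T) hsep
  choose P hpath hPQ using fun i ↦ exists_isPath_walkElems_subset (hlink i)
  exact ⟨P, hpath, fun i j hij ↦ elemDisjWalks_of_inter_subset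
    ((Set.inter_subset_inter (hPQ i) (hPQ j)).trans (hQ hij))⟩

theorem elemConn_comm (G : SimpleGraph V) (T : Set V) (u v : V) :
    elemConn G T u v = elemConn G T v u := by
  have hrev {u v : V} {k : ℕ} (h : HasElemPaths G T u v k) : HasElemPaths G T v u k := by
    obtain ⟨P, hpath, hP⟩ := h
    refine ⟨fun i ↦ (P i).reverse, fun i ↦ (hpath i).reverse, fun i j hij ↦ ?_⟩
    simpa [ElemDisjWalks, Set.pair_comm v u] using hP i j hij
  exact congrArg sSup (Set.ext fun k ↦ ⟨hrev, hrev⟩)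

variable [Finite V]

theorem IsElemCut.elemConn_le_cutSize (h : IsElemCut T A B) (hu : u ∈ T) (hv : v ∈ T)
    (huA : u ∈ A) (hvB : v ∈ B) : elemConn G T u v ≤ cutSize G A B :=
  csSup_le' fun _ hk ↦ HasElemPaths.le_cutSize hk h hu hv huA hvB

theorem exists_elemCut_cutSize_eq_elemConn (G : SimpleGraph V) (hu : u ∈ T) (hv : v ∈ T)
    (huv : u ≠ v) : ∃ A B, IsElemCut T A B ∧ u ∈ A ∧ v ∈ B ∧ IsNormalCut G T A B ∧
      cutSize G A B = elemConn G T u v := by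
  have hbdd : BddAbove {k | HasElemPaths G T u v k} := by
    have hcut : IsElemCut T {u} {u}ᶜ := ⟨disjoint_compl_right, fun t _ ↦ em (t = u)⟩
    exact ⟨_, fun k hk ↦ HasElemPaths.le_cutSize hk hcut hu hv rfl huv.symm⟩
  by_contra! hcon
  have hpaths : HasElemPaths G T u v (elemConn G T u v + 1) :=
    hasElemPaths_of_forall_le_cutSize hu hv fun A B hcut huA hvB hnormal ↦
      (hcut.elemConn_le_cutSize hu hv huA hvB).lt_of_ne' (hcon A B hcut huA hvB hnormal)
  exact (le_csSup hbdd hpaths).not_gt (Nat.lt_succ_self _)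

end ElementCuts

section Uncrossing

variable {V : Type*} [Finite V] {G : SimpleGraph V} {T A B X Y : Set V} {u v x y p q : V}

theorem ncard_add_ncard_lt_of_union_ssubset {α : Type*} [Finite α] {S S' P Q : Set α}
    (hunion : S ∪ S' ⊂ P ∪ Q) (hinter : S ∩ S' ⊆ P ∩ Q) :
    S.ncard + S'.ncard < P.ncard + Q.ncard := by
  rw [← Set.ncard_union_add_ncard_inter S, ← Set.ncard_union_add_ncard_inter P]
  exact add_lt_add_of_lt_of_le (Set.ncard_lt_ncard hunion) (Set.ncard_le_ncard hinter)

theorem cutSize_inter_union_add_lt (hAB : Disjoint A B)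
    (hpq : .inr s(p, q) ∈ cutElems G A B) (hp : p ∉ X ∪ Y) (hq : q ∉ X ∪ Y) :
    cutSize G (A ∩ X) (B ∪ Y) + cutSize G (B ∩ Y) (A ∪ X) < cutSize G A B + cutSize G X Y := by
  have hAB' : ∀ w ∈ A, w ∉ B := Set.disjoint_left.1 hAB
  have hunion : cutElems G (A ∩ X) (B ∪ Y) ∪ cutElems G (B ∩ Y) (A ∪ X) ⊆
      cutElems G A B ∪ cutElems G X Y := by
    rintro (w | ⟨a, b⟩) <;>
      simp only [inl_mem_cutElems, inr_mem_cutElems, Set.mem_union, Set.mem_inter_iff] <;> grind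
  have hinter : cutElems G (A ∩ X) (B ∪ Y) ∩ cutElems G (B ∩ Y) (A ∪ X) ⊆
      cutElems G A B ∩ cutElems G X Y := by
    rintro (w | ⟨a, b⟩) <;>
      simp only [inl_mem_cutElems, inr_mem_cutElems, Set.mem_union, Set.mem_inter_iff] <;> grind
  have hpq' : .inr s(p, q) ∉ cutElems G (A ∩ X) (B ∪ Y) ∪ cutElems G (B ∩ Y) (A ∪ X) := by
    rw [Set.mem_union, not_or] at hp hq
    simp only [Set.mem_union, inr_mem_cutElems, Set.mem_inter_iff]
    tauto
  exact ncard_add_ncard_lt_of_union_ssubset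
    ((Set.ssubset_iff_of_subset hunion).2 ⟨_, .inl hpq, hpq'⟩) hinter

theorem IsElemCut.elemConn_le_cutSize_inter_union (h : IsElemCut T A B) (h' : IsElemCut T X Y)
    (hu : u ∈ T) (hv : v ∈ T) (huA : u ∈ A) (hvB : v ∈ B) :
    elemConn G T u v ≤ cutSize G (A ∩ X) (B ∪ Y) ∨
      elemConn G T u v ≤ cutSize G (A ∩ Y) (B ∪ X) :=
  (h'.cover hu).imp
    (fun huX ↦ (h.inter_union h').elemConn_le_cutSize hu hv ⟨huA, huX⟩ (.inl hvB))
    (fun huY ↦ (h.inter_union h'.symm).elemConn_le_cutSize hu hv ⟨huA, huY⟩ (.inl hvB))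

theorem elemConn_add_elemConn_le_cutSize_inter_union (h : IsElemCut T A B) (h' : IsElemCut T X Y)
    (hu : u ∈ T) (hv : v ∈ T) (huA : u ∈ A) (hvB : v ∈ B)
    (hx : x ∈ T) (hy : y ∈ T) (hxX : x ∈ X) (hyY : y ∈ Y) :
    elemConn G T u v + elemConn G T x y ≤
        cutSize G (A ∩ X) (B ∪ Y) + cutSize G (B ∩ Y) (A ∪ X) ∨
      elemConn G T u v + elemConn G T x y ≤
        cutSize G (A ∩ Y) (B ∪ X) + cutSize G (B ∩ X) (A ∪ Y) := by
  have hu' := h.elemConn_le_cutSize_inter_union (G := G) h' hu hv huA hvB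
  have hv' := h.symm.elemConn_le_cutSize_inter_union (G := G) h' hv hu hvB huA
  have hx' := h'.elemConn_le_cutSize_inter_union (G := G) h hx hy hxX hyY
  have hy' := h'.symm.elemConn_le_cutSize_inter_union (G := G) h hy hx hyY hxX
  rw [elemConn_comm] at hv' hy'
  rw [Set.inter_comm X, Set.inter_comm X, Set.union_comm Y, Set.union_comm Y] at hx'
  rw [Set.inter_comm Y, Set.inter_comm Y, Set.union_comm X, Set.union_comm X] at hy'
  omega

theorem elemConn_add_elemConn_lt_of_crossing_edge (h : IsElemCut T A B) (h' : IsElemCut T X Y)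
    (hu : u ∈ T) (hv : v ∈ T) (huA : u ∈ A) (hvB : v ∈ B)
    (hx : x ∈ T) (hy : y ∈ T) (hxX : x ∈ X) (hyY : y ∈ Y)
    (hpq : .inr s(p, q) ∈ cutElems G A B) (hp : p ∉ X ∪ Y) (hq : q ∉ X ∪ Y) :
    elemConn G T u v + elemConn G T x y < cutSize G A B + cutSize G X Y := by
  have hlt := cutSize_inter_union_add_lt h.disjoint hpq hp hq
  have hlt' := cutSize_inter_union_add_lt h.disjoint hpq
    (Set.union_comm X Y ▸ hp) (Set.union_comm X Y ▸ hq)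
  rw [cutSize_comm G Y X] at hlt'
  obtain hle | hle :=
    elemConn_add_elemConn_le_cutSize_inter_union (G := G) h h' hu hv huA hvB hx hy hxX hyY
  · exact hle.trans_lt hlt
  · exact hle.trans_lt hlt'

end Uncrossing

section DeletionContraction

variable {V : Type*} {G H : SimpleGraph V} {T A B : Set V} {u v p q : V} {f : V → V}

theorem IsElemCut.mem_cutElems_and_cutSize_eq [Finite V] (h : IsElemCut T A B)
    (hu : u ∈ T) (hv : v ∈ T) (huA : u ∈ A) (hvB : v ∈ B) {z : V ⊕ Sym2 V}
    {D : Set (V ⊕ Sym2 V)} (hsub : cutElems G A B ⊆ insert z D)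
    (hD : D.ncard < elemConn G T u v) :
    z ∈ cutElems G A B ∧ cutSize G A B = elemConn G T u v := by
  have hle : elemConn G T u v ≤ cutSize G A B := h.elemConn_le_cutSize hu hv huA hvB
  constructor
  · by_contra hz
    have := Set.ncard_le_ncard ((Set.subset_insert_iff_of_notMem hz).1 hsub)
    exact (hle.trans this).not_gt hD
  · have := (Set.ncard_le_ncard hsub).trans (Set.ncard_insert_le z D)
    exact le_antisymm (this.trans hD) hle

theorem elemConn_mono [Finite V] (h : G ≤ H) (hu : u ∈ T) (hv : v ∈ T) (huv : u ≠ v) :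
    elemConn G T u v ≤ elemConn H T u v := by
  obtain ⟨A, B, hcut, huA, hvB, -, hsize⟩ := exists_elemCut_cutSize_eq_elemConn H hu hv huv
  calc elemConn G T u v ≤ cutSize G A B := hcut.elemConn_le_cutSize hu hv huA hvB
    _ ≤ cutSize H A B := cutSize_mono h A B
    _ = elemConn H T u v := hsize

theorem cutElems_subset_insert_deleteEdges (e : Sym2 V) :
    cutElems G A B ⊆ insert (.inr e) (cutElems (G.deleteEdges {e}) A B) := by
  rintro (w | ⟨a, b⟩) hz
  · exact .inr hz
  · obtain rfl | he := eq_or_ne s(a, b) e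
    · exact .inl rfl
    · exact .inr ⟨deleteEdges_adj.2 ⟨hz.1, he⟩, hz.2⟩

theorem exists_crossing_elemCut_of_elemConn_deleteEdges_lt [Finite V] {e : Sym2 V}
    (hu : u ∈ T) (hv : v ∈ T) (huv : u ≠ v)
    (hlt : elemConn (G.deleteEdges {e}) T u v < elemConn G T u v) :
    ∃ A B, IsElemCut T A B ∧ u ∈ A ∧ v ∈ B ∧ .inr e ∈ cutElems G A B ∧
      cutSize G A B = elemConn G T u v := by
  obtain ⟨A, B, hcut, huA, hvB, -, hsize⟩ :=
    exists_elemCut_cutSize_eq_elemConn (G.deleteEdges {e}) hu hv huv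
  exact ⟨A, B, hcut, huA, hvB, hcut.mem_cutElems_and_cutSize_eq hu hv huA hvB
    (cutElems_subset_insert_deleteEdges e) (hsize.trans_lt hlt)⟩

theorem IsElemCut.preimage (h : IsElemCut T A B) (hf : ∀ t ∈ T, f t = t) :
    IsElemCut T (f ⁻¹' A) (f ⁻¹' B) where
  disjoint := h.disjoint.preimage f
  cover t ht := by
    rw [Set.mem_union, Set.mem_preimage, Set.mem_preimage, hf t ht]
    exact h.cover ht

-- Vertices outside the range of `f` have an empty fibre and are kept on the side of `A`.
theorem IsElemCut.kernImage (h : IsElemCut T A B) (hf : ∀ t ∈ T, ∀ x, f x = t ↔ x = t) :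
    IsElemCut T (Set.kernImage f A) (Set.kernImage f B ∩ Set.range f) where
  disjoint := Set.disjoint_left.2 fun _ hA ⟨hB, x, hx⟩ ↦
    Set.disjoint_left.1 h.disjoint (hA hx) (hB hx)
  cover t ht := by
    refine (h.cover ht).imp (fun htA x hx ↦ ?_) (fun htB ↦ ⟨fun x hx ↦ ?_, t, (hf t ht t).2 rfl⟩)
    · rwa [(hf t ht x).1 hx]
    · rwa [(hf t ht x).1 hx]

theorem cutElems_map_kernImage_subset (hf : ∀ t ∈ T, ∀ x, f x = t ↔ x = t)
    (hadj : ∀ x y, f x = f y → x = y ∨ G.Adj x y) (hnormal : IsNormalCut G T A B) :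
    cutElems (G.map f) (Set.kernImage f A) (Set.kernImage f B ∩ Set.range f) ⊆
      Sum.map f id '' cutElems G A B := by
  refine cutElems_subset (fun w hwA hwB ↦ ?_) ?_
  · obtain ⟨x, rfl, hxA⟩ : ∃ x, f x = w ∧ x ∉ A := by simpa [Set.kernImage] using hwA
    obtain ⟨y, hyx, hyB⟩ : ∃ y, f y = f x ∧ y ∉ B := by simpa [Set.kernImage] using hwB
    by_cases hxB : x ∈ B
    · by_cases hyA : y ∈ A
      · obtain rfl | hyx' := hadj y x hyx
        · exact absurd hyA hxA
        · obtain ⟨hyT, -⟩ := hnormal hyA hxB hyx'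
          have : x = y := (hf y hyT x).1 (hyx ▸ (hf y hyT y).2 rfl)
          exact absurd (this ▸ hyA) hxA
      · exact ⟨.inl y, inl_mem_cutElems.2 ⟨hyA, hyB⟩, congrArg Sum.inl hyx⟩
    · exact ⟨.inl x, inl_mem_cutElems.2 ⟨hxA, hxB⟩, rfl⟩
  · rintro _ hA _ ⟨hB, -⟩ ⟨-, x, y, hxy, rfl, rfl⟩
    obtain ⟨hxT, hyT⟩ := hnormal (hA rfl) (hB rfl) hxy
    rw [(hf x hxT x).2 rfl, (hf y hyT y).2 rfl]
    exact ⟨.inr s(x, y), inr_mem_cutElems.2 ⟨hxy, .inl ⟨hA rfl, hB rfl⟩⟩, rfl⟩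

theorem elemConn_map_le [Finite V] (hf : ∀ t ∈ T, ∀ x, f x = t ↔ x = t)
    (hadj : ∀ x y, f x = f y → x = y ∨ G.Adj x y) (hu : u ∈ T) (hv : v ∈ T) (huv : u ≠ v) :
    elemConn (G.map f) T u v ≤ elemConn G T u v := by
  obtain ⟨A, B, hcut, huA, hvB, hnormal, hsize⟩ :=
    exists_elemCut_cutSize_eq_elemConn G hu hv huv
  have huA' : u ∈ Set.kernImage f A := fun x hx ↦ (hf u hu x).1 hx ▸ huA
  have hvB' : v ∈ Set.kernImage f B := fun x hx ↦ (hf v hv x).1 hx ▸ hvB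
  calc elemConn (G.map f) T u v
      ≤ cutSize (G.map f) (Set.kernImage f A) (Set.kernImage f B ∩ Set.range f) :=
        (hcut.kernImage hf).elemConn_le_cutSize hu hv huA' ⟨hvB', v, (hf v hv v).2 rfl⟩
    _ ≤ (Sum.map f id '' cutElems G A B).ncard :=
        Set.ncard_le_ncard (cutElems_map_kernImage_subset hf hadj hnormal)
    _ ≤ cutSize G A B := Set.ncard_image_le
    _ = elemConn G T u v := hsize

theorem cutElems_preimage_subset_insert (hf : ∀ t ∈ T, ∀ x, f x = t ↔ x = t)
    (hmove : ∀ w ≠ q, f w = w) (hdisj : Disjoint A B) (hnormal : IsNormalCut (G.map f) T A B) :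
    cutElems G (f ⁻¹' A) (f ⁻¹' B) ⊆ insert (.inl q) (cutElems (G.map f) A B) := by
  refine cutElems_subset (fun w hwA hwB ↦ ?_) (fun a ha b hb hab ↦ .inr ?_)
  · obtain rfl | hw := eq_or_ne w q
    · exact .inl rfl
    · rw [Set.mem_preimage, hmove w hw] at hwA hwB
      exact .inr (inl_mem_cutElems.2 ⟨hwA, hwB⟩)
  · have hmap : (G.map f).Adj (f a) (f b) := ⟨hdisj.ne_of_mem ha hb, a, b, hab, rfl, rfl⟩
    obtain ⟨haT, hbT⟩ := hnormal ha hb hmap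
    rw [(hf _ haT a).1 rfl, (hf _ hbT b).1 rfl]
    exact inr_mem_cutElems.2 ⟨hmap, .inl ⟨ha, hb⟩⟩

variable [DecidableEq V]

theorem contractEdge_eq_map (G : SimpleGraph V) (p q : V) :
    contractEdge G p q = G.map (update id q p) := by
  ext a b
  simp only [contractEdge, fromRel_adj, map_adj', update_apply, id]
  refine and_congr_right fun _ ↦ or_iff_left_of_imp ?_
  rintro ⟨x, y, hxy, hx, hy⟩
  exact ⟨y, x, hxy.symm, hy, hx⟩

theorem update_id_eq_iff_of_mem (hp : p ∉ T) (hq : q ∉ T) :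
    ∀ t ∈ T, ∀ x, update id q p x = t ↔ x = t := by
  intro t ht x
  rw [update_apply]
  split_ifs with hx
  · exact iff_of_false (fun h ↦ hp (h ▸ ht)) (fun h ↦ hq (hx ▸ h ▸ ht))
  · rfl

theorem eq_or_adj_of_update_id_eq (hpq : G.Adj p q) :
    ∀ x y, update id q p x = update id q p y → x = y ∨ G.Adj x y := by
  intro x y hxy
  have hqp := hpq.symm
  grind [update_apply]

theorem elemConn_contractEdge_le [Finite V] (hp : p ∉ T) (hq : q ∉ T) (hpq : G.Adj p q)
    (hu : u ∈ T) (hv : v ∈ T) (huv : u ≠ v) :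
    elemConn (contractEdge G p q) T u v ≤ elemConn G T u v := by
  rw [contractEdge_eq_map]
  exact elemConn_map_le (update_id_eq_iff_of_mem hp hq) (eq_or_adj_of_update_id_eq hpq) hu hv huv

theorem exists_avoiding_elemCut_of_elemConn_contractEdge_lt [Finite V] (hp : p ∉ T) (hq : q ∉ T)
    (hu : u ∈ T) (hv : v ∈ T) (huv : u ≠ v)
    (hlt : elemConn (contractEdge G p q) T u v < elemConn G T u v) :
    ∃ X Y, IsElemCut T X Y ∧ u ∈ X ∧ v ∈ Y ∧ p ∉ X ∪ Y ∧ q ∉ X ∪ Y ∧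
      cutSize G X Y = elemConn G T u v := by
  rw [contractEdge_eq_map] at hlt
  set f := update id q p
  have hf := update_id_eq_iff_of_mem hp hq
  have hfix (t) (ht : t ∈ T) : f t = t := (hf t ht t).2 rfl
  obtain ⟨A, B, hcut, huA, hvB, hnormal, hsize⟩ :=
    exists_elemCut_cutSize_eq_elemConn (G.map f) hu hv huv
  have hcut' : IsElemCut T (f ⁻¹' A) (f ⁻¹' B) := hcut.preimage hfix
  have huA' : u ∈ f ⁻¹' A := by rwa [Set.mem_preimage, hfix u hu]
  have hvB' : v ∈ f ⁻¹' B := by rwa [Set.mem_preimage, hfix v hv]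
  obtain ⟨hqmem, hsize'⟩ := hcut'.mem_cutElems_and_cutSize_eq hu hv huA' hvB'
    (cutElems_preimage_subset_insert hf (fun w hw ↦ update_of_ne hw _ _) hcut.disjoint hnormal)
    (hsize.trans_lt hlt)
  have hqXY : q ∉ f ⁻¹' A ∪ f ⁻¹' B := not_or.2 (inl_mem_cutElems.1 hqmem)
  have hpq : f p = f q := by grind [update_apply]
  have hpXY : p ∉ f ⁻¹' A ∪ f ⁻¹' B := by
    rwa [← Set.preimage_union, Set.mem_preimage, hpq]
  exact ⟨_, _, hcut', huA', hvB', hpXY, hqXY, hsize'⟩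

end DeletionContraction

/-- **The Reduction Lemma.** For any edge `pq` of `G` between two non-terminals,
either deleting `pq` preserves all pairwise element-connectivities of the terminals,
or contracting `pq` does. -/
theorem reduction_lemma {V : Type*} [Fintype V] [DecidableEq V]
    (G : SimpleGraph V) (T : Set V) (p q : V)
    (hp : p ∉ T) (hq : q ∉ T) (hpq : G.Adj p q) :
    (∀ u ∈ T, ∀ v ∈ T, u ≠ v →
        elemConn (G.deleteEdges {s(p, q)}) T u v = elemConn G T u v) ∨
    (∀ u ∈ T, ∀ v ∈ T, u ≠ v →
        elemConn (contractEdge G p q) T u v = elemConn G T u v) := by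
  by_contra! hcon
  obtain ⟨⟨u, hu, v, hv, huv, hdel⟩, x, hx, y, hy, hxy, hcon⟩ := hcon
  have hdel_lt : elemConn (G.deleteEdges {s(p, q)}) T u v < elemConn G T u v :=
    (elemConn_mono (G.deleteEdges_le _) hu hv huv).lt_of_ne hdel
  have hcon_lt : elemConn (contractEdge G p q) T x y < elemConn G T x y :=
    (elemConn_contractEdge_le hp hq hpq hx hy hxy).lt_of_ne hcon
  obtain ⟨A, B, hAB, huA, hvB, hcross, hABsize⟩ :=
    exists_crossing_elemCut_of_elemConn_deleteEdges_lt hu hv huv hdel_lt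
  obtain ⟨X, Y, hXY, hxX, hyY, hpXY, hqXY, hXYsize⟩ :=
    exists_avoiding_elemCut_of_elemConn_contractEdge_lt hp hq hx hy hxy hcon_lt
  have huncross := elemConn_add_elemConn_lt_of_crossing_edge hAB hXY hu hv huA hvB hx hy hxX hyY
    hcross hpXY hqXY
  rw [hABsize, hXYsize] at huncross
  exact huncross.false
end

section
/- Let G=(V,E) be an undirected graph and T ⊆ V a set of terminals such that κ'_G(u,v) ≥ k for every pair u,v ∈ T. Let pq be any edge of G with p,q ∈ V∖T, and let G₁ = G − pq and G₂ = G/pq. Then κ'_{G₁}(u,v) ≥ k for all u,v ∈ T, or κ'_{G₂}(u,v) ≥ k for all u,v ∈ T. -/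
open SimpleGraph

/-!
By Menger's theorem for vertex-disjoint paths in an auxiliary graph on the elements, the absence of
`k` element-disjoint paths is witnessed by a cut with fewer than `k` elements. If both reductions
fail, then `G - pq` has such a cut `A`, while the cut of `G / pq` lifts to a cut `B` of `G` with `k`
elements, `p` and `q` being among them. After exchanging the two sides of `B` if necessary, some
pair of terminals is separated by both `A` and `B`, hence also by `A ∩ B` and `A ∪ B`, which
therefore have at least `k` elements each in `G`. As `B` cuts the vertices `p` and `q`, neither of
these two cuts contains the edge `pq`, and submodularity in `G - pq` bounds the sum of their sizes
by `|A| + |B| < 2k`.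
-/

section Menger

variable {V ι κ : Type*} {G G' : SimpleGraph V} {A B S X Y : Set V}

/-- The set of vertices that a walk of `G` starting in `A` can reach without meeting `S`; in
particular both ends of the walk lie outside `S`. -/
def reachAvoiding (G : SimpleGraph V) (A S : Set V) : Set V :=
  {z | ∃ a ∈ A, ∃ w : G.Walk a z, ∀ x ∈ w.support, x ∉ S}

/-- `S` is an `A`–`B` separator in the sense of Menger's theorem: every walk from `A` to `B` meets
`S`, which may contain vertices of `A` and `B`. -/
def IsSeparator (G : SimpleGraph V) (A B S : Set V) : Prop :=
  ∀ a ∈ A, ∀ b ∈ B, ∀ w : G.Walk a b, ∃ z ∈ S, z ∈ w.support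

/-- A family of pairwise vertex-disjoint paths from `A` to `B`, indexed by `ι`. -/
structure Linkage (G : SimpleGraph V) (A B : Set V) (ι : Type*) where
  source : ι → V
  target : ι → V
  path : ∀ i, G.Walk (source i) (target i)
  source_mem : ∀ i, source i ∈ A
  target_mem : ∀ i, target i ∈ B
  isPath : ∀ i, (path i).IsPath
  eq_of_mem_support : ∀ {i j z}, z ∈ (path i).support → z ∈ (path j).support → i = j

lemma mem_reachAvoiding_of_mem {a : V} (ha : a ∈ A) (haS : a ∉ S) : a ∈ reachAvoiding G A S :=
  ⟨a, ha, Walk.nil, by simpa using haS⟩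

lemma notMem_of_mem_reachAvoiding {z : V} (hz : z ∈ reachAvoiding G A S) : z ∉ S := by
  obtain ⟨_, _, w, hw⟩ := hz
  exact hw z w.end_mem_support

lemma mem_reachAvoiding_of_adj {y z : V} (hz : z ∈ reachAvoiding G A S) (hzy : G.Adj z y)
    (hy : y ∉ S) : y ∈ reachAvoiding G A S := by
  obtain ⟨a, ha, w, hw⟩ := hz
  refine ⟨a, ha, w.concat hzy, fun x hx => ?_⟩
  rw [Walk.support_concat, List.mem_append, List.mem_singleton] at hx
  rcases hx with hx | rfl
  exacts [hw x hx, hy]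

lemma mem_reachAvoiding_of_mem_support {a y z : V} (ha : a ∈ A) (w : G.Walk a z)
    (hw : ∀ x ∈ w.support, x ∉ S) (hy : y ∈ w.support) : y ∈ reachAvoiding G A S := by
  classical
  exact ⟨a, ha, w.takeUntil y hy, fun x hx => hw x (w.support_takeUntil_subset_support hy hx)⟩

lemma IsSeparator.disjoint_reachAvoiding (h : IsSeparator G A B S) :
    Disjoint (reachAvoiding G A S) (reachAvoiding G B S) := by
  rw [Set.disjoint_left]
  rintro z ⟨a, ha, w₁, hw₁⟩ ⟨b, hb, w₂, hw₂⟩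
  obtain ⟨x, hxS, hx⟩ := h a ha b hb (w₁.append w₂.reverse)
  rw [Walk.mem_support_append_iff, Walk.support_reverse, List.mem_reverse] at hx
  exact hx.elim (hw₁ x · hxS) (hw₂ x · hxS)

lemma IsSeparator.notMem_reachAvoiding (h : IsSeparator G A B S) {b : V} (hb : b ∈ B) :
    b ∉ reachAvoiding G A S := fun hbA =>
  Set.disjoint_left.1 h.disjoint_reachAvoiding hbA
    (mem_reachAvoiding_of_mem hb (notMem_of_mem_reachAvoiding hbA))

lemma IsSeparator.symm (h : IsSeparator G A B S) : IsSeparator G B A S := fun b hb a ha w => by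
  simpa using h a ha b hb w.reverse

lemma isSeparator_inter_of_bot : IsSeparator (⊥ : SimpleGraph V) A B (A ∩ B) := by
  rintro a ha b hb (_ | ⟨h, -⟩)
  · exact ⟨a, ⟨ha, hb⟩, Walk.start_mem_support _⟩
  · exact h.elim

lemma exists_adj_leaving_reachAvoiding {e : Sym2 V} {a b : V} (ha : a ∈ A) (w : G.Walk a b)
    (hw : ∀ z ∈ w.support, z ∉ S) (hb : b ∉ reachAvoiding (G.deleteEdges {e}) A S) :
    ∃ x y, G.Adj x y ∧ s(x, y) = e ∧ x ∈ reachAvoiding (G.deleteEdges {e}) A S ∧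
      y ∉ reachAvoiding (G.deleteEdges {e}) A S ∧ y ∉ S := by
  obtain ⟨d, hd, hfst, hsnd⟩ := w.exists_boundary_dart _
    (mem_reachAvoiding_of_mem ha (hw a w.start_mem_support)) hb
  have hdS : d.snd ∉ S := hw _ (w.dart_snd_mem_support_of_mem_darts hd)
  refine ⟨d.fst, d.snd, d.adj, ?_, hfst, hsnd, hdS⟩
  by_contra hne
  exact hsnd (mem_reachAvoiding_of_adj hfst (deleteEdges_adj.2 ⟨d.adj, hne⟩) hdS)

lemma IsSeparator.insert_of_mem_edge {e : Sym2 V} {v : V}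
    (h : IsSeparator (G.deleteEdges {e}) A B S) (hv : v ∈ e) :
    IsSeparator G A B (insert v S) := by
  intro a ha b hb w
  by_cases he : e ∈ w.edges
  · exact ⟨v, Set.mem_insert v S, Walk.mem_support_of_mem_edges he hv⟩
  · obtain ⟨z, hzS, hzw⟩ := h a ha b hb (w.toDeleteEdge e he)
    exact ⟨z, Set.mem_insert_of_mem v hzS, by simpa using hzw⟩

/- A walk avoiding `Z` could leave the region reachable from `A` only along `xy`: not from `x`,
which `Z` cuts off from `A`, and not from `y`, which `S` cuts off. -/
lemma IsSeparator.of_deleteEdges_insert {Z : Set V} {x y : V}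
    (hS : IsSeparator (G.deleteEdges {s(x, y)}) A B S)
    (hy : y ∉ reachAvoiding (G.deleteEdges {s(x, y)}) A S)
    (hZ : IsSeparator (G.deleteEdges {s(x, y)}) A (insert x S) Z) : IsSeparator G A B Z := by
  have hsub : reachAvoiding (G.deleteEdges {s(x, y)}) A Z ⊆
      reachAvoiding (G.deleteEdges {s(x, y)}) A S := by
    rintro z ⟨a, ha, w, hw⟩
    exact ⟨a, ha, w, fun u hu huS => hZ.notMem_reachAvoiding (Set.mem_insert_of_mem x huS)
      (mem_reachAvoiding_of_mem_support ha w hw hu)⟩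
  intro a ha b hb w
  by_contra! hw
  obtain ⟨x', y', -, he, hx', -⟩ := exists_adj_leaving_reachAvoiding ha w
    (fun z hz hzZ => hw z hzZ hz) (fun h => hS.notMem_reachAvoiding hb (hsub h))
  rcases Sym2.eq_iff.1 he with ⟨rfl, -⟩ | ⟨rfl, -⟩
  · exact hZ.notMem_reachAvoiding (Set.mem_insert x' S) hx'
  · exact hy (hsub hx')

lemma IsSeparator.exists_edge_between_sides {e : Sym2 V}
    (hS : IsSeparator (G.deleteEdges {e}) A B S) (hnS : ¬ IsSeparator G A B S) :
    ∃ x y, G.Adj x y ∧ s(x, y) = e ∧ x ∉ S ∧ y ∉ S ∧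
      y ∉ reachAvoiding (G.deleteEdges {e}) A S ∧ x ∉ reachAvoiding (G.deleteEdges {e}) B S := by
  unfold IsSeparator at hnS
  push Not at hnS
  obtain ⟨a, ha, b, hb, w, hw⟩ := hnS
  obtain ⟨x, y, hxy, he, hx, hy, hyS⟩ := exists_adj_leaving_reachAvoiding ha w
    (fun z hz hzS => hw z hzS hz) (hS.notMem_reachAvoiding hb)
  exact ⟨x, y, hxy, he, notMem_of_mem_reachAvoiding hx, hyS, hy,
    Set.disjoint_left.1 hS.disjoint_reachAvoiding hx⟩

namespace Linkage

/-- Trivial paths at vertices of `A ∩ B`. -/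
def ofEmbedding (f : ι ↪ V) (hf : ∀ i, f i ∈ A ∩ B) : Linkage G A B ι where
  source := f
  target := f
  path _ := Walk.nil
  source_mem i := (hf i).1
  target_mem i := (hf i).2
  isPath _ := Walk.IsPath.nil
  eq_of_mem_support hi hj := by
    rw [Walk.mem_support_nil_iff] at hi hj
    exact f.injective (hi.symm.trans hj)

/-- Each path traversed backwards. -/
def reverse (L : Linkage G A B ι) : Linkage G B A ι where
  source := L.target
  target := L.source
  path i := (L.path i).reverse
  source_mem := L.target_mem
  target_mem := L.source_mem
  isPath i := (L.isPath i).reverse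
  eq_of_mem_support hi hj :=
    L.eq_of_mem_support (by simpa using hi) (by simpa using hj)

/-- The same paths, viewed in a larger graph. -/
def mapLe (L : Linkage G A B ι) (h : G ≤ G') : Linkage G' A B ι where
  source := L.source
  target := L.target
  path i := (L.path i).mapLe h
  source_mem := L.source_mem
  target_mem := L.target_mem
  isPath i := (L.isPath i).mapLe h
  eq_of_mem_support hi hj :=
    L.eq_of_mem_support (by simpa using hi) (by simpa using hj)

/-- The paths selected by an embedding of index types. -/
def reindex (L : Linkage G A B ι) (f : κ ↪ ι) : Linkage G A B κ where
  source := L.source ∘ f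
  target := L.target ∘ f
  path i := L.path (f i)
  source_mem i := L.source_mem (f i)
  target_mem i := L.target_mem (f i)
  isPath i := L.isPath (f i)
  eq_of_mem_support hi hj := f.injective (L.eq_of_mem_support hi hj)

lemma eq_target_of_mem_range (L : Linkage G A B ι) {i : ι} {z : V}
    (hi : z ∈ (L.path i).support) (hz : z ∈ Set.range L.target) : z = L.target i := by
  obtain ⟨j, rfl⟩ := hz
  rw [L.eq_of_mem_support hi (L.path j).end_mem_support]

lemma eq_source_of_mem_range (L : Linkage G A B ι) {i : ι} {z : V}
    (hi : z ∈ (L.path i).support) (hz : z ∈ Set.range L.source) : z = L.source i :=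
  L.reverse.eq_target_of_mem_range (i := i) (by simpa [reverse] using hi) hz

lemma target_injective (L : Linkage G A B ι) : Function.Injective L.target := fun i j hij =>
  L.eq_of_mem_support (L.path i).end_mem_support (by rw [hij]; exact (L.path j).end_mem_support)

lemma exists_target_eq [Finite κ] (L : Linkage G A X ι) {f : κ → V} (hX : X ⊆ Set.range f)
    (hcard : Nat.card κ = Nat.card ι) : ∃ L' : Linkage G A X κ, L'.target = f := by
  choose g hg using fun i => hX (L.target_mem i)
  have hg_inj : Function.Injective g := .of_comp (f := f) <| by
    simpa only [Function.comp_def, hg] using L.target_injective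
  let e := Equiv.ofBijective g (hg_inj.bijective_of_nat_card_le hcard.le)
  refine ⟨L.reindex e.symm.toEmbedding, funext fun j => ?_⟩
  exact (hg _).symm.trans (congrArg f (e.apply_symm_apply j))

lemma exists_source_eq [Finite κ] (L : Linkage G X B ι) {f : κ → V} (hX : X ⊆ Set.range f)
    (hcard : Nat.card κ = Nat.card ι) : ∃ L' : Linkage G X B κ, L'.source = f := by
  obtain ⟨L', hL'⟩ := L.reverse.exists_target_eq hX hcard
  exact ⟨L'.reverse, hL'⟩

lemma eq_of_mem_support_takeUntil [DecidableEq V] (L : Linkage G A B ι) {i : ι} {u z : V}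
    (hz : z ∈ (L.path i).support) (hu : u ∈ Set.range L.target)
    (huz : u ∈ ((L.path i).takeUntil z hz).support) : u = z := by
  obtain rfl := L.eq_target_of_mem_range (Walk.support_takeUntil_subset_support _ hz huz) hu
  by_contra hne
  exact Walk.endpoint_notMem_support_takeUntil (L.isPath i) hz hne huz

/- Switching from the first path to the second at `z` gives an `A`–`B` walk, whose only vertex that
can lie in `S` is `z`. -/
lemma mem_of_mem_support_of_mem_support {L₁ : Linkage G A X ι} {L₂ : Linkage G Y B κ}
    (hS : IsSeparator G A B S) (hX : S ⊆ Set.range L₁.target) (hY : S ⊆ Set.range L₂.source)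
    {i : ι} {j : κ} {z : V} (hi : z ∈ (L₁.path i).support) (hj : z ∈ (L₂.path j).support) :
    z ∈ S := by
  classical
  have hj' : z ∈ (L₂.reverse.path j).support := by simpa [reverse] using hj
  obtain ⟨u, huS, hu⟩ := hS _ (L₁.source_mem i) _ (L₂.reverse.source_mem j)
    (((L₁.path i).takeUntil z hi).append ((L₂.reverse.path j).takeUntil z hj').reverse)
  rw [Walk.mem_support_append_iff, Walk.support_reverse, List.mem_reverse] at hu
  rcases hu with hu | hu
  · exact L₁.eq_of_mem_support_takeUntil hi (hX huS) hu ▸ huS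
  · exact L₂.reverse.eq_of_mem_support_takeUntil hj' (hY huS) hu ▸ huS

lemma nonempty_of_le_encard_inter {k : ℕ} (hk : k ≤ (A ∩ B).encard) :
    Nonempty (Linkage G A B (Fin k)) := by
  obtain ⟨R, hR, hRk⟩ := Set.exists_subset_encard_eq hk
  have : Finite R := Set.finite_of_encard_eq_coe hRk
  have hcard : Nat.card R = k := by rw [Nat.card_coe_set_eq, Set.ncard, hRk, ENat.toNat_natCast]
  let f : Fin k ↪ V := (Finite.equivFinOfCardEq hcard).symm.toEmbedding.trans (.subtype _)
  exact ⟨.ofEmbedding f fun i => hR (Subtype.coe_prop _)⟩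

lemma nonempty_of_eq_or_adj (L₁ : Linkage G A X ι) (L₂ : Linkage G Y B ι)
    (hlink : ∀ i, L₁.target i = L₂.source i ∨ G.Adj (L₁.target i) (L₂.source i))
    (hmeet : ∀ i j z, z ∈ (L₁.path i).support → z ∈ (L₂.path j).support → i = j) :
    Nonempty (Linkage G A B ι) := by
  classical
  have hwalk (i : ι) : ∃ w : G.Walk (L₁.source i) (L₂.target i),
      ∀ z ∈ w.support, z ∈ (L₁.path i).support ∨ z ∈ (L₂.path i).support := by
    rcases hlink i with h | h
    · refine ⟨(L₁.path i).append ((L₂.path i).copy h.symm rfl), fun z hz => ?_⟩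
      simpa [Walk.mem_support_append_iff] using hz
    · refine ⟨(L₁.path i).append (.cons h (L₂.path i)), fun z hz => ?_⟩
      rw [Walk.mem_support_append_iff, Walk.support_cons, List.mem_cons] at hz
      rcases hz with hz | rfl | hz
      exacts [.inl hz, .inl (L₁.path i).end_mem_support, .inr hz]
  choose w hw using hwalk
  refine ⟨⟨L₁.source, L₂.target, fun i => (w i).bypass, L₁.source_mem, L₂.target_mem,
    fun i => (w i).bypass_isPath, fun {i j z} hi hj => ?_⟩⟩
  rcases hw i z (Walk.support_bypass_subset_support _ hi) with hi | hi <;>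
    rcases hw j z (Walk.support_bypass_subset_support _ hj) with hj | hj
  exacts [L₁.eq_of_mem_support hi hj, hmeet i j z hi hj, (hmeet j i z hj hi).symm,
    L₂.eq_of_mem_support hi hj]

lemma nonempty_of_deleteEdges [Finite S] {x y : V} (hxy : G.Adj x y)
    (hS : IsSeparator (G.deleteEdges {s(x, y)}) A B S) (hx : x ∉ S) (hy : y ∉ S)
    (hcard : Nat.card (Option S) = Nat.card ι)
    (L₁ : Linkage (G.deleteEdges {s(x, y)}) A (insert x S) ι)
    (L₂ : Linkage (G.deleteEdges {s(x, y)}) (insert y S) B ι) :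
    Nonempty (Linkage G A B (Option S)) := by
  have hrange (v : V) : Set.range (fun o : Option S => o.elim v (↑)) = insert v S := by
    ext z
    simp [Option.exists, eq_comm]
  obtain ⟨L₁, h₁⟩ := L₁.exists_target_eq (hrange x).ge hcard
  obtain ⟨L₂, h₂⟩ := L₂.exists_source_eq (hrange y).ge hcard
  refine nonempty_of_eq_or_adj (L₁.mapLe (deleteEdges_le _)) (L₂.mapLe (deleteEdges_le _))
    (fun i => ?_) fun i j z hi hj => ?_
  · simp only [mapLe, h₁, h₂]
    cases i
    exacts [.inr hxy, .inl rfl]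
  · simp only [mapLe, Walk.support_mapLe_eq_support] at hi hj
    have hzS : z ∈ S := mem_of_mem_support_of_mem_support hS
      (by rw [h₁, hrange]; exact Set.subset_insert x S)
      (by rw [h₂, hrange]; exact Set.subset_insert y S) hi hj
    have hz₁ : z = i.elim x (↑) := by
      rw [L₁.eq_target_of_mem_range hi (by rw [h₁, hrange]; exact .inr hzS), h₁]
    have hz₂ : z = j.elim y (↑) := by
      rw [L₂.eq_source_of_mem_range hj (by rw [h₂, hrange]; exact .inr hzS), h₂]
    cases i <;> cases j <;> grind

end Linkage

/- Deleting an edge either preserves the hypothesis or leaves a separator `S` of size `k - 1`, and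
then linkages from `A` to `S + x` and from `S + y` to `B` can be joined along `S` and `xy`. -/
lemma exists_linkage_of_finite_edgeSet {k : ℕ} (hG : G.edgeSet.Finite)
    (hk : ∀ S, IsSeparator G A B S → k ≤ S.encard) : Nonempty (Linkage G A B (Fin k)) := by
  induction hn : G.edgeSet.ncard using Nat.strong_induction_on generalizing G A B with
  | _ n ih =>
  subst hn
  rcases eq_or_ne G ⊥ with rfl | hne
  · exact Linkage.nonempty_of_le_encard_inter (hk _ isSeparator_inter_of_bot)
  obtain ⟨a, b, hab⟩ := ne_bot_iff_exists_adj.1 hne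
  have ih' {X Y : Set V} (h : ∀ S, IsSeparator (G.deleteEdges {s(a, b)}) X Y S → k ≤ S.encard) :
      Nonempty (Linkage (G.deleteEdges {s(a, b)}) X Y (Fin k)) := by
    refine ih _ (Set.ncard_lt_ncard ?_ hG) (hG.subset (edgeSet_mono (deleteEdges_le _))) h rfl
    rw [edgeSet_deleteEdges]
    exact Set.sdiff_singleton_ssubset.2 hab
  by_cases hdel : ∀ S, IsSeparator (G.deleteEdges {s(a, b)}) A B S → k ≤ S.encard
  · exact (ih' hdel).map (.mapLe · (deleteEdges_le _))
  push Not at hdel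
  obtain ⟨S, hS, hSk⟩ := hdel
  obtain ⟨x, y, hxy, he, hxS, hyS, hy, hx⟩ :=
    hS.exists_edge_between_sides fun h => (hk S h).not_gt hSk
  rw [← he] at hS hy hx ih'
  have : Finite S := Set.finite_of_encard_le_coe hSk.le
  have hcard : Nat.card (Option S) = k := by
    have hle : k ≤ (insert x S).encard :=
      hk _ (hS.insert_of_mem_edge (Sym2.mem_mk_left x y))
    rw [Set.encard_insert_of_notMem hxS] at hle
    rw [Finite.card_option, Nat.card_coe_set_eq]
    rw [← (Set.toFinite S).cast_ncard_eq] at hle hSk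
    norm_cast at hle hSk
    lia
  obtain ⟨L₁⟩ := ih' fun Z hZ => hk Z (hS.of_deleteEdges_insert hy hZ)
  obtain ⟨L₂⟩ := ih' fun Z hZ => hk Z <| IsSeparator.symm <|
    .of_deleteEdges_insert (x := y) (y := x) (S := S) (Sym2.eq_swap ▸ hS.symm)
      (Sym2.eq_swap ▸ hx) (Sym2.eq_swap ▸ hZ.symm)
  obtain ⟨L⟩ := Linkage.nonempty_of_deleteEdges hxy hS hxS hyS (by simpa using hcard) L₁ L₂
  exact ⟨L.reindex (Finite.equivFinOfCardEq hcard).symm.toEmbedding⟩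

/- Compactness: separators of size less than `k` for the finite subgraphs of `G` converge along an
ultrafilter to one for `G`. -/
theorem exists_linkage_of_le_encard_separator {k : ℕ}
    (hk : ∀ S, IsSeparator G A B S → k ≤ S.encard) : Nonempty (Linkage G A B (Fin k)) := by
  classical
  by_contra hno
  have hsep (F : Finset (Sym2 V)) :
      ∃ S, IsSeparator (G.deleteEdges (F : Set (Sym2 V))ᶜ) A B S ∧ S.encard < k := by
    by_contra! h
    refine hno <| (exists_linkage_of_finite_edgeSet (F.finite_toSet.subset ?_) h).map
      (.mapLe · (deleteEdges_le _))
    simp [edgeSet_deleteEdges]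
  choose S hS hSk using hsep
  let 𝒰 : Ultrafilter (Finset (Sym2 V)) := .of Filter.atTop
  let S' : Set V := {z | ∀ᶠ F in 𝒰, z ∈ S F}
  have hS' : IsSeparator G A B S' := by
    intro a ha b hb w
    have hw : ∀ᶠ F in 𝒰, ∃ z ∈ {z | z ∈ w.support}, z ∈ S F := by
      filter_upwards [Ultrafilter.of_le _ (Filter.eventually_ge_atTop w.edges.toFinset)] with F hF
      obtain ⟨z, hzS, hz⟩ := hS F a ha b hb <| w.toDeleteEdges _ fun e he => by
        simpa using hF (List.mem_toFinset.2 he)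
      exact ⟨z, by simpa using hz, hzS⟩
    obtain ⟨z, hz, hzS⟩ := (Ultrafilter.eventually_exists_mem_iff w.support.finite_toSet).1 hw
    exact ⟨z, hzS, hz⟩
  obtain ⟨R, hR, hRk⟩ := Set.exists_subset_encard_eq (hk S' hS')
  obtain ⟨F, hF⟩ :=
    ((Set.finite_of_encard_eq_coe hRk).eventually_all.2 fun z hz => hR hz).exists
  exact (hSk F).not_ge (hRk ▸ Set.encard_le_encard hF)

end Menger

section ElemCut

variable {V : Type*} {G G' : SimpleGraph V} {T : Set V} {u v : V} {k : ℕ}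

/-- A cut for element-connectivity: a tripartition of `V` into `inner`, `outer \ inner` and
`outerᶜ`, in which the middle part consists of the deleted non-terminals. -/
structure ElemCut (T : Set V) where
  inner : Set V
  outer : Set V
  inner_subset_outer : inner ⊆ outer
  mem_inner_of_mem_outer : ∀ z ∈ T, z ∈ outer → z ∈ inner

namespace ElemCut

/-- The cut `C` separates `u` from `v` if they lie on its inner and outer side, respectively. -/
def Separates (C : ElemCut T) (u v : V) : Prop :=
  u ∈ C.inner ∧ v ∉ C.outer

/-- The elements cut by `C` in `G`, a vertex `z` being encoded as `Sum.inl z` and an edge `e` as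
`Sum.inr e`: the vertices between the two sides, and the edges joining one side to the other. -/
def elems (C : ElemCut T) (G : SimpleGraph V) : Set (V ⊕ Sym2 V) :=
  {z | z.elim (· ∈ C.outer \ C.inner) fun e =>
    e ∈ G.edgeSet ∧ (∃ a ∈ e, a ∈ C.inner) ∧ ∃ b ∈ e, b ∉ C.outer}

variable {A B C : ElemCut T}

@[simp]
lemma inl_mem_elems {z : V} : Sum.inl z ∈ C.elems G ↔ z ∈ C.outer ∧ z ∉ C.inner :=
  Iff.rfl

@[simp]
lemma inr_mem_elems {e : Sym2 V} : Sum.inr e ∈ C.elems G ↔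
    e ∈ G.edgeSet ∧ (∃ a ∈ e, a ∈ C.inner) ∧ ∃ b ∈ e, b ∉ C.outer :=
  Iff.rfl

lemma elems_mono (h : G ≤ G') : C.elems G ⊆ C.elems G' := by
  rintro (z | e) hz
  exacts [hz, ⟨edgeSet_mono h hz.1, hz.2⟩]

lemma elems_subset_elems_deleteEdges {e : Sym2 V} (he : Sum.inr e ∉ C.elems G) :
    C.elems G ⊆ C.elems (G.deleteEdges {e}) := by
  rintro (z | f) hz
  · exact hz
  · refine ⟨?_, hz.2⟩
    rw [edgeSet_deleteEdges]
    exact ⟨hz.1, fun hfe => he (hfe ▸ hz)⟩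

lemma Separates.ne (h : C.Separates u v) : u ≠ v := fun huv =>
  h.2 (huv ▸ C.inner_subset_outer h.1)

lemma Separates.exists_mem_elems_of_walk (h : C.Separates u v) (w : G.Walk u v) :
    ∃ z ∈ C.elems G, z.elim (· ∈ w.support) (· ∈ w.edges) := by
  obtain ⟨d, hd, hfst, hsnd⟩ :=
    w.exists_boundary_dart C.inner h.1 fun hv => h.2 (C.inner_subset_outer hv)
  by_cases hout : d.snd ∈ C.outer
  · exact ⟨.inl d.snd, ⟨hout, hsnd⟩, w.dart_snd_mem_support_of_mem_darts hd⟩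
  · exact ⟨.inr d.edge, ⟨d.edge_mem, ⟨d.fst, Sym2.mem_mk_left _ _, hfst⟩,
      d.snd, Sym2.mem_mk_right _ _, hout⟩, List.mem_map_of_mem hd⟩

lemma Separates.le_encard_elems (h : C.Separates u v) (hk : HasElemPaths G T u v k) :
    k ≤ (C.elems G).encard := by
  obtain ⟨P, -, hP⟩ := hk
  choose f hf hfP using fun i => h.exists_mem_elems_of_walk (P i)
  have hinj : Function.Injective f := by
    intro i j hij
    by_contra hne
    obtain ⟨hedge, hvert⟩ := hP i j hne
    have hi := hfP i
    have hj := hfP j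
    rw [← hij] at hj
    cases hz : f i with
    | inl z =>
      rw [hz] at hi hj
      obtain ⟨hout, hinn⟩ := inl_mem_elems.1 (hz ▸ hf i)
      rcases hvert z hi hj with hT | rfl | rfl
      exacts [hinn (C.mem_inner_of_mem_outer z hT hout), hinn h.1, h.2 hout]
    | inr e =>
      rw [hz] at hi hj
      exact hedge e hi hj
  calc (k : ℕ∞)
    _ = ENat.card (Fin k) := by rw [ENat.card_eq_coe_fintype_card, Fintype.card_fin]
    _ ≤ (Set.range f).encard := hinj.encard_range
    _ ≤ (C.elems G).encard := Set.encard_le_encard (Set.range_subset_iff.2 hf)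

/-- The cut whose inner sides and middle parts are traded for outer ones. -/
def compl (C : ElemCut T) : ElemCut T where
  inner := C.outerᶜ
  outer := C.innerᶜ
  inner_subset_outer := Set.compl_subset_compl.2 C.inner_subset_outer
  mem_inner_of_mem_outer z hz hinn hout := hinn (C.mem_inner_of_mem_outer z hz hout)

/-- The cut with the intersections of the inner and of the outer sets. -/
def inter (A B : ElemCut T) : ElemCut T where
  inner := A.inner ∩ B.inner
  outer := A.outer ∩ B.outer
  inner_subset_outer := Set.inter_subset_inter A.inner_subset_outer B.inner_subset_outer
  mem_inner_of_mem_outer z hz :=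
    And.imp (A.mem_inner_of_mem_outer z hz) (B.mem_inner_of_mem_outer z hz)

/-- The cut with the unions of the inner and of the outer sets. -/
def union (A B : ElemCut T) : ElemCut T where
  inner := A.inner ∪ B.inner
  outer := A.outer ∪ B.outer
  inner_subset_outer := Set.union_subset_union A.inner_subset_outer B.inner_subset_outer
  mem_inner_of_mem_outer z hz :=
    Or.imp (A.mem_inner_of_mem_outer z hz) (B.mem_inner_of_mem_outer z hz)

/-- The preimage of a cut under a map that preserves terminals. -/
def comap {W : Type*} {T' : Set W} (C : ElemCut T') (φ : V → W) (hφ : Set.MapsTo φ T T') :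
    ElemCut T where
  inner := φ ⁻¹' C.inner
  outer := φ ⁻¹' C.outer
  inner_subset_outer := Set.preimage_mono C.inner_subset_outer
  mem_inner_of_mem_outer _ hz := C.mem_inner_of_mem_outer _ (hφ hz)

lemma elems_compl : C.compl.elems G = C.elems G := by
  ext (z | e)
  · simp [compl, and_comm]
  · simp [compl, and_comm]

lemma Separates.compl (h : C.Separates u v) : C.compl.Separates v u :=
  ⟨h.2, not_not.2 h.1⟩

lemma Separates.inter (hA : A.Separates u v) (hB : B.Separates u v) :
    (A.inter B).Separates u v :=
  ⟨⟨hA.1, hB.1⟩, fun h => hA.2 h.1⟩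

lemma Separates.union (hA : A.Separates u v) (hB : B.Separates u v) :
    (A.union B).Separates u v :=
  ⟨.inl hA.1, not_or.2 ⟨hA.2, hB.2⟩⟩

lemma elems_inter_union_elems_union_subset (A B : ElemCut T) (G : SimpleGraph V) :
    (A.inter B).elems G ∪ (A.union B).elems G ⊆ A.elems G ∪ B.elems G := by
  rintro (z | e) <;>
    simp only [inter, union, Set.mem_union, Set.mem_inter_iff, inl_mem_elems, inr_mem_elems] <;>
    grind

lemma elems_inter_inter_elems_union_subset (A B : ElemCut T) (G : SimpleGraph V) :
    (A.inter B).elems G ∩ (A.union B).elems G ⊆ A.elems G ∩ B.elems G := by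
  rintro (z | e) <;>
    simp only [inter, union, Set.mem_union, Set.mem_inter_iff, inl_mem_elems, inr_mem_elems] <;>
    grind

lemma encard_elems_inter_add_encard_elems_union_le (A B : ElemCut T) (G : SimpleGraph V) :
    ((A.inter B).elems G).encard + ((A.union B).elems G).encard ≤
      (A.elems G).encard + (B.elems G).encard := by
  rw [← Set.encard_union_add_encard_inter, ← Set.encard_union_add_encard_inter (A.elems G)]
  exact add_le_add (Set.encard_le_encard (elems_inter_union_elems_union_subset A B G))
    (Set.encard_le_encard (elems_inter_inter_elems_union_subset A B G))

/- The edge `e` is cut neither by `A ∩ B` nor by `A ∪ B`, hence deleting it is harmless to both. -/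
lemma encard_elems_inter_add_encard_elems_union_le_deleteEdges {e : Sym2 V}
    (he : ∀ z ∈ e, z ∈ B.outer ∧ z ∉ B.inner) :
    ((A.inter B).elems G).encard + ((A.union B).elems G).encard ≤
      (A.elems (G.deleteEdges {e})).encard + (B.elems G).encard := by
  have hinter : Sum.inr e ∉ (A.inter B).elems G := fun h => by
    obtain ⟨-, ⟨a, ha, haB⟩, -⟩ := inr_mem_elems.1 h
    exact (he a ha).2 haB.2
  have hunion : Sum.inr e ∉ (A.union B).elems G := fun h => by
    obtain ⟨-, -, b, hb, hbB⟩ := inr_mem_elems.1 h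
    exact hbB (.inr (he b hb).1)
  calc ((A.inter B).elems G).encard + ((A.union B).elems G).encard
    _ ≤ ((A.inter B).elems (G.deleteEdges {e})).encard +
        ((A.union B).elems (G.deleteEdges {e})).encard :=
      add_le_add (Set.encard_le_encard (elems_subset_elems_deleteEdges hinter))
        (Set.encard_le_encard (elems_subset_elems_deleteEdges hunion))
    _ ≤ (A.elems (G.deleteEdges {e})).encard + (B.elems (G.deleteEdges {e})).encard :=
      encard_elems_inter_add_encard_elems_union_le A B _
    _ ≤ (A.elems (G.deleteEdges {e})).encard + (B.elems G).encard := by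
      gcongr
      exact elems_mono (deleteEdges_le _)

lemma le_encard_elems_deleteEdges {e : Sym2 V} (hk : HasElemPaths G T u v k)
    (hA : A.Separates u v) (hB : B.Separates u v) (hBk : (B.elems G).encard ≤ k)
    (he : ∀ z ∈ e, z ∈ B.outer ∧ z ∉ B.inner) : k ≤ (A.elems (G.deleteEdges {e})).encard := by
  refine (ENat.add_le_add_iff_right (ENat.natCast_ne_top k)).1 ?_
  calc (k + k : ℕ∞)
    _ ≤ ((A.inter B).elems G).encard + ((A.union B).elems G).encard :=
      add_le_add ((hA.inter hB).le_encard_elems hk) ((hA.union hB).le_encard_elems hk)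
    _ ≤ (A.elems (G.deleteEdges {e})).encard + (B.elems G).encard :=
      encard_elems_inter_add_encard_elems_union_le_deleteEdges he
    _ ≤ (A.elems (G.deleteEdges {e})).encard + k := by gcongr

lemma exists_separates_and_separates_or {s t x y : V} (hs : s ∈ T) (ht : t ∈ T) (hx : x ∈ T)
    (hy : y ∈ T) (hA : A.Separates s t) (hB : B.Separates x y) :
    ∃ u ∈ T, ∃ v ∈ T, A.Separates u v ∧ (B.Separates u v ∨ B.Separates v u) := by
  have hAT := A.mem_inner_of_mem_outer
  have hBT := B.mem_inner_of_mem_outer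
  by_cases hsB : s ∈ B.inner <;> by_cases htB : t ∈ B.inner
  · by_cases hyA : y ∈ A.inner
    · exact ⟨y, hy, t, ht, ⟨hyA, hA.2⟩, .inr ⟨htB, hB.2⟩⟩
    · exact ⟨s, hs, y, hy, ⟨hA.1, mt (hAT y hy) hyA⟩, .inl ⟨hsB, hB.2⟩⟩
  · exact ⟨s, hs, t, ht, hA, .inl ⟨hsB, mt (hBT t ht) htB⟩⟩
  · exact ⟨s, hs, t, ht, hA, .inr ⟨htB, mt (hBT s hs) hsB⟩⟩
  · by_cases hxA : x ∈ A.inner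
    · exact ⟨x, hx, t, ht, ⟨hxA, hA.2⟩, .inl ⟨hB.1, mt (hBT t ht) htB⟩⟩
    · exact ⟨s, hs, x, hx, ⟨hA.1, mt (hAT x hx) hxA⟩, .inr ⟨hB.1, mt (hBT s hs) hsB⟩⟩

end ElemCut

lemma HasElemPaths.mono {m : ℕ} (h : HasElemPaths G T u v k) (hm : m ≤ k) :
    HasElemPaths G T u v m := by
  obtain ⟨P, hpath, hP⟩ := h
  exact ⟨P ∘ Fin.castLE hm, fun i => hpath _,
    fun i j hij => hP _ _ ((Fin.castLE_injective hm).ne hij)⟩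

lemma bddAbove_setOf_hasElemPaths [Finite V] (huv : u ≠ v) :
    BddAbove {k | HasElemPaths G T u v k} := by
  let C : ElemCut T := ⟨{u}, {u}, subset_rfl, fun _ _ => id⟩
  have hC : C.Separates u v := ⟨rfl, huv.symm⟩
  refine ⟨(C.elems G).ncard, fun k hk => ?_⟩
  exact_mod_cast (C.elems G).toFinite.cast_ncard_eq ▸ hC.le_encard_elems hk

lemma le_elemConn_iff [Finite V] (huv : u ≠ v) :
    k ≤ elemConn G T u v ↔ HasElemPaths G T u v k := by
  have hbdd := bddAbove_setOf_hasElemPaths (G := G) (T := T) huv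
  have hne : {k | HasElemPaths G T u v k}.Nonempty :=
    ⟨0, Fin.elim0, fun i => i.elim0, fun i => i.elim0⟩
  exact ⟨(Nat.sSup_mem hne hbdd).mono, le_csSup hbdd⟩

end ElemCut

section ElementMenger

variable {V : Type*} {G H : SimpleGraph V} {T : Set V} {P S : Set (V ⊕ Sym2 V)} {u v : V} {k : ℕ}

/-- The elements that a path through the edge `e` uses up, encoded as in `ElemCut.elems`: the
non-terminal ends of `e`, or `e` itself if both its ends are terminals. -/
def edgeElems (T : Set V) (e : Sym2 V) : Set (V ⊕ Sym2 V) :=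
  {α | α.elim (fun z => z ∈ e ∧ z ∉ T) (fun f => f = e ∧ ∀ z ∈ e, z ∈ T)}

/-- The elements used by the edges of `G` at the vertex `z`. -/
def elemsAt (G : SimpleGraph V) (T : Set V) (z : V) : Set (V ⊕ Sym2 V) :=
  ⋃ e ∈ G.incidenceSet z, edgeElems T e

/-- The graph on the elements of `G` in which consecutive elements of a path of `G` are adjacent:
two elements are joined if they belong to one edge, or to edges that meet in a terminal.
Vertex-disjoint paths of this graph correspond to element-disjoint paths of `G`. -/
def elemGraph (G : SimpleGraph V) (T : Set V) : SimpleGraph (V ⊕ Sym2 V) where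
  Adj α β := α ≠ β ∧ ((∃ e ∈ G.edgeSet, α ∈ edgeElems T e ∧ β ∈ edgeElems T e) ∨
    ∃ t ∈ T, α ∈ elemsAt G T t ∧ β ∈ elemsAt G T t)
  symm := ⟨fun _ _ h => ⟨h.1.symm, h.2.imp (fun ⟨e, he, h⟩ => ⟨e, he, h.symm⟩)
    fun ⟨t, ht, h⟩ => ⟨t, ht, h.symm⟩⟩⟩
  loopless := ⟨fun _ h => h.1 rfl⟩

/-- The subgraph of `G` whose edges use only elements of `P`. -/
def elemSubgraph (G : SimpleGraph V) (T : Set V) (P : Set (V ⊕ Sym2 V)) : SimpleGraph V :=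
  G.deleteEdges {e | ¬ edgeElems T e ⊆ P}

@[simp]
lemma inl_mem_edgeElems {e : Sym2 V} {z : V} : Sum.inl z ∈ edgeElems T e ↔ z ∈ e ∧ z ∉ T :=
  Iff.rfl

@[simp]
lemma inr_mem_edgeElems {e f : Sym2 V} :
    Sum.inr f ∈ edgeElems T e ↔ f = e ∧ ∀ z ∈ e, z ∈ T :=
  Iff.rfl

lemma edgeElems_nonempty (T : Set V) (e : Sym2 V) : (edgeElems T e).Nonempty := by
  by_cases h : ∀ z ∈ e, z ∈ T
  · exact ⟨.inr e, rfl, h⟩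
  · push Not at h
    obtain ⟨z, hz⟩ := h
    exact ⟨.inl z, hz⟩

lemma eq_of_mem_edgeElems_of_mem {e : Sym2 V} {t : V} {α β : V ⊕ Sym2 V} (ht : t ∈ T) (hte : t ∈ e)
    (hα : α ∈ edgeElems T e) (hβ : β ∈ edgeElems T e) : α = β := by
  obtain ⟨x, rfl⟩ := hte
  rcases α with y | f <;> rcases β with z | g <;>
    simp only [inl_mem_edgeElems, inr_mem_edgeElems, Sym2.mem_iff] at hα hβ <;> grind

lemma edgeElems_subset_pair {e : Sym2 V} {α β : V ⊕ Sym2 V} (hαβ : α ≠ β)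
    (hα : α ∈ edgeElems T e) (hβ : β ∈ edgeElems T e) : edgeElems T e ⊆ {α, β} := by
  induction e with
  | _ x y =>
  rintro (z | f) hz <;> rcases α with a | a <;> rcases β with b | b <;>
    simp only [inl_mem_edgeElems, inr_mem_edgeElems, Sym2.mem_iff] at hα hβ hz <;> grind

lemma mem_elemsAt {z : V} {α : V ⊕ Sym2 V} :
    α ∈ elemsAt G T z ↔ ∃ e ∈ G.edgeSet, z ∈ e ∧ α ∈ edgeElems T e := by
  simp [elemsAt, incidenceSet, and_assoc]

lemma mem_edgeSet_elemSubgraph {e : Sym2 V} :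
    e ∈ (elemSubgraph G T P).edgeSet ↔ e ∈ G.edgeSet ∧ edgeElems T e ⊆ P := by
  simp [elemSubgraph, edgeSet_deleteEdges]

lemma elemSubgraph_le : elemSubgraph G T P ≤ G :=
  deleteEdges_le _

lemma mem_elemsAt_elemSubgraph {t : V} {α : V ⊕ Sym2 V} (ht : t ∈ T) (hαP : α ∈ P)
    (hα : α ∈ elemsAt G T t) : α ∈ elemsAt (elemSubgraph G T P) T t := by
  obtain ⟨e, he, hte, hαe⟩ := mem_elemsAt.1 hα
  refine mem_elemsAt.2 ⟨e, mem_edgeSet_elemSubgraph.2 ⟨he, fun β hβ => ?_⟩, hte, hαe⟩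
  exact eq_of_mem_edgeElems_of_mem ht hte hαe hβ ▸ hαP

lemma exists_mem_elemsAt_of_adj {α β : V ⊕ Sym2 V} (hadj : (elemGraph G T).Adj α β)
    (hα : α ∈ P) (hβ : β ∈ P) : ∃ z, α ∈ elemsAt (elemSubgraph G T P) T z ∧
      β ∈ elemsAt (elemSubgraph G T P) T z := by
  obtain ⟨hne, ⟨e, he, hαe, hβe⟩ | ⟨t, ht, hαt, hβt⟩⟩ := hadj
  · have heP : edgeElems T e ⊆ P :=
      (edgeElems_subset_pair hne hαe hβe).trans (Set.pair_subset hα hβ)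
    have he' := mem_edgeSet_elemSubgraph.2 ⟨he, heP⟩
    exact ⟨_, mem_elemsAt.2 ⟨e, he', e.out_fst_mem, hαe⟩,
      mem_elemsAt.2 ⟨e, he', e.out_fst_mem, hβe⟩⟩
  · exact ⟨t, mem_elemsAt_elemSubgraph ht hα hαt, mem_elemsAt_elemSubgraph ht hβ hβt⟩

lemma reachable_of_mem_edge {e : Sym2 V} {y z : V} (he : e ∈ H.edgeSet) (hy : y ∈ e) (hz : z ∈ e) :
    H.Reachable y z := by
  obtain ⟨x, rfl⟩ := hy
  rcases Sym2.mem_iff.1 hz with rfl | rfl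
  exacts [.rfl, Adj.reachable he]

lemma reachable_of_mem_elemsAt {y z : V} {α : V ⊕ Sym2 V} (hy : α ∈ elemsAt H T y)
    (hz : α ∈ elemsAt H T z) : H.Reachable y z := by
  obtain ⟨e, he, hye, hαe⟩ := mem_elemsAt.1 hy
  obtain ⟨f, hf, hzf, hαf⟩ := mem_elemsAt.1 hz
  rcases α with x | g
  · exact (reachable_of_mem_edge he hye hαe.1).trans (reachable_of_mem_edge hf hαf.1 hzf)
  · obtain rfl := hαe.1
    obtain rfl := hαf.1
    exact reachable_of_mem_edge he hye hzf

lemma reachable_of_walk_elemGraph {α β : V ⊕ Sym2 V} {y z : V} (w : (elemGraph G T).Walk α β)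
    (hw : ∀ γ ∈ w.support, γ ∈ P) (hα : α ∈ elemsAt (elemSubgraph G T P) T y)
    (hβ : β ∈ elemsAt (elemSubgraph G T P) T z) : (elemSubgraph G T P).Reachable y z := by
  induction w generalizing y with
  | nil => exact reachable_of_mem_elemsAt hα hβ
  | cons hadj w ih =>
    simp only [Walk.support_cons, List.mem_cons, forall_eq_or_imp] at hw
    obtain ⟨x, hx, hx'⟩ := exists_mem_elemsAt_of_adj hadj hw.1 (hw.2 _ w.start_mem_support)
    exact (reachable_of_mem_elemsAt hα hx).trans (ih hw.2 hx' hβ)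

lemma Linkage.hasElemPaths (L : Linkage (elemGraph G T) (elemsAt G T u) (elemsAt G T v) (Fin k))
    (hu : u ∈ T) (hv : v ∈ T) : HasElemPaths G T u v k := by
  have hpath (i : Fin k) : ∃ w : G.Walk u v, w.IsPath ∧
      ∀ e ∈ w.edges, edgeElems T e ⊆ {α | α ∈ (L.path i).support} := by
    obtain ⟨w, hw⟩ := (reachable_of_walk_elemGraph
      (P := {α | α ∈ (L.path i).support}) (L.path i) (fun _ => id)
      (mem_elemsAt_elemSubgraph hu (L.path i).start_mem_support (L.source_mem i))
      (mem_elemsAt_elemSubgraph hv (L.path i).end_mem_support (L.target_mem i))).exists_isPath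
    refine ⟨w.mapLe elemSubgraph_le, hw.mapLe _, fun e he => ?_⟩
    rw [Walk.edges_mapLe_eq_edges] at he
    exact (mem_edgeSet_elemSubgraph.1 (w.edges_subset_edgeSet he)).2
  choose w hw hsub using hpath
  refine ⟨w, hw, fun i j hij => ⟨fun e hi hj => ?_, fun x hi hj => ?_⟩⟩
  · obtain ⟨α, hα⟩ := edgeElems_nonempty T e
    exact hij (L.eq_of_mem_support (hsub i e hi hα) (hsub j e hj hα))
  · by_contra hx
    obtain ⟨-, hxv, hxT⟩ : x ≠ u ∧ x ≠ v ∧ x ∉ T := by simpa using hx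
    obtain ⟨e, he, hxe⟩ := (Walk.mem_support_iff_exists_mem_edges.1 hi).resolve_left hxv
    obtain ⟨f, hf, hxf⟩ := (Walk.mem_support_iff_exists_mem_edges.1 hj).resolve_left hxv
    exact hij (L.eq_of_mem_support (hsub i e he (inl_mem_edgeElems.2 ⟨hxe, hxT⟩))
      (hsub j f hf (inl_mem_edgeElems.2 ⟨hxf, hxT⟩)))

lemma mem_reachAvoiding_elemGraph {A : Set (V ⊕ Sym2 V)} {α β : V ⊕ Sym2 V}
    (hα : α ∈ reachAvoiding (elemGraph G T) A S) (hβ : β ∉ S)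
    (h : (∃ e ∈ G.edgeSet, α ∈ edgeElems T e ∧ β ∈ edgeElems T e) ∨
      ∃ t ∈ T, α ∈ elemsAt G T t ∧ β ∈ elemsAt G T t) :
    β ∈ reachAvoiding (elemGraph G T) A S := by
  rcases eq_or_ne α β with rfl | hne
  exacts [hα, mem_reachAvoiding_of_adj hα ⟨hne, h⟩ hβ]

lemma elemsAt_elemSubgraph_subset_reachAvoiding {z : V}
    (hz : (elemSubgraph G T Sᶜ).Reachable u z) :
    elemsAt (elemSubgraph G T Sᶜ) T z ⊆ reachAvoiding (elemGraph G T) (elemsAt G T u) S := by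
  rw [reachable_iff_reflTransGen] at hz
  induction hz with
  | refl =>
    intro α hα
    obtain ⟨e, he, hue, hαe⟩ := mem_elemsAt.1 hα
    rw [mem_edgeSet_elemSubgraph] at he
    exact mem_reachAvoiding_of_mem (mem_elemsAt.2 ⟨e, he.1, hue, hαe⟩) (he.2 hαe)
  | @tail y z _ hyz ih =>
    intro α hα
    obtain ⟨e, he, hze, hαe⟩ := mem_elemsAt.1 hα
    have hyz_edge : s(y, z) ∈ (elemSubgraph G T Sᶜ).edgeSet := hyz
    have hy_elem {β} (hβ : β ∈ edgeElems T s(y, z)) :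
        β ∈ reachAvoiding (elemGraph G T) (elemsAt G T u) S :=
      ih (mem_elemsAt.2 ⟨_, hyz_edge, Sym2.mem_mk_left y z, hβ⟩)
    rw [mem_edgeSet_elemSubgraph] at he hyz_edge
    by_cases hzT : z ∈ T
    · obtain ⟨β, hβ⟩ := edgeElems_nonempty T s(y, z)
      exact mem_reachAvoiding_elemGraph (hy_elem hβ) (he.2 hαe) <| .inr ⟨z, hzT,
        mem_elemsAt.2 ⟨_, hyz_edge.1, Sym2.mem_mk_right y z, hβ⟩, mem_elemsAt.2 ⟨e, he.1, hze, hαe⟩⟩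
    · exact mem_reachAvoiding_elemGraph
        (hy_elem (inl_mem_edgeElems.2 ⟨Sym2.mem_mk_right y z, hzT⟩)) (he.2 hαe)
        (.inl ⟨e, he.1, inl_mem_edgeElems.2 ⟨hze, hzT⟩, hαe⟩)

lemma exists_mem_edge_of_reachable (h : H.Reachable u v) (huv : u ≠ v) :
    ∃ e ∈ H.edgeSet, v ∈ e := by
  obtain ⟨w⟩ := h.symm
  obtain ⟨e, he, hve⟩ :=
    (Walk.mem_support_iff_exists_mem_edges.1 w.start_mem_support).resolve_left huv.symm
  exact ⟨e, w.edges_subset_edgeSet he, hve⟩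

lemma not_reachable_elemSubgraph_compl
    (hS : IsSeparator (elemGraph G T) (elemsAt G T u) (elemsAt G T v) S) (huv : u ≠ v) :
    ¬ (elemSubgraph G T Sᶜ).Reachable u v := fun h => by
  obtain ⟨e, he, hve⟩ := exists_mem_edge_of_reachable h huv
  obtain ⟨α, hα⟩ := edgeElems_nonempty T e
  exact hS.notMem_reachAvoiding
    (mem_elemsAt.2 ⟨e, (mem_edgeSet_elemSubgraph.1 he).1, hve, hα⟩)
    (elemsAt_elemSubgraph_subset_reachAvoiding h (mem_elemsAt.2 ⟨e, he, hve, hα⟩))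

lemma inl_notMem_of_reachable {z : V} (hu : u ∈ T) (hz : z ∉ T)
    (h : (elemSubgraph G T Sᶜ).Reachable u z) : Sum.inl z ∉ S := by
  obtain ⟨e, he, hze⟩ := exists_mem_edge_of_reachable h fun huz => hz (huz ▸ hu)
  exact (mem_edgeSet_elemSubgraph.1 he).2 ⟨hze, hz⟩

/-- The cut given by a separator `S` of the graph of elements: its inner side consists of the
vertices reachable from `u` without using elements of `S`. -/
def elemCutOfReachable (G : SimpleGraph V) (T : Set V) (S : Set (V ⊕ Sym2 V)) (u : V) :
    ElemCut T where
  inner := {z | (elemSubgraph G T Sᶜ).Reachable u z}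
  outer := {z | (elemSubgraph G T Sᶜ).Reachable u z} ∪ {z | z ∉ T ∧ Sum.inl z ∈ S}
  inner_subset_outer := Set.subset_union_left
  mem_inner_of_mem_outer _ hz h := h.resolve_right fun h => h.1 hz

lemma separates_elemCutOfReachable (hv : v ∈ T) (huv : u ≠ v)
    (hS : IsSeparator (elemGraph G T) (elemsAt G T u) (elemsAt G T v) S) :
    (elemCutOfReachable G T S u).Separates u v :=
  ⟨.rfl, not_or.2 ⟨not_reachable_elemSubgraph_compl hS huv, fun h => h.1 hv⟩⟩

lemma inr_mem_edgeElems_of_mem_elems_elemCutOfReachable (hu : u ∈ T) {e : Sym2 V}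
    (he : Sum.inr e ∈ (elemCutOfReachable G T S u).elems G) :
    Sum.inr e ∈ edgeElems T e ∩ S := by
  obtain ⟨heG, ⟨a, hae, ha⟩, b, hbe, hb⟩ := he
  obtain ⟨hb_reach, hbS⟩ := not_or.1 hb
  have hnot : ¬ edgeElems T e ⊆ Sᶜ := fun h => hb_reach <|
    ha.trans (reachable_of_mem_edge (mem_edgeSet_elemSubgraph.2 ⟨heG, h⟩) hae hbe)
  obtain ⟨α, hα, hαS⟩ := Set.not_subset.1 hnot
  rw [Set.notMem_compl_iff] at hαS
  rcases α with z | f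
  · exfalso
    have hzb : z ≠ b := by
      rintro rfl
      exact hbS ⟨hα.2, hαS⟩
    have hza : z ≠ a := by
      rintro rfl
      exact inl_notMem_of_reachable hu hα.2 ha hαS
    have hab : a ≠ b := fun hab => hb_reach (hab ▸ ha)
    rw [(Sym2.mem_and_mem_iff hab).1 ⟨hae, hbe⟩] at hα
    exact (Sym2.mem_iff.1 hα.1).elim hza hzb
  · obtain rfl := hα.1
    exact ⟨hα, hαS⟩

theorem exists_elemCut_of_not_hasElemPaths (hu : u ∈ T) (hv : v ∈ T) (huv : u ≠ v)
    (h : ¬ HasElemPaths G T u v k) : ∃ C : ElemCut T, C.Separates u v ∧ (C.elems G).encard < k ∧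
      ∀ e, Sum.inr e ∈ C.elems G → ∀ z ∈ e, z ∈ T := by
  obtain ⟨S, hS, hSk⟩ : ∃ S, IsSeparator (elemGraph G T) (elemsAt G T u) (elemsAt G T v) S ∧
      S.encard < k := by
    by_contra! hno
    obtain ⟨L⟩ := exists_linkage_of_le_encard_separator hno
    exact h (L.hasElemPaths hu hv)
  refine ⟨elemCutOfReachable G T S u, separates_elemCutOfReachable hv huv hS,
    (Set.encard_le_encard ?_).trans_lt hSk,
    fun e he => (inr_mem_edgeElems_of_mem_elems_elemCutOfReachable hu he).1.2⟩
  rintro (z | e) hz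
  · exact (hz.1.resolve_left hz.2).2
  · exact (inr_mem_edgeElems_of_mem_elems_elemCutOfReachable hu hz).2

end ElementMenger

section Contraction

variable {V : Type*} [DecidableEq V] {G : SimpleGraph V} {T : Set V} {p q u v : V} {k : ℕ}

/-- The vertex map of the contraction of `q` into `p`. -/
def contractMap (p q z : V) : V :=
  if z = q then p else z

lemma contractMap_of_ne {z : V} (hz : z ≠ q) : contractMap p q z = z :=
  if_neg hz

lemma contractMap_of_mem {z : V} (hq : q ∉ T) (hz : z ∈ T) : contractMap p q z = z :=
  contractMap_of_ne fun hzq => hq (hzq ▸ hz)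

lemma mapsTo_contractMap (hq : q ∉ T) : Set.MapsTo (contractMap p q) T T := fun z hz => by
  rwa [contractMap_of_mem hq hz]

lemma eq_of_contractMap_mem {z : V} (hp : p ∉ T) (hz : contractMap p q z ∈ T) :
    contractMap p q z = z := by
  refine contractMap_of_ne ?_
  rintro rfl
  exact hp (by simpa [contractMap] using hz)

lemma contractEdge_adj_contractMap {a b : V} (hab : G.Adj a b)
    (hne : contractMap p q a ≠ contractMap p q b) :
    (contractEdge G p q).Adj (contractMap p q a) (contractMap p q b) :=
  (fromRel_adj _ _ _).2 ⟨hne, .inl ⟨a, b, hab, rfl, rfl⟩⟩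

namespace ElemCut

lemma elems_comap_contractMap_subset (hp : p ∉ T) (hq : q ∉ T) (C : ElemCut T)
    (hC : ∀ e, Sum.inr e ∈ C.elems (contractEdge G p q) → ∀ z ∈ e, z ∈ T) :
    (C.comap (contractMap p q) (mapsTo_contractMap hq)).elems G ⊆
      insert (Sum.inl q) (C.elems (contractEdge G p q)) := by
  rintro (z | e) hz
  · rcases eq_or_ne z q with rfl | hzq
    · exact .inl rfl
    · refine .inr (inl_mem_elems.2 ?_)
      rw [← contractMap_of_ne (p := p) hzq]
      exact hz
  · obtain ⟨he, ⟨a, hae, ha⟩, b, hbe, hb⟩ := hz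
    have hne : contractMap p q a ≠ contractMap p q b :=
      ne_of_mem_of_not_mem (C.inner_subset_outer ha) hb
    obtain rfl := (Sym2.mem_and_mem_iff (ne_of_apply_ne _ hne)).1 ⟨hae, hbe⟩
    have hcut : Sum.inr s(contractMap p q a, contractMap p q b) ∈
        C.elems (contractEdge G p q) :=
      ⟨contractEdge_adj_contractMap he hne, ⟨_, Sym2.mem_mk_left _ _, ha⟩,
        _, Sym2.mem_mk_right _ _, hb⟩
    have haT := eq_of_contractMap_mem hp (hC _ hcut _ (Sym2.mem_mk_left _ _))
    have hbT := eq_of_contractMap_mem hp (hC _ hcut _ (Sym2.mem_mk_right _ _))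
    rw [haT, hbT] at hcut
    exact .inr hcut

/- A small cut of `G / pq` lifts to a cut of `G` of size at least `k`, so it must gain an element:
this can only be `q`, and then `p`, which has the same image, is cut as well. -/
lemma exists_of_not_hasElemPaths_contractEdge (hp : p ∉ T) (hq : q ∉ T) (hu : u ∈ T) (hv : v ∈ T)
    (hk : HasElemPaths G T u v k) (huv : u ≠ v)
    (h : ¬ HasElemPaths (contractEdge G p q) T u v k) :
    ∃ B : ElemCut T, B.Separates u v ∧ (B.elems G).encard ≤ k ∧
      ∀ z ∈ s(p, q), z ∈ B.outer ∧ z ∉ B.inner := by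
  obtain ⟨C, hC, hCk, hCT⟩ := exists_elemCut_of_not_hasElemPaths hu hv huv h
  let B := C.comap (contractMap p q) (mapsTo_contractMap hq)
  have hB : B.Separates u v := by
    change contractMap p q u ∈ C.inner ∧ contractMap p q v ∉ C.outer
    rwa [contractMap_of_mem hq hu, contractMap_of_mem hq hv]
  have hsub : B.elems G ⊆ insert (Sum.inl q) (C.elems (contractEdge G p q)) :=
    elems_comap_contractMap_subset hp hq C hCT
  have hqB : Sum.inl q ∈ B.elems G := by
    by_contra hqB
    exact (hB.le_encard_elems hk).not_gt <|
      (Set.encard_le_encard ((Set.subset_insert_iff_of_notMem hqB).1 hsub)).trans_lt hCk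
  have hpq : contractMap p q p = contractMap p q q := by simp [contractMap]
  have hpB : Sum.inl p ∈ B.elems G := by
    change contractMap p q p ∈ C.outer \ C.inner
    rw [hpq]
    exact hqB
  refine ⟨B, hB, (Set.encard_le_encard hsub).trans
    ((Set.encard_insert_le _ _).trans (Order.add_one_le_of_lt hCk)), fun z hz => ?_⟩
  rcases Sym2.mem_iff.1 hz with rfl | rfl
  exacts [hpB, hqB]

end ElemCut

end Contraction

theorem global_reduction_general {V : Type*} [DecidableEq V] {G : SimpleGraph V} {T : Set V}
    {k : ℕ} {p q : V} (hp : p ∉ T) (hq : q ∉ T)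
    (hk : ∀ u ∈ T, ∀ v ∈ T, u ≠ v → HasElemPaths G T u v k) :
    (∀ u ∈ T, ∀ v ∈ T, u ≠ v → HasElemPaths (G.deleteEdges {s(p, q)}) T u v k) ∨
    (∀ u ∈ T, ∀ v ∈ T, u ≠ v → HasElemPaths (contractEdge G p q) T u v k) := by
  by_contra! h
  obtain ⟨⟨s, hs, t, ht, hst, hdel⟩, x, hx, y, hy, hxy, hcon⟩ := h
  obtain ⟨A, hA, hAk, -⟩ := exists_elemCut_of_not_hasElemPaths hs ht hst hdel
  obtain ⟨B, hB, hBk, hpqB⟩ :=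
    ElemCut.exists_of_not_hasElemPaths_contractEdge hp hq hx hy (hk x hx y hy hxy) hxy hcon
  obtain ⟨u, hu, v, hv, hAuv, hBuv | hBvu⟩ :=
    ElemCut.exists_separates_and_separates_or hs ht hx hy hA hB
  · exact (ElemCut.le_encard_elems_deleteEdges (hk u hu v hv hAuv.ne) hAuv hBuv hBk hpqB).not_gt hAk
  · exact (ElemCut.le_encard_elems_deleteEdges (hk u hu v hv hAuv.ne) hAuv hBvu.compl
      (by rwa [ElemCut.elems_compl]) fun z hz => (hpqB z hz).symm.imp_right not_not.2).not_gt hAk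

/-- **Global element-connectivity reduction (Hind–Oellermann).** If every pair of
terminals is `k`-element-connected in `G` and `pq` is an edge between non-terminals,
then deleting `pq` or contracting `pq` keeps every pair of terminals
`k`-element-connected. -/
theorem global_reduction {V : Type*} [Fintype V] [DecidableEq V]
    (G : SimpleGraph V) (T : Set V) (k : ℕ) (p q : V)
    (hp : p ∉ T) (hq : q ∉ T) (hpq : G.Adj p q)
    (hk : ∀ u ∈ T, ∀ v ∈ T, u ≠ v → k ≤ elemConn G T u v) :
    (∀ u ∈ T, ∀ v ∈ T, u ≠ v → k ≤ elemConn (G.deleteEdges {s(p, q)}) T u v) ∨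
    (∀ u ∈ T, ∀ v ∈ T, u ≠ v → k ≤ elemConn (contractEdge G p q) T u v) :=
  (global_reduction_general hp hq fun u hu v hv h => (le_elemConn_iff h).1 (hk u hu v hv h)).imp
    (fun hdel u hu v hv h => (le_elemConn_iff h).2 (hdel u hu v hv h))
    (fun hcon u hu v hv h => (le_elemConn_iff h).2 (hcon u hu v hv h))
end

section
/- Let G=(V,E) be an undirected graph with disjoint terminal groups T₁,…,T_m such that κ'_G(T_i) ≥ k for every i, let T = ⋃_i T_i with |T| ≥ 2, and assume m ≥ 2. Then G contains at least k/(12 · log₂|T| · log₂ m) pairwise element-disjoint Steiner forests (for m = 1, G contains at least k/(6 log₂|T|) pairwise element-disjoint Steiner trees spanning T). -/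
/-!
Subdividing the edges between terminals, we may assume that terminals are pairwise non-adjacent.
By the reduction of Hind and Oellermann, an edge between two non-terminals can be deleted or
contracted without lowering the element connectivity of any group below `k`. What remains is a
hypergraph on the terminals: its hyperedges are the neighbourhoods of the contracted connected
sets of non-terminals, every cut separating a group has at least `k` hyperedges, and disjoint sets
of hyperedges yield element-disjoint subgraphs.

If all cuts of a hypergraph on at most `n` vertices have at least `δ > 6 d log₂ n` hyperedges,
then a random partition of the hyperedges into `2 d` blocks contains more than `d` blocks that
connect the vertices: each hyperedge added at random reduces the expected excess of the number of
components over one by the factor `1 - δ / (2 M)`, where `M` is the number of hyperedges.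

In general some cuts may be small, but a cut with fewer than `k` hyperedges separates no group.
Passing repeatedly to the side with fewer groups, one finds in at most `log₂ m + 1` steps, each
increasing the boundary by at most about `k / (log₂ m + 1)`, a subfamily of groups whose union is
well connected by the hyperedges inside it. These are packed at random; the union is then
contracted to a single non-terminal, the reduction is applied again, and the argument recurses on
the remaining groups.
-/

open SimpleGraph

/-- Two subgraphs, given as graphs on the same vertex set, are *element-disjoint* with
respect to the terminal set `T`: they share no edges and no non-terminal vertices. -/
def EDisj {V : Type*} (T : Set V) (H₁ H₂ : SimpleGraph V) : Prop :=
  Disjoint H₁.edgeSet H₂.edgeSet ∧ ∀ x, x ∈ H₁.support → x ∈ H₂.support → x ∈ T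

/-- `H` is a Steiner tree of `G` for the terminal set `T`: a tree subgraph of `G`
containing all the terminals. -/
def IsSteinerTree {V : Type*} (G : SimpleGraph V) (T : Set V) (H : SimpleGraph V) : Prop :=
  H ≤ G ∧ H.IsAcyclic ∧
    ∀ x ∈ H.support ∪ T, ∀ y ∈ H.support ∪ T, H.Reachable x y

/-- `H` is a Steiner forest of `G` for the terminal groups `T i`: a forest subgraph of
`G` in which each group lies entirely within a single tree of the forest. -/
def IsSteinerForest {V : Type*} {m : ℕ} (G : SimpleGraph V) (T : Fin m → Set V)
    (H : SimpleGraph V) : Prop :=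
  H ≤ G ∧ H.IsAcyclic ∧ ∀ i, ∀ u ∈ T i, ∀ v ∈ T i, H.Reachable u v

namespace SteinerForest

/-! ### Reduction of element connectivity to hypergraph edge connectivity -/

section Crossing

variable {X : Type*} {P Q S : Set X}

/-- `P` crosses `S` if it meets both `S` and the complement of `S`, that is, if the bipartition
`{S, Sᶜ}` separates `P`. -/
def Crosses (P S : Set X) : Prop := (P ∩ S).Nonempty ∧ (P \ S).Nonempty

theorem Crosses.mono (h : Crosses P S) (hPQ : P ⊆ Q) : Crosses Q S :=
  ⟨h.1.mono (Set.inter_subset_inter_left S hPQ), h.2.mono (Set.sdiff_subset_sdiff_left hPQ)⟩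

theorem crosses_compl : Crosses P Sᶜ ↔ Crosses P S := by
  simp only [Crosses, Set.sdiff_compl, ← Set.sdiff_eq_compl_inter, Set.inter_comm P Sᶜ]
  exact and_comm

theorem not_crosses_iff : ¬ Crosses P S ↔ P ⊆ S ∨ Disjoint P S := by
  rw [Crosses, not_and_or, Set.not_nonempty_iff_eq_empty, Set.not_nonempty_iff_eq_empty,
    Set.sdiff_eq_empty, ← Set.disjoint_iff_inter_eq_empty, or_comm]

end Crossing

/-- The hyperedges of the hypergraph `N` crossing `S`, i.e. the edge boundary of `S`. -/
def cut {E X : Type*} (N : E → Set X) (S : Set X) : Set E := {e | Crosses (N e) S}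

/-- A family of vertex sets is uncrossable if any two members can be replaced by their
intersection and union, or else by their two differences, within the family up to complement. -/
def IsUncrossable {X : Type*} (𝒮 : Set (Set X)) : Prop :=
  ∀ S₁ ∈ 𝒮, ∀ S₂ ∈ 𝒮,
    (S₁ ∩ S₂ ∈ 𝒮 ∧ S₁ ∪ S₂ ∈ 𝒮) ∨ (S₁ ∩ S₂ᶜ ∈ 𝒮 ∧ S₁ ∪ S₂ᶜ ∈ 𝒮)

/-- A graph presented with its terminals set apart: `inner` is the graph induced on the set `E`
of non-terminals, and `nbr e` is the set of terminals (in `X`) adjacent to the non-terminal `e`.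
Terminals are pairwise non-adjacent. -/
structure TerminalGraph (E X : Type*) where
  inner : SimpleGraph E
  nbr : E → Set X

namespace TerminalGraph

variable {E E' X : Type*} {K : TerminalGraph E X} {S S₁ S₂ : Set X} {A D A₁ D₁ A₂ D₂ : Set E}
  {𝒮 : Set (Set X)} {k : ℕ} {p q : E}

/-- A mixed cut of `K`: the vertices in `S ∪ A` are on one side and those outside `S ∪ D` on the
other. Only non-terminals, namely those of `D \ A`, are removed. -/
structure IsCut (K : TerminalGraph E X) (S : Set X) (A D : Set E) : Prop where
  subset : A ⊆ D
  nbr_subset : ∀ e ∈ A, K.nbr e ⊆ S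
  disjoint_nbr : ∀ e ∉ D, Disjoint (K.nbr e) S
  mem_of_adj : ∀ e f, K.inner.Adj e f → e ∈ A → f ∈ D

theorem IsCut.compl (h : K.IsCut S A D) : K.IsCut Sᶜ Dᶜ Aᶜ where
  subset := Set.compl_subset_compl.2 h.subset
  nbr_subset e he := (h.disjoint_nbr e he).subset_compl_right
  disjoint_nbr e he := (Set.disjoint_compl_right_iff_subset).2 (h.nbr_subset e (not_not.1 he))
  mem_of_adj e f hef he hf := he (h.mem_of_adj f e hef.symm hf)

/-- Element connectivity with respect to a family of terminal bipartitions: separating the two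
sides of any `S ∈ 𝒮` requires the removal of at least `k` non-terminals. -/
def ElemConnected (K : TerminalGraph E X) (𝒮 : Set (Set X)) (k : ℕ) : Prop :=
  ∀ S ∈ 𝒮, ∀ A D, K.IsCut S A D → k ≤ (D \ A).ncard

/-- Deletion of the inner edge joining `p` and `q`. -/
def deleteEdge (K : TerminalGraph E X) (p q : E) : TerminalGraph E X where
  inner := K.inner.deleteEdges {s(p, q)}
  nbr := K.nbr

/-- Identification of the non-terminals in each fibre of `f`. -/
def contract (K : TerminalGraph E X) (f : E → E') : TerminalGraph E' X where
  inner := K.inner.map f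
  nbr x := ⋃ e ∈ f ⁻¹' {x}, K.nbr e

theorem nbr_subset_nbr_contract (K : TerminalGraph E X) (f : E → E') (e : E) :
    K.nbr e ⊆ (K.contract f).nbr (f e) :=
  Set.subset_biUnion_of_mem (u := K.nbr) (s := f ⁻¹' {f e}) rfl

theorem nbr_contract_comp {E'' : Type*} (K : TerminalGraph E X) (f : E → E') (g : E' → E'') :
    (K.contract (g ∘ f)).nbr = ((K.contract f).contract g).nbr := by
  ext x
  simp [contract]

theorem IsCut.of_contract {f : E → E'} {A D : Set E'} (h : (K.contract f).IsCut S A D) :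
    K.IsCut S (f ⁻¹' A) (f ⁻¹' D) where
  subset := Set.preimage_mono h.subset
  nbr_subset e he := (K.nbr_subset_nbr_contract f e).trans (h.nbr_subset (f e) he)
  disjoint_nbr e he := (h.disjoint_nbr (f e) he).mono_left (K.nbr_subset_nbr_contract f e)
  mem_of_adj e g heg he := by
    by_cases hfe : f e = f g
    · exact h.subset (hfe ▸ he)
    · exact h.mem_of_adj (f e) (f g) ((map_adj' ..).2 ⟨hfe, e, g, heg, rfl, rfl⟩) he

theorem IsCut.inter (h₁ : (K.deleteEdge p q).IsCut S₁ A₁ D₁) (h₂ : K.IsCut S₂ A₂ D₂)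
    (hp : p ∉ A₂) (hq : q ∉ A₂) : K.IsCut (S₁ ∩ S₂) (A₁ ∩ A₂) (D₁ ∩ D₂) where
  subset := Set.inter_subset_inter h₁.subset h₂.subset
  nbr_subset e he := Set.subset_inter (h₁.nbr_subset e he.1) (h₂.nbr_subset e he.2)
  disjoint_nbr e he := by
    obtain he | he := not_and_or.1 he
    · exact (h₁.disjoint_nbr e he).mono_right Set.inter_subset_left
    · exact (h₂.disjoint_nbr e he).mono_right Set.inter_subset_right
  mem_of_adj e f hef he := by
    refine ⟨h₁.mem_of_adj e f ((deleteEdges_adj ..).2 ⟨hef, ?_⟩) he.1, h₂.mem_of_adj e f hef he.2⟩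
    rw [Set.mem_singleton_iff, Sym2.eq_iff]
    rintro (⟨rfl, -⟩ | ⟨rfl, -⟩)
    exacts [hp he.2, hq he.2]

theorem IsCut.union (h₁ : (K.deleteEdge p q).IsCut S₁ A₁ D₁) (h₂ : K.IsCut S₂ A₂ D₂)
    (hp : p ∈ D₂) (hq : q ∈ D₂) : K.IsCut (S₁ ∪ S₂) (A₁ ∪ A₂) (D₁ ∪ D₂) := by
  simpa [Set.compl_inter] using
    (h₁.compl.inter h₂.compl (not_not.2 hp) (not_not.2 hq)).compl

theorem ncard_boundary_inter_add_union_le [Finite E] (h₁ : A₁ ⊆ D₁) (h₂ : A₂ ⊆ D₂) :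
    ((D₁ ∩ D₂) \ (A₁ ∩ A₂)).ncard + ((D₁ ∪ D₂) \ (A₁ ∪ A₂)).ncard ≤
      (D₁ \ A₁).ncard + (D₂ \ A₂).ncard := by
  rw [← Set.ncard_union_add_ncard_inter, ← Set.ncard_union_add_ncard_inter (D₁ \ A₁)]
  refine add_le_add (Set.ncard_le_ncard ?_) (Set.ncard_le_ncard ?_) <;> intro e <;>
    have := @h₁ e <;> have := @h₂ e <;>
    simp only [Set.mem_union, Set.mem_inter_iff, Set.mem_sdiff] <;> tauto

theorem ncard_boundary_add_ncard_boundary_ge [Finite E] (hK : K.ElemConnected 𝒮 k)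
    (h₁ : (K.deleteEdge p q).IsCut S₁ A₁ D₁) (h₂ : K.IsCut S₂ A₂ D₂)
    (hp : p ∈ D₂ \ A₂) (hq : q ∈ D₂ \ A₂) (hi : S₁ ∩ S₂ ∈ 𝒮) (hu : S₁ ∪ S₂ ∈ 𝒮) :
    2 * k ≤ (D₁ \ A₁).ncard + (D₂ \ A₂).ncard := by
  have inter_ge := hK _ hi _ _ (h₁.inter h₂ hp.2 hq.2)
  have union_ge := hK _ hu _ _ (h₁.union h₂ hp.1 hq.1)
  have := ncard_boundary_inter_add_union_le h₁.subset h₂.subset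
  omega

theorem exists_tight_cut_of_not_contract [Finite E] (hK : K.ElemConnected 𝒮 k)
    [DecidableEq E]
    (hcontract : ¬ (K.contract (Function.update id q p)).ElemConnected 𝒮 k) :
    ∃ S ∈ 𝒮, ∃ A D, K.IsCut S A D ∧ p ∈ D \ A ∧ q ∈ D \ A ∧ (D \ A).ncard ≤ k := by
  set π : E → E := Function.update id q p
  have hπq : π q = p := Function.update_self ..
  have hπ : ∀ e, e ≠ q → π e = e := fun e he => Function.update_of_ne he ..
  simp only [ElemConnected, not_forall, not_le] at hcontract
  obtain ⟨S, hS, A, D, hAD, hlt⟩ := hcontract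
  have hge := hK S hS _ _ hAD.of_contract
  rw [← Set.preimage_sdiff] at hge
  have hp : p ∈ D \ A := by
    by_contra hp
    refine (hge.trans (Set.ncard_le_ncard fun e he => ?_)).not_gt hlt
    have heq : e ≠ q := by rintro rfl; exact hp (hπq ▸ he)
    exact hπ e heq ▸ he
  have hsub : π ⁻¹' (D \ A) ⊆ insert q (D \ A) := fun e he => by
    obtain rfl | heq := eq_or_ne e q
    · exact Set.mem_insert ..
    · exact .inr (hπ e heq ▸ he)
  have hπp : π p = p := by
    obtain rfl | hpq := eq_or_ne p q
    exacts [hπq, hπ p hpq]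
  refine ⟨S, hS, _, _, hAD.of_contract, ?_, ?_, ?_⟩
  · rwa [← Set.preimage_sdiff, Set.mem_preimage, hπp]
  · rwa [← Set.preimage_sdiff, Set.mem_preimage, hπq]
  · rw [← Set.preimage_sdiff]
    have := (Set.ncard_le_ncard hsub).trans (Set.ncard_insert_le ..)
    omega

-- Hind and Oellermann's reduction, in the form used by Chekuri and Korula.
theorem ElemConnected.deleteEdge_or_contract [Finite E] [DecidableEq E]
    (hK : K.ElemConnected 𝒮 k) (h𝒮 : IsUncrossable 𝒮) (p q : E) :
    (K.deleteEdge p q).ElemConnected 𝒮 k ∨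
      (K.contract (Function.update id q p)).ElemConnected 𝒮 k := by
  by_contra! h
  obtain ⟨S₂, hS₂, A₂, D₂, h₂, hp, hq, hle⟩ := exists_tight_cut_of_not_contract hK h.2
  have hdelete := h.1
  simp only [ElemConnected, not_forall, not_le] at hdelete
  obtain ⟨S₁, hS₁, A₁, D₁, h₁, hlt⟩ := hdelete
  obtain ⟨hi, hu⟩ | ⟨hi, hu⟩ := h𝒮 S₁ hS₁ S₂ hS₂
  · have := ncard_boundary_add_ncard_boundary_ge hK h₁ h₂ hp hq hi hu
    omega
  · have boundary_compl : A₂ᶜ \ D₂ᶜ = D₂ \ A₂ := compl_sdiff_compl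
    have := ncard_boundary_add_ncard_boundary_ge hK h₁ h₂.compl
      (boundary_compl ▸ hp) (boundary_compl ▸ hq) hi hu
    rw [boundary_compl] at this
    omega

theorem reachable_preimage_of_reachable_map {H : SimpleGraph E} {f : E → E'}
    (hf : ∀ x, (H.induce (f ⁻¹' {x})).Preconnected) {B : Set E'} {x y : B}
    (hxy : ((H.map f).induce B).Reachable x y) (a b : f ⁻¹' B) (ha : f a = x) (hb : f b = y) :
    (H.induce (f ⁻¹' B)).Reachable a b := by
  have within_fibre : ∀ a b : f ⁻¹' B, f a = f b → (H.induce (f ⁻¹' B)).Reachable a b := by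
    intro a b hab
    have hsub : f ⁻¹' {f b} ⊆ f ⁻¹' B := Set.preimage_mono (Set.singleton_subset_iff.2 b.2)
    exact (hf (f b) ⟨a, hab⟩ ⟨b, rfl⟩).map (H.induceHomOfLE hsub).toHom
  obtain ⟨w⟩ := hxy
  induction w generalizing a with
  | nil => exact within_fibre a b (ha.trans hb.symm)
  | @cons x z _ hxz _ ih =>
    obtain ⟨-, a', c, hac, ha', hc⟩ := (map_adj' ..).1 hxz
    have ha'B : a' ∈ f ⁻¹' B := by rw [Set.mem_preimage, ha']; exact x.2
    have hcB : c ∈ f ⁻¹' B := by rw [Set.mem_preimage, hc]; exact z.2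
    have hadj : (H.induce (f ⁻¹' B)).Adj ⟨a', ha'B⟩ ⟨c, hcB⟩ := hac
    exact (within_fibre a ⟨a', ha'B⟩ (ha.trans ha'.symm)).trans
      (hadj.reachable.trans (ih ⟨c, hcB⟩ hc hb))

theorem preconnected_induce_preimage_of_map {H : SimpleGraph E} {f : E → E'}
    (hf : ∀ x, (H.induce (f ⁻¹' {x})).Preconnected) {B : Set E'}
    (hB : ((H.map f).induce B).Preconnected) : (H.induce (f ⁻¹' B)).Preconnected :=
  fun a b => reachable_preimage_of_reachable_map hf (hB ⟨f a, a.2⟩ ⟨f b, b.2⟩) a b rfl rfl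

theorem preconnected_fibre_update [DecidableEq E] {H : SimpleGraph E} (hpq : H.Adj p q) (x : E) :
    (H.induce (Function.update id q p ⁻¹' {x})).Preconnected := by
  obtain rfl | hx := eq_or_ne x p
  · have : Function.update id q x ⁻¹' {x} = {x, q} := by
      ext e; obtain rfl | he := eq_or_ne e q <;> simp [*]
    exact this ▸ (induce_pair_connected_of_adj hpq).preconnected
  · have hsub : (Function.update id q p ⁻¹' {x}).Subsingleton := by
      refine Set.subsingleton_singleton (a := x) |>.anti fun e he => ?_
      obtain rfl | heq := eq_or_ne e q
      · simp [hx.symm] at he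
      · simpa [heq] using he
    have := hsub.coe_sort
    exact .of_subsingleton

theorem ncard_edgeSet_map_lt [Finite E] {H : SimpleGraph E} {f : E → E'} (hpq : H.Adj p q)
    (hf : f p = f q) : (H.map f).edgeSet.ncard < H.edgeSet.ncard := by
  have hsub : (H.map f).edgeSet ⊆ Sym2.map f '' (H.edgeSet \ {s(p, q)}) := by
    rintro ⟨x, y⟩ hxy
    obtain ⟨hne, a, b, hab, rfl, rfl⟩ := (map_adj' ..).1 hxy
    refine ⟨s(a, b), ⟨hab, fun heq => hne ?_⟩, rfl⟩
    obtain ⟨rfl, rfl⟩ | ⟨rfl, rfl⟩ := Sym2.eq_iff.1 heq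
    exacts [hf, hf.symm]
  exact (Set.ncard_le_ncard hsub).trans_lt
    ((Set.ncard_image_le).trans_lt (Set.ncard_sdiff_singleton_lt_of_mem hpq))

theorem ElemConnected.le_ncard_cut (hK : K.ElemConnected 𝒮 k) (hinner : K.inner = ⊥)
    (hS : S ∈ 𝒮) : k ≤ (cut K.nbr S).ncard := by
  have hcut : K.IsCut S {e | K.nbr e ⊆ S} ({e | K.nbr e ⊆ S} ∪ cut K.nbr S) := {
    subset := Set.subset_union_left
    nbr_subset e he := he
    disjoint_nbr e he := by
      obtain ⟨hsub, hcross⟩ := not_or.1 he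
      exact (not_crosses_iff.1 hcross).resolve_left hsub
    mem_of_adj e f hef := by simp [hinner] at hef }
  refine (hK S hS _ _ hcut).trans_eq (congrArg Set.ncard ?_)
  refine Set.union_sdiff_cancel_left ?_
  exact fun e ⟨hsub, hcross⟩ => not_crosses_iff.2 (.inl hsub) hcross

theorem ElemConnected.exists_contract [Finite E] (hK : K.ElemConnected 𝒮 k)
    (h𝒮 : IsUncrossable 𝒮) :
    ∃ π : E → E, (∀ x, (K.inner.induce (π ⁻¹' {x})).Preconnected) ∧
      ∀ S ∈ 𝒮, k ≤ (cut (K.contract π).nbr S).ncard := by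
  classical
  induction hn : K.inner.edgeSet.ncard using Nat.strong_induction_on generalizing K with
  | _ n ih =>
  by_cases hinner : K.inner = ⊥
  · refine ⟨id, fun x => ?_, fun S hS => ?_⟩
    · rw [Set.preimage_id]; exact .of_subsingleton
    · have : (K.contract id).nbr = K.nbr := by ext; simp [contract]
      exact this ▸ hK.le_ncard_cut hinner hS
  obtain ⟨p, q, hpq⟩ := ne_bot_iff_exists_adj.1 hinner
  subst hn
  obtain hdelete | hcontract := hK.deleteEdge_or_contract h𝒮 p q
  · have hlt : (K.deleteEdge p q).inner.edgeSet.ncard < K.inner.edgeSet.ncard := by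
      rw [deleteEdge, edgeSet_deleteEdges]
      exact Set.ncard_sdiff_singleton_lt_of_mem hpq
    obtain ⟨π, hπ, hcut⟩ := ih _ hlt hdelete rfl
    exact ⟨π, fun x => (hπ x).mono (comap_monotone _ (deleteEdges_le _)), hcut⟩
  · have hlt := ncard_edgeSet_map_lt hpq (f := Function.update id q p) (by simp [hpq.ne])
    obtain ⟨π, hπ, hcut⟩ := ih _ hlt hcontract rfl
    refine ⟨π ∘ Function.update id q p, fun x => ?_, nbr_contract_comp K _ π ▸ hcut⟩
    exact preconnected_induce_preimage_of_map (preconnected_fibre_update hpq) (hπ x)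

end TerminalGraph

/-! ### Random packings in a well-connected hypergraph -/

section Components

variable {E X : Type*} {N : E → Set X} {F F' : Set E} {P P' S : Set X} {e : E}

/-- The hyperedges in `F` connect `P`: there is no bipartition separating `P` that is respected
by all hyperedges of `F`. -/
def Connects (N : E → Set X) (F : Set E) (P : Set X) : Prop :=
  ∀ S, Crosses P S → ∃ e ∈ F, Crosses (N e) S

theorem Connects.mono (h : Connects N F P) (hF : F ⊆ F') (hP : P' ⊆ P) : Connects N F' P' :=
  fun S hS => let ⟨e, he, hcross⟩ := h S (hS.mono hP); ⟨e, hF he, hcross⟩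

/-- The 2-section of the hypergraph with hyperedge set `F`: distinct vertices are adjacent when
some hyperedge of `F` contains both. -/
def twoSection (N : E → Set X) (F : Set E) : SimpleGraph X where
  Adj x y := x ≠ y ∧ ∃ e ∈ F, x ∈ N e ∧ y ∈ N e
  symm := ⟨fun _ _ ⟨hne, e, he, hx, hy⟩ => ⟨hne.symm, e, he, hy, hx⟩⟩
  loopless := ⟨fun _ h => h.1 rfl⟩

theorem twoSection_mono (h : F ⊆ F') : twoSection N F ≤ twoSection N F' :=
  fun _ _ ⟨hne, e, he, hxy⟩ => ⟨hne, e, h he, hxy⟩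

theorem reachable_twoSection (he : e ∈ F) {x y : X} (hx : x ∈ N e) (hy : y ∈ N e) :
    (twoSection N F).Reachable x y := by
  obtain rfl | hne := eq_or_ne x y
  · rfl
  · exact Adj.reachable ⟨hne, e, he, hx, hy⟩

/-- The number of connected components of the hypergraph with hyperedge set `F`. -/
noncomputable def numComponents (N : E → Set X) (F : Set E) : ℕ :=
  Nat.card (twoSection N F).ConnectedComponent

theorem numComponents_antitone [Finite X] : Antitone (numComponents N) := fun _ _ h =>
  Nat.card_le_card_of_surjective _
    (ConnectedComponent.surjective_map_ofLE (twoSection_mono (N := N) h))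

theorem numComponents_pos [Finite X] [Nonempty X] : 0 < numComponents N F :=
  Nat.card_pos

theorem numComponents_le_card [Finite X] : numComponents N F ≤ Nat.card X :=
  Nat.card_le_card_of_surjective (twoSection N F).connectedComponentMk Quot.mk_surjective

theorem connects_univ_of_numComponents_le_one [Finite X] (h : numComponents N F ≤ 1) :
    Connects N F Set.univ := by
  rintro S ⟨⟨x, -, hx⟩, ⟨y, -, hy⟩⟩
  have := Finite.card_le_one_iff_subsingleton.1 h
  obtain ⟨w⟩ := ConnectedComponent.exact (Subsingleton.elim
    ((twoSection N F).connectedComponentMk x) ((twoSection N F).connectedComponentMk y))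
  obtain ⟨d, -, hfst, hsnd⟩ := w.exists_boundary_dart S hx hy
  obtain ⟨-, e, he, hfe, hse⟩ := d.adj
  exact ⟨e, he, ⟨_, hfe, hfst⟩, ⟨_, hse, hsnd⟩⟩

theorem crosses_univ_supp (h : 2 ≤ numComponents N F) (C : (twoSection N F).ConnectedComponent) :
    Crosses Set.univ C.supp := by
  obtain ⟨D, hD⟩ : ∃ D, D ≠ C := by
    have := Nat.finite_of_card_ne_zero (α := (twoSection N F).ConnectedComponent)
      (by rw [numComponents] at h; omega)
    have := Finite.one_lt_card_iff_nontrivial.1 h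
    exact exists_ne C
  obtain ⟨x, hx⟩ := C.nonempty_supp
  obtain ⟨y, hy⟩ := D.nonempty_supp
  exact ⟨⟨x, trivial, hx⟩, ⟨y, trivial, fun hyC => hD (hy.symm.trans hyC)⟩⟩

/-- The components of the hypergraph with hyperedge set `F` that `e` joins to others. -/
def crossedComponents (N : E → Set X) (F : Set E) (e : E) :
    Set (twoSection N F).ConnectedComponent :=
  {C | Crosses (N e) C.supp}

theorem one_lt_ncard_crossedComponents [Finite X] (h : (crossedComponents N F e).Nonempty) :
    1 < (crossedComponents N F e).ncard := by
  obtain ⟨C, hC⟩ := h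
  obtain ⟨⟨x, hx, hxC⟩, ⟨y, hy, hyC⟩⟩ := id hC
  have hCy : C ≠ (twoSection N F).connectedComponentMk y := fun h => hyC h.symm
  refine (Set.one_lt_ncard).2 ⟨C, hC, _, ⟨⟨y, hy, rfl⟩, x, hx, fun hxy => ?_⟩, hCy⟩
  exact hCy (hxC.symm.trans hxy)

theorem map_eq_of_mem_crossedComponents {C D : (twoSection N F).ConnectedComponent}
    (hC : C ∈ crossedComponents N F e) (hD : D ∈ crossedComponents N F e) :
    C.map (.ofLE (twoSection_mono (N := N) (Set.subset_insert e F))) =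
      D.map (.ofLE (twoSection_mono (Set.subset_insert e F))) := by
  obtain ⟨⟨x, hx, rfl⟩, -⟩ := hC
  obtain ⟨⟨y, hy, rfl⟩, -⟩ := hD
  exact ConnectedComponent.sound (reachable_twoSection (Set.mem_insert e F) hx hy)

-- The crossed components merge into one, and since a crossing hyperedge meets at least two
-- components, their number is at most twice the drop in the number of components.
theorem ncard_crossedComponents_add_le [Finite X] (N : E → Set X) (F : Set E) (e : E) :
    (crossedComponents N F e).ncard + 2 * numComponents N (insert e F) ≤
      2 * numComponents N F := by
  obtain hempty | hne := (crossedComponents N F e).eq_empty_or_nonempty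
  · rw [hempty, Set.ncard_empty, zero_add]
    exact Nat.mul_le_mul_left 2 (numComponents_antitone (Set.subset_insert e F))
  have one_lt := one_lt_ncard_crossedComponents hne
  obtain ⟨C, hC⟩ := hne
  set D := crossedComponents N F e
  set f : (twoSection N F).ConnectedComponent → (twoSection N (insert e F)).ConnectedComponent :=
    ConnectedComponent.map (.ofLE (twoSection_mono (Set.subset_insert e F)))
  have hsurj : f '' insert C Dᶜ = Set.univ := by
    refine Set.eq_univ_of_forall fun B => ?_
    obtain ⟨B, rfl⟩ := ConnectedComponent.surjective_map_ofLE
      (twoSection_mono (N := N) (Set.subset_insert e F)) B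
    by_cases hB : B ∈ D
    · exact ⟨C, .inl rfl, map_eq_of_mem_crossedComponents hC hB⟩
    · exact ⟨B, .inr hB, rfl⟩
  have hle : numComponents N (insert e F) ≤ Dᶜ.ncard + 1 := by
    rw [numComponents, ← Set.ncard_univ, ← hsurj]
    exact (Set.ncard_image_le).trans (Set.ncard_insert_le ..)
  have hcompl : D.ncard + Dᶜ.ncard = numComponents N F := Set.ncard_add_ncard_compl D
  omega

theorem sum_ncard_setOf_comm {α β : Type*} [Fintype α] [Fintype β] (r : α → β → Prop) :
    ∑ a, {b | r a b}.ncard = ∑ b, {a | r a b}.ncard := by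
  classical
  simp only [Set.ncard_eq_toFinset_card', Set.toFinset_ofPred]
  exact Finset.sum_card_bipartiteAbove_eq_sum_card_bipartiteBelow r

theorem mul_numComponents_le_sum_crossedComponents [Fintype E] [Finite X] {δ : ℕ}
    (hcut : ∀ S, Crosses Set.univ S → δ ≤ (cut N S).ncard) (hF : 2 ≤ numComponents N F) :
    numComponents N F * δ ≤ ∑ e, (crossedComponents N F e).ncard := by
  have := Fintype.ofFinite (twoSection N F).ConnectedComponent
  calc numComponents N F * δ
      = ∑ _C : (twoSection N F).ConnectedComponent, δ := by
        simp [numComponents, Nat.card_eq_fintype_card]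
    _ ≤ ∑ C : (twoSection N F).ConnectedComponent, (cut N C.supp).ncard :=
        Finset.sum_le_sum fun C _ => hcut _ (crosses_univ_supp hF C)
    _ = ∑ e, (crossedComponents N F e).ncard :=
        sum_ncard_setOf_comm fun (C : (twoSection N F).ConnectedComponent) e =>
          Crosses (N e) C.supp

/-- The number of components in excess of one. -/
noncomputable def excess (N : E → Set X) (F : Set E) : ℝ := numComponents N F - 1

theorem excess_antitone [Finite X] : Antitone (excess N) := fun _ _ h =>
  sub_le_sub_right (Nat.cast_le.2 (numComponents_antitone h)) 1

theorem excess_nonneg [Finite X] [Nonempty X] : 0 ≤ excess N F :=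
  sub_nonneg.2 (Nat.one_le_cast.2 numComponents_pos)

theorem connects_univ_of_excess_lt_one [Finite X] (h : excess N F < 1) :
    Connects N F Set.univ := by
  refine connects_univ_of_numComponents_le_one (Nat.lt_succ_iff.1 ?_)
  rw [excess, sub_lt_iff_lt_add, one_add_one_eq_two] at h
  exact_mod_cast h

theorem sum_excess_insert_le [Fintype E] [Finite X] [Nonempty X] {δ : ℕ}
    (hcut : ∀ S, Crosses Set.univ S → δ ≤ (cut N S).ncard) (F : Set E) :
    ∑ e, excess N (insert e F) ≤ (Fintype.card E - δ / 2) * excess N F := by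
  obtain hF | hF := lt_or_ge (numComponents N F) 2
  · have hone : numComponents N F = 1 := by have := numComponents_pos (N := N) (F := F); omega
    have hzero : excess N F = 0 := by simp [excess, hone]
    rw [hzero, mul_zero]
    exact Finset.sum_nonpos fun e _ => (excess_antitone (Set.subset_insert e F)).trans_eq hzero
  have hcount : (numComponents N F * δ : ℝ) + 2 * ∑ e, (numComponents N (insert e F) : ℝ) ≤
      Fintype.card E * (2 * numComponents N F) := by
    have hmerge := Finset.sum_le_sum fun e (_ : e ∈ Finset.univ) =>
      ncard_crossedComponents_add_le N F e
    rw [Finset.sum_add_distrib, ← Finset.mul_sum, Finset.sum_const, smul_eq_mul] at hmerge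
    exact_mod_cast (Nat.add_le_add_right
      (mul_numComponents_le_sum_crossedComponents hcut hF) _).trans hmerge
  simp only [excess, Finset.sum_sub_distrib, Finset.sum_const, Finset.card_univ, nsmul_eq_mul]
  nlinarith [(Nat.cast_nonneg δ : (0 : ℝ) ≤ δ)]

end Components

section RandomPermutation

variable {E : Type*} [Fintype E] [DecidableEq E] {f : Set E → ℝ}

-- If `t ∉ P`, exchange the roles of `a` and `t`; if `t ∈ P`, use monotonicity.
theorem sum_perm_insert_le (hf : Antitone f) {P : Set E} {a : E} (ha : a ∉ P) (t : E) :
    ∑ σ : Equiv.Perm E, f (σ '' insert a P) ≤ ∑ σ : Equiv.Perm E, f (insert (σ t) (σ '' P)) := by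
  by_cases ht : t ∈ P
  · refine Finset.sum_le_sum fun σ _ => hf ?_
    rw [Set.insert_eq_of_mem (Set.mem_image_of_mem σ ht)]
    exact Set.image_mono (Set.subset_insert a P)
  · refine (Fintype.sum_equiv (Equiv.mulRight (Equiv.swap a t)) _ _ fun σ => ?_).le
    have hP : Equiv.swap a t '' P = P := by
      refine (Set.image_congr fun x hx => ?_).trans (Set.image_id P)
      exact Equiv.swap_apply_of_ne_of_ne (ne_of_mem_of_not_mem hx ha) (ne_of_mem_of_not_mem hx ht)
    rw [Equiv.coe_mulRight, Equiv.Perm.coe_mul, Set.image_comp, hP, Function.comp_apply,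
      Equiv.swap_apply_right, Set.image_insert_eq]

theorem sum_perm_insert_le_mul (hf : Antitone f) {r : ℝ}
    (hstep : ∀ F, ∑ e, f (insert e F) ≤ Fintype.card E * r * f F)
    {P : Set E} {a : E} (ha : a ∉ P) :
    ∑ σ : Equiv.Perm E, f (σ '' insert a P) ≤ r * ∑ σ : Equiv.Perm E, f (σ '' P) := by
  have card_pos : (0 : ℝ) < Fintype.card E := Nat.cast_pos.2 (Fintype.card_pos_iff.2 ⟨a⟩)
  refine le_of_mul_le_mul_left ?_ card_pos
  calc (Fintype.card E : ℝ) * ∑ σ : Equiv.Perm E, f (σ '' insert a P)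
      = ∑ _t : E, ∑ σ : Equiv.Perm E, f (σ '' insert a P) := by simp
    _ ≤ ∑ t : E, ∑ σ : Equiv.Perm E, f (insert (σ t) (σ '' P)) :=
        Finset.sum_le_sum fun t _ => sum_perm_insert_le hf ha t
    _ = ∑ σ : Equiv.Perm E, ∑ e, f (insert e (σ '' P)) := by
        rw [Finset.sum_comm]
        exact Finset.sum_congr rfl fun σ _ => Equiv.sum_comp σ fun e => f (insert e (σ '' P))
    _ ≤ ∑ σ : Equiv.Perm E, Fintype.card E * r * f (σ '' P) :=
        Finset.sum_le_sum fun σ _ => hstep _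
    _ = Fintype.card E * (r * ∑ σ : Equiv.Perm E, f (σ '' P)) := by
        rw [← Finset.mul_sum, mul_assoc]

-- For a uniformly random `σ`, the image `σ '' P` is a uniformly random set of size `P.ncard`.
theorem sum_perm_image_le (hf : Antitone f) {r : ℝ} (hr : 0 ≤ r)
    (hstep : ∀ F, ∑ e, f (insert e F) ≤ Fintype.card E * r * f F) (P : Set E) :
    ∑ σ : Equiv.Perm E, f (σ '' P) ≤ Fintype.card (Equiv.Perm E) * (r ^ P.ncard * f ∅) := by
  induction P, P.toFinite using Set.Finite.induction_on with
  | empty => simp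
  | @insert a P ha _ ih =>
    calc ∑ σ : Equiv.Perm E, f (σ '' insert a P)
        ≤ r * ∑ σ : Equiv.Perm E, f (σ '' P) := sum_perm_insert_le_mul hf hstep ha
      _ ≤ r * (Fintype.card (Equiv.Perm E) * (r ^ P.ncard * f ∅)) := by gcongr
      _ = _ := by rw [Set.ncard_insert_of_notMem ha]; ring

end RandomPermutation

section Coloring

theorem three_mul_le_four_mul_mul_div {l M : ℕ} (hl : 0 < l) (h : 3 * l ≤ M) :
    3 * M ≤ 4 * (l * (M / l)) := by
  have hdiv : 3 ≤ M / l := (Nat.le_div_iff_mul_le hl).2 h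
  have hlt : M < l * (M / l + 1) := Nat.lt_mul_div_succ M hl
  nlinarith

theorem exp_neg_mul_sub_one_lt_half {x : ℝ} (hx : 1 < x) :
    Real.exp (-(3 / 2 * Real.log x)) * (x - 1) < 1 / 2 := by
  set y := Real.exp (-(3 / 2 * Real.log x)) with hy
  have hy_sq : y ^ 2 * x ^ 3 = 1 := by
    have hexp : x ^ 3 = Real.exp (3 * Real.log x) := by
      rw [mul_comm, Real.exp_mul, Real.exp_log (by linarith)]; norm_cast
    rw [hexp, hy, ← Real.exp_nat_mul, ← Real.exp_add, Real.exp_eq_one_iff]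
    push_cast; ring
  have hcubic : 4 * (x - 1) ^ 2 < x ^ 3 := by
    nlinarith [mul_nonneg (by linarith : 0 ≤ x) (sq_nonneg (x - 2))]
  refine lt_of_pow_lt_pow_left₀ 2 (by norm_num) ?_
  have : y ^ 2 * (4 * (x - 1) ^ 2) < y ^ 2 * x ^ 3 :=
    mul_lt_mul_of_pos_left hcubic (pow_pos (Real.exp_pos _) 2)
  linarith

theorem log_le_three_fourths_mul_logb_two {x : ℝ} (hx : 1 ≤ x) :
    Real.log x ≤ 3 / 4 * Real.logb 2 x := by
  have hlog : Real.log x = Real.logb 2 x * Real.log 2 :=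
    (div_mul_cancel₀ _ (Real.log_pos one_lt_two).ne').symm
  have := Real.logb_nonneg one_lt_two hx
  nlinarith [Real.log_two_lt_d9]

theorem one_le_logb_two {n : ℕ} (hn : 2 ≤ n) : 1 ≤ Real.logb 2 n := by
  rw [Real.le_logb_iff_rpow_le one_lt_two (by positivity), Real.rpow_one]
  exact_mod_cast hn

theorem one_sub_div_two_mul_nonneg {δ M : ℕ} (h : δ ≤ M) : (0 : ℝ) ≤ 1 - δ / (2 * M) := by
  refine sub_nonneg.2 (div_le_one_of_le₀ ?_ (by positivity))
  exact_mod_cast h.trans (Nat.le_mul_of_pos_left M two_pos)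

theorem pow_mul_sub_one_lt_half {n l M δ : ℕ} (hn : 2 ≤ n) (hl : 0 < l) (hδM : δ ≤ M)
    (hδ : 3 * l * Real.logb 2 n < δ) :
    (1 - δ / (2 * M) : ℝ) ^ (M / l) * (n - 1) < 1 / 2 := by
  have hlog := one_le_logb_two hn
  have hδM' : (δ : ℝ) ≤ M := Nat.cast_le.2 hδM
  have hl' : (1 : ℝ) ≤ l := Nat.one_le_cast.2 hl
  have hM : (0 : ℝ) < M := by nlinarith
  have hlM : 3 * l ≤ M := by
    have : (3 * l : ℝ) ≤ M := by nlinarith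
    exact_mod_cast this
  have hblock : (3 * M : ℝ) ≤ 4 * (l * (M / l : ℕ)) := by
    exact_mod_cast three_mul_le_four_mul_mul_div hl hlM
  have hexponent : 3 / 2 * Real.log n ≤ (M / l : ℕ) * (δ / (2 * M)) := by
    have hlog_le := log_le_three_fourths_mul_logb_two (Nat.one_le_cast.2 (by omega : 1 ≤ n))
    have h₁ : 3 * M * (3 * Real.logb 2 n) ≤ 4 * (l * (M / l : ℕ)) * (3 * Real.logb 2 n) := by gcongr
    have h₂ : (M / l : ℕ) * (3 * l * Real.logb 2 n) ≤ (M / l : ℕ) * δ := by gcongr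
    rw [← mul_div_assoc, le_div_iff₀ (by positivity)]
    nlinarith
  have hnonneg := one_sub_div_two_mul_nonneg hδM
  have hn' : (1 : ℝ) < n := by exact_mod_cast hn
  calc (1 - δ / (2 * M) : ℝ) ^ (M / l) * (n - 1)
      ≤ Real.exp (-(δ / (2 * M))) ^ (M / l) * (n - 1) := by
        gcongr
        exact Real.one_sub_le_exp_neg _
    _ = Real.exp (-((M / l : ℕ) * (δ / (2 * M)))) * (n - 1) := by
        rw [← Real.exp_nat_mul, mul_neg]
    _ ≤ Real.exp (-(3 / 2 * Real.log n)) * (n - 1) := by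
        gcongr
    _ < 1 / 2 := exp_neg_mul_sub_one_lt_half hn'

variable {E X : Type*} {N : E → Set X} {A S : Set X}

theorem exists_blocks [Fintype E] {l : ℕ} (hl : 0 < l) :
    ∃ χ : E → Fin l, ∀ j, Fintype.card E / l ≤ (χ ⁻¹' {j}).ncard := by
  have : Nonempty (Fin l) := ⟨⟨0, hl⟩⟩
  obtain ⟨ι⟩ : Nonempty (Fin l × Fin (Fintype.card E / l) ↪ E) := by
    refine Function.Embedding.nonempty_of_card_le ?_
    simpa using Nat.mul_div_le (Fintype.card E) l
  refine ⟨Function.extend ι Prod.fst fun _ => ⟨0, hl⟩, fun j => ?_⟩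
  have hinj : Function.Injective fun i => ι (j, i) :=
    ι.injective.comp (Prod.mk_right_injective j)
  calc Fintype.card E / l = (Set.range fun i => ι (j, i)).ncard := by
        rw [← Set.image_univ, Set.ncard_image_of_injective _ hinj, Set.ncard_univ,
          Nat.card_eq_fintype_card, Fintype.card_fin]
    _ ≤ _ := by
        refine Set.ncard_le_ncard (Set.range_subset_iff.2 fun i => ?_)
        exact ι.injective.extend_apply Prod.fst _ (j, i)

theorem exists_perm_sum_excess_lt [Fintype E] [Finite X] [Nonempty X]
    {δ l s : ℕ} (hl : 0 < l) (hδ : δ ≤ Fintype.card E)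
    (hcut : ∀ S, Crosses Set.univ S → δ ≤ (cut N S).ncard)
    {χ : E → Fin l} (hχ : ∀ j, s ≤ (χ ⁻¹' {j}).ncard)
    (hs : (1 - δ / (2 * Fintype.card E) : ℝ) ^ s * (Nat.card X - 1) < 1 / 2) :
    ∃ σ : Equiv.Perm E, ∑ j, excess N (σ '' (χ ⁻¹' {j})) < l / 2 := by
  classical
  set r : ℝ := 1 - δ / (2 * Fintype.card E)
  have hr : 0 ≤ r := one_sub_div_two_mul_nonneg hδ
  have hr' : r ≤ 1 := sub_le_self _ (by positivity)
  have hstep (F : Set E) : ∑ e, excess N (insert e F) ≤ Fintype.card E * r * excess N F := by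
    obtain hE | hE := isEmpty_or_nonempty E
    · simp
    refine (sum_excess_insert_le hcut F).trans_eq ?_
    simp only [r]
    field_simp
  have hblock (j : Fin l) : ∑ σ : Equiv.Perm E, excess N (σ '' (χ ⁻¹' {j})) <
      Fintype.card (Equiv.Perm E) * (1 / 2) := by
    refine (sum_perm_image_le excess_antitone hr hstep _).trans_lt ?_
    refine mul_lt_mul_of_pos_left (lt_of_le_of_lt ?_ hs) (by positivity)
    have hX : excess N ∅ ≤ (Nat.card X - 1 : ℝ) :=
      sub_le_sub_right (Nat.cast_le.2 numComponents_le_card) 1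
    exact mul_le_mul (pow_le_pow_of_le_one hr hr' (hχ j)) hX excess_nonneg (pow_nonneg hr s)
  have hsum : ∑ σ : Equiv.Perm E, ∑ j, excess N (σ '' (χ ⁻¹' {j})) <
      ∑ _σ : Equiv.Perm E, (l / 2 : ℝ) := by
    rw [Finset.sum_comm, Finset.sum_const, nsmul_eq_mul, Finset.card_univ]
    calc _ < ∑ _j : Fin l, (Fintype.card (Equiv.Perm E) * (1 / 2) : ℝ) :=
          Finset.sum_lt_sum_of_nonempty ⟨⟨0, hl⟩, Finset.mem_univ _⟩ fun j _ => hblock j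
      _ = Fintype.card (Equiv.Perm E) * (l / 2) := by
          simp; ring
  obtain ⟨σ, -, hσ⟩ := Finset.exists_lt_of_sum_lt hsum
  exact ⟨σ, hσ⟩

theorem lt_card_connecting_of_sum_excess_lt [Finite X] [Nonempty X] {d : ℕ}
    {P : Fin (2 * d) → Set E} [DecidablePred fun j => Connects N (P j) Set.univ]
    (h : ∑ j, excess N (P j) < d) :
    d < (Finset.univ.filter fun j => Connects N (P j) Set.univ).card := by
  have hbad : ((Finset.univ.filter fun j => ¬ Connects N (P j) Set.univ).card : ℝ) ≤
      ∑ j, excess N (P j) := by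
    rw [← nsmul_one, ← Finset.sum_const]
    refine (Finset.sum_le_sum fun j hj => ?_).trans
      (Finset.sum_le_sum_of_subset_of_nonneg (Finset.subset_univ _) fun j _ _ => excess_nonneg)
    rw [Finset.mem_filter] at hj
    exact not_lt.1 fun hlt => hj.2 (connects_univ_of_excess_lt_one hlt)
  have hbad' : (Finset.univ.filter fun j => ¬ Connects N (P j) Set.univ).card < d := by
    exact_mod_cast hbad.trans_lt h
  have := Finset.card_filter_add_card_filter_not (s := Finset.univ)
    fun j => Connects N (P j) Set.univ
  rw [Finset.card_univ, Fintype.card_fin] at this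
  omega

theorem exists_relabel {α : Type*} (χ : E → α) {J : Finset α} {d : ℕ} (hJ : d < J.card)
    (h : ∀ j ∈ J, Connects N (χ ⁻¹' {j}) A) :
    ∃ χ' : E → ℕ, ∀ j ≤ d, Connects N (χ' ⁻¹' {j}) A := by
  classical
  refine ⟨fun e => if he : χ e ∈ J then J.equivFin ⟨χ e, he⟩ else 0, fun j hj => ?_⟩
  let a := J.equivFin.symm ⟨j, hj.trans_lt hJ⟩
  refine (h a a.2).mono (fun e (he : χ e = a) => ?_) subset_rfl
  have : χ e ∈ J := he ▸ a.2
  have heq : (⟨χ e, this⟩ : J) = a := Subtype.ext he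
  simp [this, heq, a]

theorem connects_of_cut_pos [Finite E] (h : ∀ S, Crosses A S → 0 < (cut N S).ncard) :
    Connects N Set.univ A := fun S hS =>
  let ⟨e, he⟩ := (Set.ncard_pos).1 (h S hS); ⟨e, trivial, he⟩

theorem exists_coloring_connects_univ [Finite E] [Finite X] {n d δ : ℕ} (hn : 2 ≤ n)
    (hX : Nat.card X ≤ n) (hδ : 6 * d * Real.logb 2 n < δ)
    (hcut : ∀ S, Crosses Set.univ S → δ ≤ (cut N S).ncard) :
    ∃ χ : E → ℕ, ∀ j ≤ d, Connects N (χ ⁻¹' {j}) Set.univ := by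
  classical
  cases nonempty_fintype E
  obtain hX' | hX' := subsingleton_or_nontrivial X
  · refine ⟨0, fun j _ S ⟨⟨x, _, hx⟩, ⟨y, _, hy⟩⟩ => (hy (Subsingleton.elim x y ▸ hx)).elim⟩
  obtain rfl | hd := Nat.eq_zero_or_pos d
  · have hδ' : 0 < δ := by simpa using hδ
    refine ⟨0, fun j hj => (connects_of_cut_pos fun S hS => hδ'.trans_le (hcut S hS)).mono ?_
      subset_rfl⟩
    exact fun e _ => (Nat.le_zero.1 hj).symm
  have hδE : δ ≤ Fintype.card E := by
    obtain ⟨x, y, hxy⟩ := exists_pair_ne X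
    refine (hcut {x} ⟨⟨x, trivial, rfl⟩, ⟨y, trivial, hxy.symm⟩⟩).trans ?_
    simpa using Set.ncard_le_ncard (Set.subset_univ (cut N {x}))
  obtain ⟨χ, hχ⟩ := exists_blocks (E := E) (Nat.mul_pos two_pos hd)
  have hδ' : 3 * (2 * d : ℕ) * Real.logb 2 n < δ := by push_cast; linarith
  have hsmall := pow_mul_sub_one_lt_half hn (Nat.mul_pos two_pos hd) hδE hδ'
  have hr := one_sub_div_two_mul_nonneg hδE
  obtain ⟨σ, hσ⟩ := exists_perm_sum_excess_lt (N := N) (Nat.mul_pos two_pos hd) hδE hcut hχ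
    (lt_of_le_of_lt (by gcongr) hsmall)
  have hmany := lt_card_connecting_of_sum_excess_lt (hσ.trans_eq (by push_cast; ring))
  refine exists_relabel (χ ∘ σ.symm) hmany fun j hj => ?_
  rw [Set.preimage_comp, ← Equiv.image_eq_preimage_symm]
  exact (Finset.mem_filter.1 hj).2

/-- The hyperedges contained in `A` that cross `S`. -/
def innerCut (N : E → Set X) (A S : Set X) : Set E := {e | N e ⊆ A ∧ Crosses (N e) S}

/-- The hypergraph on `A` consisting of the hyperedges contained in `A`; the other hyperedges are
made empty, so that the index set does not change. -/
def restrict (N : E → Set X) (A : Set X) (e : E) : Set A := {x | ↑x ∈ N e ∧ N e ⊆ A}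

theorem crosses_restrict {e : E} :
    Crosses (restrict N A e) ((↑) ⁻¹' S) ↔ N e ⊆ A ∧ Crosses (N e) S := by
  constructor
  · rintro ⟨⟨x, ⟨hx, hA⟩, hxS⟩, ⟨y, ⟨hy, -⟩, hyS⟩⟩
    exact ⟨hA, ⟨x, hx, hxS⟩, ⟨y, hy, hyS⟩⟩
  · rintro ⟨hA, ⟨x, hx, hxS⟩, ⟨y, hy, hyS⟩⟩
    exact ⟨⟨⟨x, hA hx⟩, ⟨hx, hA⟩, hxS⟩, ⟨⟨y, hA hy⟩, ⟨hy, hA⟩, hyS⟩⟩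

theorem crosses_univ_preimage : Crosses Set.univ ((↑) ⁻¹' S : Set A) ↔ Crosses A S := by
  simp [Crosses, Set.Nonempty]

theorem exists_coloring_connects [Finite E] (hA : A.Finite) {n d δ : ℕ} (hn : 2 ≤ n)
    (hAn : A.ncard ≤ n) (hδ : 6 * d * Real.logb 2 n < δ)
    (hcut : ∀ S, Crosses A S → δ ≤ (innerCut N A S).ncard) :
    ∃ χ : E → ℕ, ∀ j ≤ d, Connects N (χ ⁻¹' {j} ∩ {e | N e ⊆ A}) A := by
  have := hA.to_subtype
  obtain ⟨χ, hχ⟩ := exists_coloring_connects_univ (N := restrict N A) hn hAn hδ fun S' hS' => by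
    obtain ⟨S, rfl⟩ := Subtype.val_injective.preimage_surjective S'
    simpa only [cut, innerCut, crosses_restrict] using hcut S (crosses_univ_preimage.1 hS')
  refine ⟨χ, fun j hj S hS => ?_⟩
  obtain ⟨e, he, hcross⟩ := hχ j hj _ (crosses_univ_preimage.2 hS)
  rw [crosses_restrict] at hcross
  exact ⟨e, ⟨he, hcross.1⟩, hcross.2⟩

end Coloring

/-! ### Recursion over the terminal groups -/

section Groups

variable {ι E X : Type*} {T : ι → Set X} {I J : Finset ι} {N : E → Set X} {A S P : Set X}
  {k δ n d p : ℕ}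

/-- The vertex sets separating some group `T i` with `i ∈ I`. -/
def separators (T : ι → Set X) (I : Finset ι) : Set (Set X) := {S | ∃ i ∈ I, Crosses (T i) S}

theorem mem_separators {i : ι} (hi : i ∈ I) {x y : X} (hx : x ∈ T i) (hy : y ∈ T i)
    (hxS : x ∈ S) (hyS : y ∉ S) : S ∈ separators T I :=
  ⟨i, hi, ⟨x, hx, hxS⟩, ⟨y, hy, hyS⟩⟩

theorem isUncrossable_separators : IsUncrossable (separators T I) := by
  rintro S₁ ⟨i, hi, ⟨x, hx, hx₁⟩, ⟨y, hy, hy₁⟩⟩ S₂ ⟨j, hj, ⟨z, hz, hz₂⟩, ⟨w, hw, hw₂⟩⟩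
  by_cases hx₂ : x ∈ S₂ <;> by_cases hy₂ : y ∈ S₂
  · by_cases hw₁ : w ∈ S₁
    · exact .inr ⟨mem_separators hj hw hz (by grind) (by grind),
        mem_separators hi hx hy (by grind) (by grind)⟩
    · exact .inl ⟨mem_separators hi hx hy (by grind) (by grind),
        mem_separators hj hz hw (by grind) (by grind)⟩
  · exact .inl ⟨mem_separators hi hx hy (by grind) (by grind),
      mem_separators hi hx hy (by grind) (by grind)⟩
  · exact .inr ⟨mem_separators hi hx hy (by grind) (by grind),
      mem_separators hi hx hy (by grind) (by grind)⟩
  · by_cases hz₁ : z ∈ S₁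
    · exact .inl ⟨mem_separators hj hz hw (by grind) (by grind),
        mem_separators hi hx hy (by grind) (by grind)⟩
    · exact .inr ⟨mem_separators hi hx hy (by grind) (by grind),
        mem_separators hj hw hz (by grind) (by grind)⟩

/-- The group `P` is `k`-edge-connected in the hypergraph `N`. -/
def IsEdgeConnected (N : E → Set X) (k : ℕ) (P : Set X) : Prop :=
  ∀ S, Crosses P S → k ≤ (cut N S).ncard

theorem innerCut_compl : innerCut N A Sᶜ = innerCut N A S := by
  simp only [innerCut, crosses_compl]

theorem cut_inter_subset : cut N (A ∩ S) ⊆ cut N A ∪ innerCut N A S := by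
  rintro e ⟨⟨x, hx, hxA, hxS⟩, ⟨y, hy, hyAS⟩⟩
  by_cases he : N e ⊆ A
  · exact .inr ⟨he, ⟨x, hx, hxS⟩, ⟨y, hy, fun hyS => hyAS ⟨he hy, hyS⟩⟩⟩
  · exact .inl ⟨⟨x, hx, hxA⟩, Set.sdiff_nonempty.2 he⟩

theorem ncard_cut_inter_le [Finite E] :
    (cut N (A ∩ S)).ncard ≤ (cut N A).ncard + (innerCut N A S).ncard :=
  (Set.ncard_le_ncard cut_inter_subset).trans (Set.ncard_union_le ..)

theorem exists_small_side {t : ℕ} (hJ : J.card < 2 ^ (t + 1))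
    (hcross : Crosses (⋃ i ∈ J, T i) S) (hT : ∀ i ∈ J, ¬ Crosses (T i) S) :
    ∃ J' ⊆ J, J'.Nonempty ∧ J'.card < 2 ^ t ∧ ∃ R, (R = S ∨ R = Sᶜ) ∧
      (∀ i ∈ J', T i ⊆ R) ∧ ∀ i ∈ J, i ∉ J' → Disjoint (T i) R := by
  classical
  have hside : ∀ i ∈ J, ¬ T i ⊆ S → Disjoint (T i) S := fun i hi =>
    (not_crosses_iff.1 (hT i hi)).resolve_left
  obtain ⟨⟨x, hx, hxS⟩, ⟨y, hy, hyS⟩⟩ := hcross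
  simp only [Set.mem_iUnion] at hx hy
  obtain ⟨i, hi, hxi⟩ := hx
  obtain ⟨j, hj, hyj⟩ := hy
  have hcard := J.card_filter_add_card_filter_not fun i => T i ⊆ S
  obtain hsmall | hsmall : (J.filter fun i => T i ⊆ S).card < 2 ^ t ∨
      (J.filter fun i => ¬ T i ⊆ S).card < 2 ^ t := by omega
  · refine ⟨_, J.filter_subset _, ⟨i, ?_⟩, hsmall, S, .inl rfl, fun i hi => ?_, fun i hi hi' => ?_⟩
    · exact Finset.mem_filter.2 ⟨hi, by_contra fun h => (hside i hi h).ne_of_mem hxi hxS rfl⟩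
    · exact (Finset.mem_filter.1 hi).2
    · exact hside i hi fun h => hi' (Finset.mem_filter.2 ⟨hi, h⟩)
  · refine ⟨_, J.filter_subset _, ⟨j, ?_⟩, hsmall, Sᶜ, .inr rfl, fun i hi => ?_, fun i hi hi' => ?_⟩
    · exact Finset.mem_filter.2 ⟨hj, fun h => hyS (h hyj)⟩
    · obtain ⟨hi, hS⟩ := Finset.mem_filter.1 hi
      exact (hside i hi hS).subset_compl_right
    · rw [Set.disjoint_compl_right_iff_subset]
      exact by_contra fun h => hi' (Finset.mem_filter.2 ⟨hi, h⟩)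

theorem biUnion_eq_inter {J' : Finset ι} (hJ' : J' ⊆ J) (hsub : ∀ i ∈ J', T i ⊆ S)
    (hdisj : ∀ i ∈ J, i ∉ J' → Disjoint (T i) S) : ⋃ i ∈ J', T i = (⋃ i ∈ J, T i) ∩ S := by
  refine Set.Subset.antisymm (Set.subset_inter (Set.biUnion_subset_biUnion_left hJ')
    (Set.iUnion₂_subset hsub)) ?_
  rintro x ⟨hx, hxS⟩
  simp only [Set.mem_iUnion] at hx ⊢
  obtain ⟨i, hi, hxi⟩ := hx
  exact ⟨i, by_contra fun hi' => (hdisj i hi hi').ne_of_mem hxi hxS rfl, hxi⟩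

-- While some `S` cuts the union `A` of the current groups in at most `δ` inner hyperedges, no
-- group crosses `S`, so one may pass to the side of `S` holding at most half of the groups; this
-- increases the number of hyperedges leaving `A` by at most `δ`.
theorem exists_well_connected_subfamily [Finite E] (hconn : ∀ i ∈ I, IsEdgeConnected N k (T i))
    {t : ℕ} (hJI : J ⊆ I) (hJ : J.Nonempty) (hcard : J.card < 2 ^ t)
    (hcut : (cut N (⋃ i ∈ J, T i)).ncard + t * δ < k)
    (hdisj : ∀ i ∈ I, i ∉ J → Disjoint (T i) (⋃ i ∈ J, T i)) :
    ∃ J' ⊆ I, J'.Nonempty ∧ (∀ i ∈ I, i ∉ J' → Disjoint (T i) (⋃ i ∈ J', T i)) ∧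
      ∀ S, Crosses (⋃ i ∈ J', T i) S → δ + 1 ≤ (innerCut N (⋃ i ∈ J', T i) S).ncard := by
  induction t generalizing J with
  | zero => exact absurd hcard (by simpa using hJ.ne_empty)
  | succ t ih =>
    by_cases hgood : ∀ S, Crosses (⋃ i ∈ J, T i) S → δ + 1 ≤ (innerCut N (⋃ i ∈ J, T i) S).ncard
    · exact ⟨J, hJI, hJ, hdisj, hgood⟩
    push Not at hgood
    obtain ⟨S, hcross, hsmall⟩ := hgood
    set A := ⋃ i ∈ J, T i
    rw [Nat.succ_mul] at hcut
    have hside (R : Set X) (hR : R = S ∨ R = Sᶜ) :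
        (cut N (A ∩ R)).ncard ≤ (cut N A).ncard + δ := by
      have hinner : innerCut N A R = innerCut N A S := by
        obtain rfl | rfl := hR
        exacts [rfl, innerCut_compl]
      exact ncard_cut_inter_le.trans (by rw [hinner]; omega)
    have hT : ∀ i ∈ J, ¬ Crosses (T i) S := fun i hi hcross => by
      have hiA : T i ⊆ A := Set.subset_biUnion_of_mem (u := T) hi
      obtain ⟨⟨x, hx, hxS⟩, ⟨y, hy, hyS⟩⟩ := hcross
      have := hconn i (hJI hi) (A ∩ S) ⟨⟨x, hx, hiA hx, hxS⟩, ⟨y, hy, fun h => hyS h.2⟩⟩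
      have := hside S (.inl rfl)
      omega
    obtain ⟨J', hJ'J, hJ', hcard', R, hR, hsub, hdisj'⟩ := exists_small_side hcard hcross hT
    have hA' : ⋃ i ∈ J', T i = A ∩ R := biUnion_eq_inter hJ'J hsub hdisj'
    refine ih (hJ'J.trans hJI) hJ' hcard' ?_ fun i hi hi' => ?_
    · have := hside R hR
      rw [hA']
      omega
    · rw [hA']
      by_cases hiJ : i ∈ J
      · exact (hdisj' i hiJ hi').mono_right Set.inter_subset_right
      · exact (hdisj i hi hiJ).mono_right Set.inter_subset_left

/-- The hypergraph `N` with the vertices in `A` contracted to a single non-terminal. That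
non-terminal is not represented: the hyperedges incident to it are made pairwise adjacent
instead. -/
def contractTerminals (N : E → Set X) (A : Set X) : TerminalGraph E X where
  inner := {
    Adj e f := e ≠ f ∧ Crosses (N e) A ∧ Crosses (N f) A
    symm := ⟨fun _ _ ⟨hne, he, hf⟩ => ⟨hne.symm, hf, he⟩⟩
    loopless := ⟨fun _ h => h.1 rfl⟩ }
  nbr e := N e \ A

-- The hyperedges crossing `A` form a clique, so either all of them lie in `D` or none lies in `B`.
theorem cut_subset_of_isCut_contractTerminals {B D : Set E}
    (h : (contractTerminals N A).IsCut S B D) :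
    cut N (S ∪ A) ⊆ D \ B ∨ cut N (S \ A) ⊆ D \ B := by
  by_cases hclique : cut N A ⊆ D
  · refine .inl fun e hcross => ⟨by_contra fun he => ?_, fun he => ?_⟩
    · obtain hsub | hdisj := not_crosses_iff.1 fun heA => he (hclique heA)
      · exact not_crosses_iff.2 (.inl (hsub.trans Set.subset_union_right)) hcross
      · have heS : Disjoint (N e \ A) S := h.disjoint_nbr e he
        rw [hdisj.sdiff_eq_left] at heS
        exact not_crosses_iff.2 (.inr (Set.disjoint_union_right.2 ⟨heS, hdisj⟩)) hcross
    · have heS : N e ⊆ A ∪ S := Set.sdiff_subset_iff.1 (h.nbr_subset e he)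
      exact not_crosses_iff.2 (.inl (heS.trans_eq (Set.union_comm A S))) hcross
  · obtain ⟨f, hfA, hfD⟩ := Set.not_subset.1 hclique
    refine .inr fun e hcross => ⟨by_contra fun he => ?_, fun he => ?_⟩
    · have heS : Disjoint (N e \ A) S := h.disjoint_nbr e he
      exact not_crosses_iff.2 (.inr (disjoint_sdiff_comm.1 heS)) hcross
    · have heA : ¬ Crosses (N e) A := fun heA => hfD <| by
        obtain rfl | hne := eq_or_ne e f
        · exact h.subset he
        · exact h.mem_of_adj e f ⟨hne, heA, hfA⟩ he
      obtain hsub | hdisj := not_crosses_iff.1 heA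
      · exact not_crosses_iff.2 (.inr (Set.disjoint_sdiff_right.mono_left hsub)) hcross
      · have heS : N e \ A ⊆ S := h.nbr_subset e he
        rw [hdisj.sdiff_eq_left] at heS
        exact not_crosses_iff.2 (.inl (Set.subset_sdiff.2 ⟨heS, hdisj⟩)) hcross

theorem elemConnected_contractTerminals [Finite E] (hconn : ∀ i ∈ I, IsEdgeConnected N k (T i))
    (hdisj : ∀ i ∈ I, Disjoint (T i) A) :
    (contractTerminals N A).ElemConnected (separators T I) k := by
  rintro S ⟨i, hi, ⟨x, hx, hxS⟩, ⟨y, hy, hyS⟩⟩ B D hcut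
  have hxA : x ∉ A := (hdisj i hi).notMem_of_mem_left hx
  have hyA : y ∉ A := (hdisj i hi).notMem_of_mem_left hy
  obtain hsub | hsub := cut_subset_of_isCut_contractTerminals hcut
  · refine (hconn i hi (S ∪ A) ⟨⟨x, hx, .inl hxS⟩, ⟨y, hy, ?_⟩⟩).trans (Set.ncard_le_ncard hsub)
    exact not_or.2 ⟨hyS, hyA⟩
  · refine (hconn i hi (S \ A) ⟨⟨x, hx, hxS, hxA⟩, ⟨y, hy, ?_⟩⟩).trans (Set.ncard_le_ncard hsub)
    exact fun h => hyS h.1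

theorem connects_of_connects_contract {F F' : Set E} {π : E → E}
    (hπ : ∀ x, ((contractTerminals N A).inner.induce (π ⁻¹' {x})).Preconnected)
    (hF : ∀ e, ¬ N e ⊆ A → π e ∈ F' → e ∈ F) (hA : Connects N F A)
    (hP : Connects ((contractTerminals N A).contract π).nbr F' P) : Connects N F P := by
  intro S hS
  by_contra! hnot
  obtain ⟨x, hx, ⟨u, hu, huS⟩, ⟨v, hv, hvS⟩⟩ := hP S hS
  obtain ⟨e, he, hue, huA⟩ := Set.mem_iUnion₂.1 hu
  obtain ⟨f, hf, hvf, -⟩ := Set.mem_iUnion₂.1 hv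
  have hside (g : π ⁻¹' {x}) (hg : ¬ N g ⊆ A) : N g ⊆ S ∨ Disjoint (N g) S := by
    have hgx : π g = x := g.2
    exact not_crosses_iff.1 (hnot g (hF g hg (by rwa [hgx])))
  have hAside : A ⊆ S ∨ Disjoint A S := not_crosses_iff.1 fun hcross =>
    let ⟨g, hg, hcross⟩ := hA S hcross; hnot g hg hcross
  have heS : N e ⊆ S := (hside ⟨e, he⟩ fun h => huA (h hue)).resolve_right
    fun h => h.ne_of_mem hue huS rfl
  obtain ⟨w⟩ := hπ x ⟨e, he⟩ ⟨f, hf⟩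
  obtain ⟨dart, -, hgS, hhS⟩ := w.exists_boundary_dart {g | N g ⊆ S} heS fun h => hvS (h hvf)
  obtain ⟨-, ⟨⟨a, hag, haA⟩, -⟩, ⟨⟨b, hbh, hbA⟩, hhA⟩⟩ := dart.adj
  have hAS : A ⊆ S := hAside.resolve_right fun h => h.ne_of_mem haA (hgS hag) rfl
  have hhS' := (hside dart.snd (Set.sdiff_nonempty.1 hhA)).resolve_left hhS
  exact hhS'.ne_of_mem hbh (hAS hbA) rfl

theorem nbr_contract_contractTerminals_subset [DecidableEq ι] {π : E → E}
    (hN : ∀ e, N e ⊆ ⋃ i ∈ I, T i) (x : E) :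
    ((contractTerminals N (⋃ i ∈ J, T i)).contract π).nbr x ⊆ ⋃ i ∈ I \ J, T i := by
  refine Set.iUnion₂_subset fun e _ y ⟨hy, hyJ⟩ => ?_
  obtain ⟨i, hi, hyi⟩ := Set.mem_iUnion₂.1 (hN e hy)
  have hiJ : i ∉ J := fun hiJ => hyJ (Set.mem_biUnion hiJ hyi)
  exact Set.mem_biUnion (Finset.mem_sdiff.2 ⟨hi, hiJ⟩) hyi

theorem exists_coloring_connects_groups [Finite E] (hn : 2 ≤ n) (hI : I.card < 2 ^ p)
    (hk : p * δ < k) (hδ : 6 * d * Real.logb 2 n < δ + 1)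
    (hfin : (⋃ i ∈ I, T i).Finite) (hle : (⋃ i ∈ I, T i).ncard ≤ n)
    (hN : ∀ e, N e ⊆ ⋃ i ∈ I, T i) (hconn : ∀ i ∈ I, IsEdgeConnected N k (T i)) :
    ∃ χ : E → ℕ, ∀ j ≤ d, ∀ i ∈ I, Connects N (χ ⁻¹' {j}) (T i) := by
  classical
  induction I using Finset.strongInduction generalizing N with
  | H I ih =>
  obtain rfl | hne := I.eq_empty_or_nonempty
  · exact ⟨0, by simp⟩
  have hempty : cut N (⋃ i ∈ I, T i) = ∅ :=
    Set.eq_empty_of_forall_notMem fun e he => not_crosses_iff.2 (.inl (hN e)) he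
  obtain ⟨J, hJI, hJ, hdisj, hgood⟩ := exists_well_connected_subfamily (δ := δ) hconn
    subset_rfl hne hI (by simpa [hempty] using hk) fun i hi hi' => absurd hi hi'
  set A := ⋃ i ∈ J, T i
  have hAI : A ⊆ ⋃ i ∈ I, T i := Set.biUnion_subset_biUnion_left hJI
  have hrest : ⋃ i ∈ I \ J, T i ⊆ ⋃ i ∈ I, T i :=
    Set.biUnion_subset_biUnion_left (Finset.sdiff_subset)
  obtain ⟨χ₁, hχ₁⟩ := exists_coloring_connects (hfin.subset hAI) hn
    ((Set.ncard_le_ncard hAI hfin).trans hle) (by exact_mod_cast hδ) hgood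
  have hdisj' : ∀ i ∈ I \ J, Disjoint (T i) A := fun i hi =>
    hdisj i (Finset.mem_sdiff.1 hi).1 (Finset.mem_sdiff.1 hi).2
  obtain ⟨π, hπ, hcut⟩ := (elemConnected_contractTerminals
    (fun i hi => hconn i (Finset.sdiff_subset hi)) hdisj').exists_contract isUncrossable_separators
  obtain ⟨χ₂, hχ₂⟩ := ih (I \ J) (Finset.sdiff_ssubset hJI hJ)
    ((Finset.card_le_card Finset.sdiff_subset).trans_lt hI) (hfin.subset hrest)
    ((Set.ncard_le_ncard hrest hfin).trans hle)
    (nbr_contract_contractTerminals_subset hN) fun i hi S hS => hcut S ⟨i, hi, hS⟩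
  refine ⟨fun e => if N e ⊆ A then χ₁ e else χ₂ (π e), fun j hj i hi => ?_⟩
  have hA : Connects N ((fun e => if N e ⊆ A then χ₁ e else χ₂ (π e)) ⁻¹' {j}) A :=
    (hχ₁ j hj).mono (fun e ⟨hej, heA⟩ => (if_pos heA).trans hej) subset_rfl
  by_cases hiJ : i ∈ J
  · exact hA.mono subset_rfl (Set.subset_biUnion_of_mem (u := T) hiJ)
  · refine connects_of_connects_contract hπ (fun e he hej => ?_) hA
      (hχ₂ j hj i (Finset.mem_sdiff.2 ⟨hi, hiJ⟩))
    exact (if_neg he).trans hej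

end Groups

/-! ### The element graph -/

section Elements

variable {V : Type*} {G H : SimpleGraph V} {U : Set V} {u v x y : V} {e e' : Sym2 V}
  {a b : V ⊕ Sym2 V} {k : ℕ}

/-- The elements of the edge `e`, for the terminal set `U`: its non-terminal ends, or `e` itself
if both its ends are terminals. -/
def edgeElements (U : Set V) (e : Sym2 V) : Set (V ⊕ Sym2 V) :=
  {a | (∃ x ∈ e, x ∉ U ∧ a = Sum.inl x) ∨ ((∀ x ∈ e, x ∈ U) ∧ a = Sum.inr e)}

theorem edgeElements_nonempty : (edgeElements U e).Nonempty := by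
  by_cases he : ∀ x ∈ e, x ∈ U
  · exact ⟨_, .inr ⟨he, rfl⟩⟩
  · push Not at he
    obtain ⟨x, hxe, hxU⟩ := he
    exact ⟨_, .inl ⟨x, hxe, hxU, rfl⟩⟩

theorem finite_edgeElements : (edgeElements U e).Finite := by
  induction e with
  | _ x y =>
    refine (Set.toFinite {Sum.inl x, Sum.inl y, Sum.inr s(x, y)}).subset ?_
    rintro a (⟨z, hz, -, rfl⟩ | ⟨-, rfl⟩)
    · obtain rfl | rfl := Sym2.mem_iff.1 hz <;> simp
    · simp

theorem edgeElements_subset_singleton (ha : a ∈ edgeElements U e) (hx : x ∈ e) (hxU : x ∈ U) :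
    edgeElements U e ⊆ {a} := by
  induction e with
  | _ y z =>
    simp only [edgeElements, Set.mem_ofPred_eq, Sym2.mem_iff] at ha hx
    intro b hb
    simp only [edgeElements, Set.mem_ofPred_eq, Sym2.mem_iff] at hb
    grind

theorem edgeElements_subset_pair (ha : a ∈ edgeElements U e) (hb : b ∈ edgeElements U e)
    (hab : a ≠ b) : edgeElements U e ⊆ {a, b} := by
  induction e with
  | _ y z =>
    simp only [edgeElements, Set.mem_ofPred_eq, Sym2.mem_iff] at ha hb
    intro c hc
    simp only [edgeElements, Set.mem_ofPred_eq, Sym2.mem_iff] at hc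
    grind

theorem exists_mem_mem_of_mem_edgeElements (ha : a ∈ edgeElements U e)
    (ha' : a ∈ edgeElements U e') : ∃ x ∈ e, x ∈ e' := by
  obtain ⟨x, hx, -, rfl⟩ | ⟨-, rfl⟩ := ha <;> obtain ⟨y, hy, -, h⟩ | ⟨-, h⟩ := ha'
  · exact ⟨x, hx, Sum.inl.inj h ▸ hy⟩
  · cases h
  · cases h
  · exact ⟨_, e.out_fst_mem, Sum.inr.inj h ▸ e.out_fst_mem⟩

/-- The elements of `G` that lie on some edge. -/
def elements (G : SimpleGraph V) (U : Set V) : Set (V ⊕ Sym2 V) :=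
  ⋃ e ∈ G.edgeSet, edgeElements U e

theorem finite_elements (hG : G.edgeSet.Finite) : (elements G U).Finite :=
  hG.biUnion fun _ _ => finite_edgeElements

theorem mem_elements (he : e ∈ G.edgeSet) (ha : a ∈ edgeElements U e) : a ∈ elements G U :=
  Set.mem_biUnion he ha

/-- The graph `G` with every edge between two terminals subdivided, presented as a
`TerminalGraph` whose non-terminals are the elements of `G`. -/
def elementGraph (G : SimpleGraph V) (U : Set V) : TerminalGraph (elements G U) V where
  inner := {
    Adj a b := a ≠ b ∧ ∃ e ∈ G.edgeSet, ↑a ∈ edgeElements U e ∧ ↑b ∈ edgeElements U e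
    symm := ⟨fun _ _ ⟨hne, e, he, ha, hb⟩ => ⟨hne.symm, e, he, hb, ha⟩⟩
    loopless := ⟨fun _ h => h.1 rfl⟩ }
  nbr a := {x ∈ U | ∃ e ∈ G.edgeSet, ↑a ∈ edgeElements U e ∧ x ∈ e}

theorem exists_edgeElements_mem_boundary {S : Set V} {A D : Set (elements G U)}
    (hu : u ∈ U) (hv : v ∈ U) (huS : u ∈ S) (hvS : v ∉ S)
    (hcut : (elementGraph G U).IsCut S A D) (w : G.Walk u v) :
    ∃ a ∈ D \ A, ∃ e ∈ w.edges, ↑a ∈ edgeElements U e := by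
  obtain ⟨⟨⟨x, y⟩, hxy⟩, hdart, hx, hy⟩ := w.exists_boundary_dart
    {x | (x ∈ U ∧ x ∈ S) ∨ (x ∉ U ∧ ∃ a ∈ A, a.1 = Sum.inl x)} (.inl ⟨hu, huS⟩) (by simp [hv, hvS])
  have hedge : s(x, y) ∈ w.edges := List.mem_map.2 ⟨_, hdart, rfl⟩
  have hxe : x ∈ s(x, y) := Sym2.mem_mk_left x y
  have hye : y ∈ s(x, y) := Sym2.mem_mk_right x y
  simp only [Set.mem_ofPred_eq, not_or, not_and] at hx hy
  by_cases hyU : y ∈ U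
  · obtain ⟨hxU, hxS⟩ | ⟨hxU, a, haA, hax⟩ := hx
    · have ha : Sum.inr s(x, y) ∈ edgeElements U s(x, y) :=
        .inr ⟨fun z hz => by obtain rfl | rfl := Sym2.mem_iff.1 hz <;> assumption, rfl⟩
      refine ⟨⟨_, mem_elements hxy ha⟩, ⟨by_contra fun haD => ?_, fun haA => ?_⟩, _, hedge, ha⟩
      · exact (hcut.disjoint_nbr _ haD).ne_of_mem ⟨hxU, _, hxy, ha, hxe⟩ hxS rfl
      · exact hy.1 hyU (hcut.nbr_subset _ haA ⟨hyU, _, hxy, ha, hye⟩)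
    · exact absurd (hcut.nbr_subset a haA ⟨hyU, _, hxy, .inl ⟨x, hxe, hxU, hax⟩, hye⟩) (hy.1 hyU)
  · have hb : Sum.inl y ∈ edgeElements U s(x, y) := .inl ⟨y, hye, hyU, rfl⟩
    have hbA : ⟨_, mem_elements hxy hb⟩ ∉ A := fun hbA => hy.2 hyU ⟨_, hbA, rfl⟩
    refine ⟨⟨_, mem_elements hxy hb⟩, ⟨by_contra fun hbD => ?_, hbA⟩, _, hedge, hb⟩
    obtain ⟨hxU, hxS⟩ | ⟨hxU, a, haA, hax⟩ := hx
    · exact (hcut.disjoint_nbr _ hbD).ne_of_mem ⟨hxU, _, hxy, hb, hxe⟩ hxS rfl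
    · refine hbD (hcut.mem_of_adj a _ ⟨?_, _, hxy, .inl ⟨x, hxe, hxU, hax⟩, hb⟩ haA)
      rintro rfl
      exact hbA haA

theorem notMem_edgeElements_of_elemDisjWalks {w₁ w₂ : G.Walk u v} (h : ElemDisjWalks U w₁ w₂)
    (hu : u ∈ U) (hv : v ∈ U) (he : e ∈ w₁.edges) (he' : e' ∈ w₂.edges)
    (ha : a ∈ edgeElements U e) : a ∉ edgeElements U e' := by
  obtain ⟨x, hx, hxU, rfl⟩ | ⟨-, rfl⟩ := ha <;> rintro (⟨y, hy, -, hay⟩ | ⟨-, hay⟩)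
  · obtain rfl := Sum.inl.inj hay
    have := h.2 x (w₁.mem_support_of_mem_edges he hx) (w₂.mem_support_of_mem_edges he' hy)
    obtain hxU' | rfl | rfl := this
    exacts [hxU hxU', hxU hu, hxU hv]
  · cases hay
  · cases hay
  · exact h.1 _ he (Sum.inr.inj hay ▸ he')

theorem le_ncard_boundary_of_hasElemPaths [Finite (elements G U)] {S : Set V}
    {A D : Set (elements G U)} (hu : u ∈ U) (hv : v ∈ U) (huS : u ∈ S) (hvS : v ∉ S)
    (hpaths : HasElemPaths G U u v k) (hcut : (elementGraph G U).IsCut S A D) :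
    k ≤ (D \ A).ncard := by
  obtain ⟨P, -, hP⟩ := hpaths
  choose f hf e he hfe using fun i =>
    exists_edgeElements_mem_boundary hu hv huS hvS hcut (P i)
  have hinj : Function.Injective f := fun i j hij => by_contra fun hne =>
    notMem_edgeElements_of_elemDisjWalks (hP i j hne) hu hv (he i) (he j) (hfe i) (hij ▸ hfe j)
  calc k = (Set.range f).ncard := by rw [Set.ncard_range_of_injective hinj, Nat.card_fin]
    _ ≤ (D \ A).ncard := Set.ncard_le_ncard (Set.range_subset_iff.2 hf)

theorem elemConnected_elementGraph {ι : Type*} {T : ι → Set V} {I : Finset ι}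
    [Finite (elements G U)] (hT : ∀ i ∈ I, T i ⊆ U)
    (hconn : ∀ i ∈ I, ∀ u ∈ T i, ∀ v ∈ T i, u ≠ v → HasElemPaths G U u v k) :
    (elementGraph G U).ElemConnected (separators T I) k := by
  rintro S ⟨i, hi, ⟨u, hu, huS⟩, ⟨v, hv, hvS⟩⟩ A D hcut
  exact le_ncard_boundary_of_hasElemPaths (hT i hi hu) (hT i hi hv) huS hvS
    (hconn i hi u hu v hv fun h => hvS (h ▸ huS)) hcut

theorem nbr_contract_elementGraph_subset (π : elements G U → elements G U) (b : elements G U) :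
    ((elementGraph G U).contract π).nbr b ⊆ U :=
  Set.iUnion₂_subset fun _ _ _ hx => hx.1

/-- The subgraph of `G` formed by the edges all of whose elements belong to `B`. -/
def spannedSubgraph (B : Set (elements G U)) : SimpleGraph V where
  Adj x y := G.Adj x y ∧ ∀ a : elements G U, ↑a ∈ edgeElements U s(x, y) → a ∈ B
  symm := ⟨fun x y h => by rwa [G.adj_comm, Sym2.eq_swap]⟩
  loopless := ⟨fun _ h => h.1.ne rfl⟩

theorem spannedSubgraph_le (B : Set (elements G U)) : spannedSubgraph B ≤ G := fun _ _ h => h.1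

theorem mem_edgeSet_spannedSubgraph {B : Set (elements G U)} :
    e ∈ (spannedSubgraph B).edgeSet ↔
      e ∈ G.edgeSet ∧ ∀ a : elements G U, ↑a ∈ edgeElements U e → a ∈ B := by
  induction e with
  | _ x y => rfl

theorem mem_of_mem_edgeElements {B : Set (elements G U)} (he : e ∈ (spannedSubgraph B).edgeSet)
    (ha : a ∈ edgeElements U e) : ∃ h : a ∈ elements G U, ⟨a, h⟩ ∈ B :=
  have hmem := mem_edgeSet_spannedSubgraph.1 he
  ⟨mem_elements hmem.1 ha, hmem.2 _ ha⟩

theorem eDisj_of_le_spannedSubgraph {B B' : Set (elements G U)} {F F' : SimpleGraph V}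
    (hB : Disjoint B B') (hF : F ≤ spannedSubgraph B) (hF' : F' ≤ spannedSubgraph B') :
    EDisj U F F' := by
  have not_both : ∀ {a e e'}, e ∈ F.edgeSet → e' ∈ F'.edgeSet → a ∈ edgeElements U e →
      a ∉ edgeElements U e' := fun he he' ha ha' =>
    let ⟨_, haB⟩ := mem_of_mem_edgeElements (edgeSet_mono hF he) ha
    let ⟨_, haB'⟩ := mem_of_mem_edgeElements (edgeSet_mono hF' he') ha'
    hB.ne_of_mem haB haB' rfl
  refine ⟨Set.disjoint_left.2 fun e he he' => ?_, fun x ⟨y, hy⟩ ⟨z, hz⟩ => by_contra fun hx => ?_⟩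
  · obtain ⟨a, ha⟩ := edgeElements_nonempty (U := U) (e := e)
    exact not_both he he' ha ha
  · exact not_both (mem_edgeSet F |>.2 hy) (mem_edgeSet F' |>.2 hz)
      (.inl ⟨x, Sym2.mem_mk_left x y, hx, rfl⟩) (.inl ⟨x, Sym2.mem_mk_left x z, hx, rfl⟩)

theorem exists_edge_of_mem_nbr {B : Set (elements G U)} {a : elements G U} (ha : a ∈ B)
    (hx : x ∈ (elementGraph G U).nbr a) :
    ∃ e ∈ (spannedSubgraph B).edgeSet, ↑a ∈ edgeElements U e ∧ x ∈ e := by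
  obtain ⟨hxU, e, he, hae, hxe⟩ := hx
  refine ⟨e, mem_edgeSet_spannedSubgraph.2 ⟨he, fun b hb => ?_⟩, hae, hxe⟩
  exact Subtype.ext (edgeElements_subset_singleton hae hxe hxU hb) ▸ ha

theorem exists_edge_of_adj {B : Set (elements G U)} {a b : elements G U} (ha : a ∈ B) (hb : b ∈ B)
    (hab : (elementGraph G U).inner.Adj a b) :
    ∃ e ∈ (spannedSubgraph B).edgeSet, ↑a ∈ edgeElements U e ∧ ↑b ∈ edgeElements U e := by
  obtain ⟨hne, e, he, hae, hbe⟩ := hab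
  refine ⟨e, mem_edgeSet_spannedSubgraph.2 ⟨he, fun c hc => ?_⟩, hae, hbe⟩
  obtain hca | hcb := edgeElements_subset_pair hae hbe (Subtype.coe_ne_coe.2 hne) hc
  exacts [Subtype.ext hca ▸ ha, Subtype.ext hcb ▸ hb]

theorem reachable_of_mem_edge (he : e ∈ H.edgeSet) (hx : x ∈ e) (hy : y ∈ e) :
    H.Reachable x y := by
  induction e with
  | _ z w =>
    have hzw : H.Adj z w := he
    obtain rfl | rfl := Sym2.mem_iff.1 hx <;> obtain rfl | rfl := Sym2.mem_iff.1 hy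
    exacts [.rfl, hzw.reachable, hzw.symm.reachable, .rfl]

theorem not_crosses_nbr_contract {π : elements G U → elements G U} {B : Set (elements G U)}
    (hπ : ∀ b, ((elementGraph G U).inner.induce (π ⁻¹' {b})).Preconnected) {b : elements G U}
    (hb : π ⁻¹' {b} ⊆ B) :
    ¬ Crosses (((elementGraph G U).contract π).nbr b) {z | (spannedSubgraph B).Reachable u z} := by
  rintro ⟨⟨y, hy, huy⟩, ⟨z, hz, huz⟩⟩
  obtain ⟨a₁, ha₁, hya₁⟩ := Set.mem_iUnion₂.1 hy
  obtain ⟨a₂, ha₂, hza₂⟩ := Set.mem_iUnion₂.1 hz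
  let reached : Set (elements G U) := {a | ∃ e ∈ (spannedSubgraph B).edgeSet,
    ↑a ∈ edgeElements U e ∧ ∃ x ∈ e, (spannedSubgraph B).Reachable u x}
  have reachable_of_reached : ∀ a ∈ reached, ∀ e ∈ (spannedSubgraph B).edgeSet,
      ↑a ∈ edgeElements U e → ∀ x ∈ e, (spannedSubgraph B).Reachable u x := by
    rintro a ⟨e', he', hae', x', hx', hux'⟩ e he hae x hx
    obtain ⟨w, hwe', hwe⟩ := exists_mem_mem_of_mem_edgeElements hae' hae
    exact (hux'.trans (reachable_of_mem_edge he' hx' hwe')).trans (reachable_of_mem_edge he hwe hx)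
  have reached₁ : a₁ ∈ reached :=
    let ⟨e, he, hae, hye⟩ := exists_edge_of_mem_nbr (hb ha₁) hya₁
    ⟨e, he, hae, y, hye, huy⟩
  have not_reached₂ : a₂ ∉ reached := fun hr =>
    let ⟨e, he, hae, hze⟩ := exists_edge_of_mem_nbr (hb ha₂) hza₂
    huz (reachable_of_reached a₂ hr e he hae z hze)
  obtain ⟨w⟩ := hπ b ⟨a₁, ha₁⟩ ⟨a₂, ha₂⟩
  obtain ⟨dart, -, hfst, hsnd⟩ :=
    w.exists_boundary_dart (Subtype.val ⁻¹' reached) reached₁ not_reached₂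
  obtain ⟨e, he, hae, hbe⟩ := exists_edge_of_adj (hb dart.fst.2) (hb dart.snd.2) dart.adj
  exact hsnd ⟨e, he, hbe, _, e.out_fst_mem,
    reachable_of_reached _ hfst e he hae _ e.out_fst_mem⟩

theorem reachable_spannedSubgraph {π : elements G U → elements G U} {F : Set (elements G U)}
    {P : Set V} (hπ : ∀ b, ((elementGraph G U).inner.induce (π ⁻¹' {b})).Preconnected)
    (hF : Connects ((elementGraph G U).contract π).nbr F P) (hu : u ∈ P) (hv : v ∈ P) :
    (spannedSubgraph (π ⁻¹' F)).Reachable u v := by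
  by_contra huv
  obtain ⟨b, hb, hcross⟩ := hF {z | (spannedSubgraph (π ⁻¹' F)).Reachable u z}
    ⟨⟨u, hu, .rfl⟩, ⟨v, hv, huv⟩⟩
  exact not_crosses_nbr_contract hπ (Set.preimage_mono (Set.singleton_subset_iff.2 hb)) hcross

theorem exists_isSteinerForest_eDisj {m d : ℕ} {T : Fin m → Set V} {χ : elements G U → ℕ}
    {π : elements G U → elements G U}
    (hπ : ∀ b, ((elementGraph G U).inner.induce (π ⁻¹' {b})).Preconnected)
    (hχ : ∀ j ≤ d, ∀ i, Connects ((elementGraph G U).contract π).nbr (χ ⁻¹' {j}) (T i)) :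
    ∃ F : Fin (d + 1) → SimpleGraph V, (∀ j, IsSteinerForest G T (F j)) ∧
      ∀ i j, i ≠ j → EDisj U (F i) (F j) := by
  choose F hFle hacyclic hreach using fun j : Fin (d + 1) =>
    (spannedSubgraph (π ⁻¹' (χ ⁻¹' {↑j}))).exists_isAcyclic_reachable_eq_le
  refine ⟨F, fun j => ⟨(hFle j).trans (spannedSubgraph_le _), hacyclic j, ?_⟩, fun i j hij => ?_⟩
  · intro i u hu v hv
    rw [hreach j]
    exact reachable_spannedSubgraph hπ (hχ j j.is_le i) hu hv
  · have hdisj : Disjoint ({↑i} : Set ℕ) {↑j} := Set.disjoint_singleton.2 (Fin.val_ne_of_ne hij)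
    exact eDisj_of_le_spannedSubgraph ((hdisj.preimage χ).preimage π) (hFle i) (hFle j)

end Elements

section ElementPaths

variable {V : Type*} {G : SimpleGraph V} {U : Set V} {u v : V} {k : ℕ}

-- If there are arbitrarily many disjoint paths, then the supremum `elemConn` is the junk value `0`.
theorem hasElemPaths_of_le_elemConn (h : k ≤ elemConn G U u v) : HasElemPaths G U u v k := by
  have hzero : HasElemPaths G U u v 0 := ⟨Fin.elim0, fun i => i.elim0, fun i => i.elim0⟩
  by_cases hbdd : BddAbove {k | HasElemPaths G U u v k}
  · obtain ⟨P, hP, hdisj⟩ : HasElemPaths G U u v (elemConn G U u v) := Nat.sSup_mem ⟨0, hzero⟩ hbdd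
    exact ⟨P ∘ Fin.castLE h, fun i => hP _,
      fun i j hij => hdisj _ _ ((Fin.castLE_injective h).ne hij)⟩
  · rw [elemConn, Nat.sSup_of_not_bddAbove hbdd, Nat.le_zero] at h
    exact h ▸ hzero

theorem exists_finite_edges_of_hasElemPaths (h : HasElemPaths G U u v k) :
    ∃ s ⊆ G.edgeSet, s.Finite ∧
      ∀ H : SimpleGraph V, s ⊆ H.edgeSet → HasElemPaths H U u v k := by
  obtain ⟨P, hP, hdisj⟩ := h
  refine ⟨⋃ i, {e | e ∈ (P i).edges}, Set.iUnion_subset fun i e he => (P i).edges_subset_edgeSet he,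
    Set.finite_iUnion fun i => (P i).edges.finite_toSet, fun H hH => ?_⟩
  have hmem : ∀ i, ∀ e ∈ (P i).edges, e ∈ H.edgeSet := fun i e he =>
    hH (Set.mem_iUnion.2 ⟨i, he⟩)
  refine ⟨fun i => (P i).transfer H (hmem i), fun i => (hP i).transfer (hmem i), fun i j hij => ?_⟩
  simpa only [ElemDisjWalks, Walk.edges_transfer, Walk.support_transfer] using hdisj i j hij

theorem exists_le_finite_edgeSet_hasElemPaths (hU : U.Finite) :
    ∃ H ≤ G, H.edgeSet.Finite ∧
      ∀ u ∈ U, ∀ v ∈ U, HasElemPaths G U u v k → HasElemPaths H U u v k := by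
  have hs : ∀ p : V × V, ∃ s ⊆ G.edgeSet, s.Finite ∧ (HasElemPaths G U p.1 p.2 k →
      ∀ H : SimpleGraph V, s ⊆ H.edgeSet → HasElemPaths H U p.1 p.2 k) := fun p => by
    by_cases h : HasElemPaths G U p.1 p.2 k
    · obtain ⟨s, hsG, hfin, hs⟩ := exists_finite_edges_of_hasElemPaths h
      exact ⟨s, hsG, hfin, fun _ => hs⟩
    · exact ⟨∅, Set.empty_subset _, Set.finite_empty, fun h' => absurd h' h⟩
  choose s hsG hfin hs using hs
  have hsub : ⋃ p ∈ U ×ˢ U, s p ⊆ G.edgeSet := Set.iUnion₂_subset fun p _ => hsG p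
  obtain ⟨H, hH⟩ : ∃ H : SimpleGraph V, H.edgeSet = ⋃ p ∈ U ×ˢ U, s p := by
    refine ⟨fromEdgeSet (⋃ p ∈ U ×ˢ U, s p), ?_⟩
    rw [edgeSet_fromEdgeSet, sdiff_eq_left]
    exact Set.disjoint_left.2 fun e he => G.not_isDiag_of_mem_edgeSet (hsub he)
  refine ⟨H, edgeSet_subset_edgeSet.1 (hH ▸ hsub), ?_, fun u hu v hv h => ?_⟩
  · exact hH ▸ (hU.prod hU).biUnion fun p _ => hfin p
  · exact hs (u, v) h H (hH ▸ Set.subset_biUnion_of_mem (u := s) (Set.mk_mem_prod hu hv))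

end ElementPaths

theorem exists_packing_parameters {k m n : ℕ} (hk : 0 < k) (hm : 2 ≤ m) (hn : 2 ≤ n) :
    ∃ d p δ : ℕ, (k : ℝ) / (12 * Real.logb 2 n * Real.logb 2 m) ≤ d + 1 ∧ m < 2 ^ p ∧ p * δ < k ∧
      6 * d * Real.logb 2 n < δ + 1 := by
  have hlogn := one_le_logb_two hn
  have hlogm := one_le_logb_two hm
  set c := (k : ℝ) / (12 * Real.logb 2 n * Real.logb 2 m) with hc
  have hcpos : 0 < c := by positivity
  set p := Nat.log 2 m + 1
  set δ := (k - 1) / p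
  obtain ⟨d, hd⟩ := Nat.exists_eq_add_of_lt (Nat.ceil_pos.2 hcpos)
  rw [zero_add] at hd
  have hdc : (d : ℝ) < c := Nat.lt_ceil.1 (by omega)
  have hp : (p : ℝ) ≤ 2 * Real.logb 2 m := by
    have := Real.natLog_le_logb m 2
    push_cast [p] at this ⊢
    linarith
  have hkp : k ≤ p * (δ + 1) := by
    have : k - 1 < p * (δ + 1) := Nat.lt_mul_div_succ (k - 1) (Nat.succ_pos _)
    omega
  refine ⟨d, p, δ, ?_, Nat.lt_pow_succ_log_self one_lt_two m, ?_, ?_⟩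
  · exact (Nat.le_ceil c).trans_eq (by exact_mod_cast hd)
  · exact (Nat.mul_div_le (k - 1) p).trans_lt (Nat.sub_one_lt_of_lt hk)
  · calc 6 * d * Real.logb 2 n < 6 * c * Real.logb 2 n := by gcongr
      _ = k / (2 * Real.logb 2 m) := by rw [hc]; field_simp; norm_num
      _ ≤ k / p := by gcongr
      _ ≤ δ + 1 := by
        rw [div_le_iff₀' (by positivity)]
        exact_mod_cast hkp

end SteinerForest

open SteinerForest

theorem steiner_forest_packing_general {V : Type*} {m : ℕ} (hm : 2 ≤ m) (G : SimpleGraph V)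
    (T : Fin m → Set V) (k : ℕ) (hT : 2 ≤ (⋃ i, T i).ncard)
    (hconn : ∀ i, ∀ u ∈ T i, ∀ v ∈ T i, u ≠ v → HasElemPaths G (⋃ i, T i) u v k) :
    ∃ n : ℕ,
      (k : ℝ) / (12 * Real.logb 2 ((⋃ i, T i).ncard) * Real.logb 2 m) ≤ (n : ℝ) ∧
      ∃ F : Fin n → SimpleGraph V,
        (∀ j, IsSteinerForest G T (F j)) ∧
        ∀ i j, i ≠ j → EDisj (⋃ i, T i) (F i) (F j) := by
  obtain rfl | hk := k.eq_zero_or_pos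
  · exact ⟨0, by simp, Fin.elim0, fun j => j.elim0, fun j => j.elim0⟩
  have hsub := Set.subset_iUnion T
  have hunion : ⋃ i ∈ Finset.univ, T i = ⋃ i, T i := by simp
  have hfin : (⋃ i, T i).Finite := Set.finite_of_ncard_pos (by omega)
  obtain ⟨H, hHG, hHfin, hpaths⟩ := exists_le_finite_edgeSet_hasElemPaths (G := G) (k := k) hfin
  have : Finite (elements H (⋃ i, T i)) := (finite_elements hHfin).to_subtype
  obtain ⟨π, hπ, hcut⟩ := (elemConnected_elementGraph (I := Finset.univ) (fun i _ => hsub i)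
    fun i _ u hu v hv huv => hpaths u (hsub i hu) v (hsub i hv) (hconn i u hu v hv huv)
    ).exists_contract isUncrossable_separators
  obtain ⟨d, p, δ, hd, hp, hpδ, hδ⟩ := exists_packing_parameters hk hm hT
  obtain ⟨χ, hχ⟩ := exists_coloring_connects_groups (I := Finset.univ) (T := T) hT
    (by simpa using hp) hpδ hδ (by rwa [hunion]) (by rw [hunion])
    (by rw [hunion]; exact nbr_contract_elementGraph_subset π) fun i hi S hS => hcut S ⟨i, hi, hS⟩
  obtain ⟨F, hF, hdisj⟩ :=
    exists_isSteinerForest_eDisj hπ fun j hj i => hχ j hj i (Finset.mem_univ i)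
  refine ⟨d + 1, by exact_mod_cast hd, F, fun j => ?_, hdisj⟩
  exact ⟨(hF j).1.trans hHG, (hF j).2⟩

/-- **Packing Steiner forests in general graphs.** If the `m ≥ 2` disjoint terminal
groups are each `k`-element-connected and `T = ⋃ i, T i` has at least two elements, then
`G` contains at least `k / (12 · log₂ |T| · log₂ m)` pairwise element-disjoint
Steiner forests. -/
theorem steiner_forest_packing {V : Type*} [Fintype V]
    {m : ℕ} (hm : 2 ≤ m) (G : SimpleGraph V) (T : Fin m → Set V)
    (hdisj : ∀ i j, i ≠ j → Disjoint (T i) (T j)) (k : ℕ)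
    (hT : 2 ≤ (⋃ i, T i).ncard)
    (hconn : ∀ i, ∀ u ∈ T i, ∀ v ∈ T i, u ≠ v → k ≤ elemConn G (⋃ i, T i) u v) :
    ∃ n : ℕ,
      (k : ℝ) / (12 * Real.logb 2 ((⋃ i, T i).ncard) * Real.logb 2 m) ≤ (n : ℝ) ∧
      ∃ F : Fin n → SimpleGraph V,
        (∀ j, IsSteinerForest G T (F j)) ∧
        ∀ i j, i ≠ j → EDisj (⋃ i, T i) (F i) (F j) :=
  steiner_forest_packing_general hm G T k hT fun i u hu v hv huv =>
    hasElemPaths_of_le_elemConn (hconn i u hu v hv huv)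
end
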